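/- The model checking problem for VLDL against visibly pushdown systems is decidable: there is a computable function that, given (a natural effective encoding of) a VPS S over a pushdown alphabet Σ̃ partitioning 2^P, a state q_I of S, and a VLDL formula φ over Σ̃, decides whether traces(S, q_I) ⊆ L(φ). -/

import Mathlib

/-!
Model checking asks whether some trace of the system violates the formula `φ`. The proof turns the
existence of such a bad trace into a condition in which all quantifiers have primitive recursive
bounds.

*Annotated words.* Truth of the subformulas of `φ` along a word is made locally checkable. One
universal guard automaton `VMC.gv` simulates all guards of `φ` at once; its states are pairs `(x, q)` of
the code `x` of a guarded formula and a state `q` of its guard, and it moves to an accepting sink when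
the guard may stop. A box `[A]φ` is treated as the dual of a diamond: what is looked for is a run of
`A` to a position where `φ` fails. An annotated letter consists of a state of the system, a letter, the
set `F` of codes of formulas claimed true at this position, and the set `τ` of guard states from which
the guard automaton, started with empty stack, is claimed to reach its sink. An annotated word is
consistent (`VMC.Lhs`) if the system can read it, if `F` is computed from `τ` and the letter by induction
on codes (`VMC.lab`), and if `τ` is exactly the set of guard states from which the sink is reached. The
set `F` is then the true one (`VMC.sat_iff`), so a bad trace is the same as a consistent annotated word
that starts with `φ` false (`VMC.bad_of_lhs`, `VMC.lhs_of_bad`).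

*Summaries.* A finite segment of an annotated word is summarised by its two end letters, its effect
on guard states and the stack regime at its ends (`VMC.Sys.W`). Because calls and returns are determined
by the letters, the guard automaton and the system have equal stack heights throughout, and summaries
compose as in the analysis of pushdown systems: a segment starts with an unmatched letter or with a
matched block. A segment is live if every claim in the set `τ` of its first letter reaches the sink
inside the segment. By `VMC.rhs_lhs`, any infinite chain of live segments can be glued to a consistent
word; liveness excludes claims that are postponed forever, and it is what makes `τ` the least solution
of its defining equations. Conversely, by `VMC.lhs_rhs`, a consistent word can be cut into live
segments: cut where the stack is empty if this happens infinitely often, otherwise at positions below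
whose level the stack never falls again; each cut is made late enough for the finitely many claims to
have been fulfilled.

*Decidability.* Letters and relations have bounded codes, so an infinite chain of live segments exists
if and only if there is a finite set of end letters closed under live continuation, and a summary is an
element of every set closed under the rules. Both conditions quantify over bounded numbers only
(`VMC.Sys.Bad`, `VMC.Bad_iff`), so the criterion is a primitive recursive predicate of the encoded
instance (`VMC.Bad_pr`).
-/

/-- The three kinds of letters of a pushdown alphabet: calls, returns, local actions. -/
inductive SymKind : Type
  | call | ret | loc
deriving DecidableEq

/-- The data of a visibly pushdown automaton with states `Fin n` and stack alphabet
`Fin m` (plus an implicit bottom marker `⊥`, represented by the empty stack):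
call-, return- and local transitions, initial states and final states. -/
structure VPAData (A : Type) (n m : ℕ) where
  callΔ : Fin n → A → Fin n → Fin m → Bool
  retΔ  : Fin n → A → Option (Fin m) → Fin n → Bool
  locΔ  : Fin n → A → Fin n → Bool
  start : Fin n → Bool
  final : Fin n → Bool

/-- One step of a visibly pushdown system on configurations (state, stack). Calls push,
returns pop (reading `⊥`, i.e. `none`, on the empty stack and leaving it unchanged),
local actions leave the stack unchanged. -/
def vstep {A : Type} (kind : A → SymKind) {n m : ℕ}
    (callΔ : Fin n → A → Fin n → Fin m → Bool)
    (retΔ : Fin n → A → Option (Fin m) → Fin n → Bool)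
    (locΔ : Fin n → A → Fin n → Bool) :
    Fin n × List (Fin m) → A → Fin n × List (Fin m) → Prop :=
  fun c a c' =>
    match kind a with
    | .call => ∃ g, callΔ c.1 a c'.1 g = true ∧ c'.2 = g :: c.2
    | .ret => (∃ g s, c.2 = g :: s ∧ retΔ c.1 a (some g) c'.1 = true ∧ c'.2 = s) ∨
        (c.2 = [] ∧ retΔ c.1 a none c'.1 = true ∧ c'.2 = [])
    | .loc => locΔ c.1 a c'.1 = true ∧ c'.2 = c.2

def VPAData.step {A : Type} {n m : ℕ} (M : VPAData A n m) (kind : A → SymKind) :=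
  vstep kind M.callΔ M.retΔ M.locΔ

/-- Büchi acceptance for a visibly pushdown automaton: some initial infinite run
starting with empty stack visits final states infinitely often. -/
def VPAData.BuchiAccepts {A : Type} {n m : ℕ} (M : VPAData A n m) (kind : A → SymKind)
    (α : ℕ → A) : Prop :=
  ∃ ρ : ℕ → Fin n × List (Fin m),
    M.start (ρ 0).1 = true ∧ (ρ 0).2 = [] ∧
    (∀ i, M.step kind (ρ i) (α i) (ρ (i+1))) ∧
    (∀ i, ∃ j, i ≤ j ∧ M.final (ρ j).1 = true)

/-- VLDL formulas: atoms (from `V`), Boolean connectives, and temporal operators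
`⟨A⟩φ`/`[A]φ` guarded by testing visibly pushdown automata over the alphabet `A`;
the guard is given by its `VPAData` together with the map `t` assigning a test
formula to every state. -/
inductive VLDL (V A : Type) : Type
  | atom (v : V)
  | neg (φ : VLDL V A)
  | and (φ ψ : VLDL V A)
  | or (φ ψ : VLDL V A)
  | dia (n m : ℕ) (M : VPAData A n m) (t : Fin n → VLDL V A) (φ : VLDL V A)
  | box (n m : ℕ) (M : VPAData A n m) (t : Fin n → VLDL V A) (φ : VLDL V A)

/-- Satisfaction of VLDL formulas on infinite words `α : ℕ → A` at a position `k`,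
where `val v a` states that atom `v` holds at letter `a`. The guard relation
`(k, l) ∈ R_A(α)` is inlined: there is an initial accepting run of the guard on
`α_k ⋯ α_{l-1}` all of whose states' tests are satisfied at the respective positions. -/
def VLDL.sat {V A : Type} (val : V → A → Prop) (kind : A → SymKind) :
    VLDL V A → (ℕ → A) → ℕ → Prop
  | .atom v, α, k => val v (α k)
  | .neg φ, α, k => ¬ VLDL.sat val kind φ α k
  | .and φ ψ, α, k => VLDL.sat val kind φ α k ∧ VLDL.sat val kind ψ α k
  | .or φ ψ, α, k => VLDL.sat val kind φ α k ∨ VLDL.sat val kind ψ α k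
  | .dia n m M t φ, α, k => ∃ l, k ≤ l ∧
      (∃ ρ : ℕ → Fin n × List (Fin m),
        M.start (ρ k).1 = true ∧ (ρ k).2 = [] ∧
        (∀ i, k ≤ i → i < l → M.step kind (ρ i) (α i) (ρ (i+1))) ∧
        M.final (ρ l).1 = true ∧
        (∀ i, k ≤ i → i ≤ l → VLDL.sat val kind (t (ρ i).1) α i)) ∧
      VLDL.sat val kind φ α l
  | .box n m M t φ, α, k => ∀ l, k ≤ l →
      (∃ ρ : ℕ → Fin n × List (Fin m),
        M.start (ρ k).1 = true ∧ (ρ k).2 = [] ∧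
        (∀ i, k ≤ i → i < l → M.step kind (ρ i) (α i) (ρ (i+1))) ∧
        M.final (ρ l).1 = true ∧
        (∀ i, k ≤ i → i ≤ l → VLDL.sat val kind (t (ρ i).1) α i)) →
      VLDL.sat val kind φ α l

/-- The size of a VLDL formula: the number of subformulas (including the tests of all
guard automata) plus the total number of states of all guard automata. -/
def VLDL.size {V A : Type} : VLDL V A → ℕ
  | .atom _ => 1
  | .neg φ => φ.size + 1
  | .and φ ψ => φ.size + ψ.size + 1
  | .or φ ψ => φ.size + ψ.size + 1
  | .dia n _ _ t φ => φ.size + n + 1 + (List.ofFn (fun q => (t q).size)).sum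
  | .box n _ _ t φ => φ.size + n + 1 + (List.ofFn (fun q => (t q).size)).sum

/-- The letter of `2^P` (for `P = Fin p`) encoded by the bitmask `i`. -/
def letterOf (p : ℕ) (i : ℕ) : Fin p → Bool := fun j => Nat.testBit i j.val

def symCode : SymKind → ℕ
  | .call => 0
  | .ret => 1
  | .loc => 2

/-- A natural effective encoding of the partition of `2^P` into calls, returns and
local actions as a natural number. -/
def kindCode (p : ℕ) (kind : (Fin p → Bool) → SymKind) : ℕ :=
  Encodable.encode (List.ofFn (fun i : Fin (2 ^ p) => symCode (kind (letterOf p i.val))))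

/-- A natural effective encoding of the data of a visibly pushdown automaton over the
alphabet `2^P` (for `P = Fin p`), with states and stack symbols drawn from `ℕ`. -/
def VPAData.codeP {p n m : ℕ} (M : VPAData (Fin p → Bool) n m) : ℕ :=
  Encodable.encode
    (n, m,
      List.ofFn (fun q : Fin n => List.ofFn (fun i : Fin (2 ^ p) =>
        List.ofFn (fun q' : Fin n => List.ofFn (fun g : Fin m =>
          M.callΔ q (letterOf p i.val) q' g)))),
      List.ofFn (fun q : Fin n => List.ofFn (fun i : Fin (2 ^ p) =>
        List.ofFn (fun g : Fin m => List.ofFn (fun q' : Fin n =>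
          M.retΔ q (letterOf p i.val) (some g) q')))),
      List.ofFn (fun q : Fin n => List.ofFn (fun i : Fin (2 ^ p) =>
        List.ofFn (fun q' : Fin n => M.retΔ q (letterOf p i.val) none q'))),
      List.ofFn (fun q : Fin n => List.ofFn (fun i : Fin (2 ^ p) =>
        List.ofFn (fun q' : Fin n => M.locΔ q (letterOf p i.val) q'))),
      List.ofFn (fun q : Fin n => M.start q),
      List.ofFn (fun q : Fin n => M.final q))

/-- A natural effective encoding of VLDL formulas over `2^P` (for `P = Fin p`), with
atomic propositions, states and stack symbols drawn from `ℕ`. -/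
def VLDL.code {p : ℕ} : VLDL (Fin p) (Fin p → Bool) → ℕ
  | .atom v => Nat.pair 0 v.val
  | .neg φ => Nat.pair 1 φ.code
  | .and φ ψ => Nat.pair 2 (Nat.pair φ.code ψ.code)
  | .or φ ψ => Nat.pair 3 (Nat.pair φ.code ψ.code)
  | .dia _ _ M t φ => Nat.pair 4 (Nat.pair M.codeP
      (Nat.pair (Encodable.encode (List.ofFn (fun q => (t q).code))) φ.code))
  | .box _ _ M t φ => Nat.pair 5 (Nat.pair M.codeP
      (Nat.pair (Encodable.encode (List.ofFn (fun q => (t q).code))) φ.code))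

/-- A visibly pushdown system over `2^P` (for `P = Fin p`) with states `Fin N` and
stack alphabet `Fin M`. -/
structure VPSData (p N M : ℕ) where
  callΔ : Fin N → (Fin p → Bool) → Fin N → Fin M → Bool
  retΔ  : Fin N → (Fin p → Bool) → Option (Fin M) → Fin N → Bool
  locΔ  : Fin N → (Fin p → Bool) → Fin N → Bool

/-- A natural effective encoding of a visibly pushdown system as a natural number. -/
def VPSData.code {p N M : ℕ} (S : VPSData p N M) : ℕ :=
  Encodable.encode
    (N, M,
      List.ofFn (fun q : Fin N => List.ofFn (fun i : Fin (2 ^ p) =>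
        List.ofFn (fun q' : Fin N => List.ofFn (fun g : Fin M =>
          S.callΔ q (letterOf p i.val) q' g)))),
      List.ofFn (fun q : Fin N => List.ofFn (fun i : Fin (2 ^ p) =>
        List.ofFn (fun g : Fin M => List.ofFn (fun q' : Fin N =>
          S.retΔ q (letterOf p i.val) (some g) q')))),
      List.ofFn (fun q : Fin N => List.ofFn (fun i : Fin (2 ^ p) =>
        List.ofFn (fun q' : Fin N => S.retΔ q (letterOf p i.val) none q'))),
      List.ofFn (fun q : Fin N => List.ofFn (fun i : Fin (2 ^ p) =>
        List.ofFn (fun q' : Fin N => S.locΔ q (letterOf p i.val) q'))))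

/-- `α` is a trace of the system `S` from the state `qI`: it is the label sequence of
some infinite run of `S` starting in the configuration `(qI, ⊥)`. -/
def VPSData.HasTrace {p N M : ℕ} (S : VPSData p N M) (kind : (Fin p → Bool) → SymKind)
    (qI : Fin N) (α : ℕ → (Fin p → Bool)) : Prop :=
  ∃ ρ : ℕ → Fin N × List (Fin M),
    ρ 0 = (qI, []) ∧ ∀ i, vstep kind S.callΔ S.retΔ S.locΔ (ρ i) (α i) (ρ (i + 1))

/-! ### Visibly pushdown systems with numbered states -/

namespace VMC

/-- A visibly pushdown system whose states, letters and stack symbols are natural numbers, given by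
its transition predicates: `cal x y y' g` pushes `g`, `ret x g y y'` pops `g`, `rtb x y y'` is a
return read on the empty stack, `lcl x y y'` a local action; `x` is the letter, `y` and `y'` the
states before and after. -/
structure VP where
  cal : ℕ → ℕ → ℕ → ℕ → Prop
  ret : ℕ → ℕ → ℕ → ℕ → Prop
  rtb : ℕ → ℕ → ℕ → Prop
  lcl : ℕ → ℕ → ℕ → Prop

/-- One move on configurations (state, stack). The empty list is the stack `⊥`. -/
def VP.step (A : VP) (kd : ℕ → SymKind) (x : ℕ) (c c' : ℕ × List ℕ) : Prop :=
  match kd x with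
  | .call => ∃ g, A.cal x c.1 c'.1 g ∧ c'.2 = g :: c.2
  | .ret => (∃ g s, c.2 = g :: s ∧ A.ret x g c.1 c'.1 ∧ c'.2 = s) ∨
      (c.2 = [] ∧ A.rtb x c.1 c'.1 ∧ c'.2 = [])
  | .loc => A.lcl x c.1 c'.1 ∧ c'.2 = c.2

/-- A finite run on a word, from one configuration to another. -/
def VP.Run (A : VP) (kd : ℕ → SymKind) : List ℕ → ℕ × List ℕ → ℕ × List ℕ → Prop
  | [], c, cₑ => c = cₑ
  | x :: w, c, cₑ => ∃ c1, A.step kd x c c1 ∧ A.Run kd w c1 cₑ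

/-- `w` leads from `y` with empty stack to `yₑ` with some stack. -/
def VP.E (A : VP) (kd : ℕ → SymKind) (w : List ℕ) (y yₑ : ℕ) : Prop :=
  ∃ σ, A.Run kd w (y, []) (yₑ, σ)

/-- The effect of a single letter on states, started with empty stack. -/
def VP.r1 (A : VP) (kd : ℕ → SymKind) (x y yₑ : ℕ) : Prop :=
  (kd x = .call ∧ ∃ g, A.cal x y yₑ g) ∨ (kd x = .ret ∧ A.rtb x y yₑ) ∨
    (kd x = .loc ∧ A.lcl x y yₑ)

/-- Stack height after one letter. Truncated subtraction is intended: a return at height `0` leaves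
the height at `0`. -/
def hstep (kd : ℕ → SymKind) (h x : ℕ) : ℕ :=
  match kd x with
  | .call => h + 1
  | .ret => h - 1
  | .loc => h

/-- Stack height after reading a word from height `h`. -/
def ht (kd : ℕ → SymKind) : ℕ → List ℕ → ℕ
  | h, [] => h
  | h, x :: w => ht kd (hstep kd h x) w

/-- Reading the word from height `h` never meets a return at height `0`. -/
def nd (kd : ℕ → SymKind) : ℕ → List ℕ → Prop
  | _, [] => True
  | h, x :: w => (kd x = .ret → 0 < h) ∧ nd kd (hstep kd h x) w

variable {A : VP} {kd : ℕ → SymKind}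

theorem step_len {x : ℕ} {c c' : ℕ × List ℕ} (h : A.step kd x c c') :
    c'.2.length = hstep kd c.2.length x := by
  unfold VP.step at h
  unfold hstep
  split at h
  · obtain ⟨g, _, h⟩ := h; simp_all
  · rcases h with ⟨g, s, h1, h2, h3⟩ | ⟨h1, h2, h3⟩ <;> simp_all
  · simp_all

theorem run_len : ∀ {w : List ℕ} {c c' : ℕ × List ℕ}, A.Run kd w c c' →
    c'.2.length = ht kd c.2.length w
  | [], c, c', h => by cases h; rfl
  | x :: w, c, c', ⟨c1, h1, h2⟩ => by rw [run_len h2, ht, step_len h1]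

theorem run_append {w v : List ℕ} : ∀ {c c' : ℕ × List ℕ},
    A.Run kd (w ++ v) c c' ↔ ∃ c1, A.Run kd w c c1 ∧ A.Run kd v c1 c' := by
  induction w with
  | nil => intro c c'; simp [VP.Run]
  | cons x w ih =>
    intro c c'
    simp only [List.cons_append, VP.Run, ih]
    constructor
    · rintro ⟨c1, h1, c2, h2, h3⟩; exact ⟨c2, ⟨c1, h1, h2⟩, h3⟩
    · rintro ⟨c2, ⟨c1, h1, h2⟩, h3⟩; exact ⟨c1, h1, c2, h2, h3⟩

theorem ht_append (w v : List ℕ) (h : ℕ) : ht kd h (w ++ v) = ht kd (ht kd h w) v := by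
  induction w generalizing h with
  | nil => rfl
  | cons x w ih => simp [ht, ih]

theorem nd_append (w v : List ℕ) (h : ℕ) :
    nd kd h (w ++ v) ↔ nd kd h w ∧ nd kd (ht kd h w) v := by
  induction w generalizing h with
  | nil => simp [nd, ht]
  | cons x w ih => simp [ht, nd, ih, and_assoc]

theorem hstep_mono {h h' : ℕ} (x : ℕ) (hh : h ≤ h') : hstep kd h x ≤ hstep kd h' x := by
  unfold hstep; split <;> omega

theorem ht_mono (w : List ℕ) : ∀ {h h' : ℕ}, h ≤ h' → ht kd h w ≤ ht kd h' w := by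
  induction w with
  | nil => intro h h' hh; exact hh
  | cons x w ih => intro h h' hh; exact ih (hstep_mono x hh)

theorem nd_mono (w : List ℕ) : ∀ {h h' : ℕ}, h ≤ h' → nd kd h w → nd kd h' w := by
  induction w with
  | nil => intro h h' hh _; trivial
  | cons x w ih =>
    intro h h' hh hn
    exact ⟨fun e => lt_of_lt_of_le (hn.1 e) hh, ih (hstep_mono x hh) hn.2⟩

/-- A step that does not pop below `τ` leaves the lower part `ρ` of the stack untouched. -/
theorem step_frame {x y : ℕ} {τ ρ : List ℕ} {c' : ℕ × List ℕ}
    (hx : kd x = .ret → 0 < τ.length) :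
    A.step kd x (y, τ ++ ρ) c' ↔ ∃ τ', c'.2 = τ' ++ ρ ∧ A.step kd x (y, τ) (c'.1, τ') := by
  unfold VP.step
  cases hk : kd x with
  | call =>
    constructor
    · rintro ⟨g, h1, h2⟩; exact ⟨g :: τ, by simpa using h2, g, h1, rfl⟩
    · rintro ⟨τ', h1, g, h2, h3⟩; exact ⟨g, h2, by simp_all⟩
  | ret =>
    have := hx hk
    cases τ with
    | nil => simp at this
    | cons g τ =>
      constructor
      · rintro (⟨g', s, h1, h2, h3⟩ | ⟨h1, _⟩)
        · simp only [List.cons_append, List.cons.injEq] at h1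
          obtain ⟨rfl, rfl⟩ := h1
          exact ⟨τ, h3, Or.inl ⟨g, τ, rfl, h2, rfl⟩⟩
        · simp at h1
      · rintro ⟨τ', h1, (⟨g', s, h2, h3, h4⟩ | ⟨h2, _⟩)⟩
        · simp only [List.cons.injEq] at h2
          obtain ⟨rfl, rfl⟩ := h2
          simp only at h4
          subst h4
          exact Or.inl ⟨g, τ' ++ ρ, by simp, h3, h1⟩
        · simp at h2
  | loc =>
    constructor
    · rintro ⟨h1, h2⟩; exact ⟨τ, h2, h1, rfl⟩
    · rintro ⟨τ', h1, h2, h3⟩; exact ⟨h2, by simp_all⟩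

/-- A run that never goes below `τ` leaves the lower part `ρ` of the stack untouched. -/
theorem run_frame {w : List ℕ} {ρ : List ℕ} : ∀ {y : ℕ} {τ : List ℕ} {c' : ℕ × List ℕ},
    nd kd τ.length w →
    (A.Run kd w (y, τ ++ ρ) c' ↔ ∃ τ', c'.2 = τ' ++ ρ ∧ A.Run kd w (y, τ) (c'.1, τ')) := by
  induction w with
  | nil =>
    intro y τ c' _
    simp only [VP.Run]
    constructor
    · rintro rfl; exact ⟨τ, rfl, rfl⟩
    · rintro ⟨τ', h1, h2⟩
      cases h2
      exact Prod.ext rfl h1.symm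
  | cons x w ih =>
    intro y τ c' hn
    simp only [VP.Run]
    constructor
    · rintro ⟨c1, h1, h2⟩
      obtain ⟨τ1, e1, h1⟩ := (step_frame hn.1).1 h1
      have e : c1 = (c1.1, τ1 ++ ρ) := Prod.ext rfl e1
      rw [e] at h2
      have hl := step_len h1
      simp only at hl
      obtain ⟨τ', e', h2⟩ := (ih (by rw [hl]; exact hn.2)).1 h2
      exact ⟨τ', e', _, h1, h2⟩
    · rintro ⟨τ', e', c1, h1, h2⟩
      have hl := step_len h1
      simp only at hl
      refine ⟨(c1.1, c1.2 ++ ρ), (step_frame hn.1).2 ⟨c1.2, rfl, h1⟩, ?_⟩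
      exact (ih (by rw [hl]; exact hn.2)).2 ⟨τ', e', h2⟩

theorem run_frame_nil {w : List ℕ} {ρ : List ℕ} {y : ℕ} {c' : ℕ × List ℕ}
    (hn : nd kd 0 w) :
    A.Run kd w (y, ρ) c' ↔ ∃ τ', c'.2 = τ' ++ ρ ∧ A.Run kd w (y, []) (c'.1, τ') := by
  simpa using run_frame (A := A) (kd := kd) (w := w) (ρ := ρ) (y := y) (τ := []) (c' := c') hn

theorem run_nil_of_ht {w : List ℕ} {c c' : ℕ × List ℕ}
    (h : A.Run kd w c c') (hh : ht kd c.2.length w = 0) : c'.2 = [] := by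
  have := run_len h
  rw [hh] at this
  exact List.eq_nil_of_length_eq_zero this

theorem E_nil {y y' : ℕ} : A.E kd [] y y' ↔ y = y' := by
  constructor
  · rintro ⟨σ, h⟩; cases h; rfl
  · rintro rfl; exact ⟨[], rfl⟩

/-- `VP.E` composes when the stack left by `v` cannot influence `w`: either it is empty, or `w` never
goes below the height at which it starts. -/
theorem E_append {v w : List ℕ} (h : ht kd 0 v = 0 ∨ nd kd 0 w) {y y' : ℕ} :
    A.E kd (v ++ w) y y' ↔ ∃ y1, A.E kd v y y1 ∧ A.E kd w y1 y' := by
  constructor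
  · rintro ⟨σ, hr⟩
    obtain ⟨⟨y1, σ1⟩, h1, h2⟩ := run_append.1 hr
    refine ⟨y1, ⟨σ1, h1⟩, ?_⟩
    rcases h with h | h
    · have : σ1 = [] := run_nil_of_ht h1 h
      subst this; exact ⟨σ, h2⟩
    · obtain ⟨τ', _, h3⟩ := (run_frame_nil h).1 h2
      exact ⟨τ', h3⟩
  · rintro ⟨y1, ⟨σ1, h1⟩, ⟨σ2, h2⟩⟩
    rcases h with h | h
    · have : σ1 = [] := run_nil_of_ht h1 h
      subst this; exact ⟨σ2, run_append.2 ⟨_, h1, h2⟩⟩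
    · exact ⟨σ2 ++ σ1, run_append.2 ⟨_, h1, (run_frame_nil h).2 ⟨σ2, rfl, h2⟩⟩⟩

theorem E_single {x y y' : ℕ} : A.E kd [x] y y' ↔ A.r1 kd x y y' := by
  have : A.E kd [x] y y' ↔ ∃ σ, A.step kd x (y, []) (y', σ) := by
    unfold VP.E; simp [VP.Run]
  rw [this]
  unfold VP.step VP.r1
  cases kd x <;> simp

theorem E_cons {x : ℕ} {w : List ℕ} (h : kd x = .call → nd kd 0 w) {y y' : ℕ} :
    A.E kd (x :: w) y y' ↔ ∃ y1, A.r1 kd x y y1 ∧ A.E kd w y1 y' := by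
  have := E_append (A := A) (kd := kd) (v := [x]) (w := w) (y := y) (y' := y') (by
    by_cases hx : kd x = .call
    · exact Or.inr (h hx)
    · left; simp only [ht, hstep]; split <;> simp_all)
  simp only [List.singleton_append, E_single] at this
  exact this

/-- A call, a well-matched word and the matching return. -/
theorem E_matched {x x3 : ℕ} {u : List ℕ} (hx : kd x = .call) (hx3 : kd x3 = .ret)
    (hu : nd kd 0 u) (hu' : ht kd 0 u = 0) {y y' : ℕ} :
    A.E kd (x :: u ++ [x3]) y y' ↔
      ∃ y2 y3 g, A.cal x y y2 g ∧ A.E kd u y2 y3 ∧ A.ret x3 g y3 y' := by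
  constructor
  · rintro ⟨σ, ⟨y2, σ2⟩, h1, h2⟩
    obtain ⟨⟨y3, σ3⟩, h2, ⟨_, h3, h4⟩⟩ := run_append.1 h2
    cases h4
    simp only [VP.step, hx] at h1
    obtain ⟨g, h1, rfl⟩ := h1
    obtain ⟨τ', e, h2⟩ := (run_frame_nil hu).1 h2
    have : τ' = [] := run_nil_of_ht h2 hu'
    subst this
    simp only [List.nil_append] at e
    subst e
    simp only [VP.step, hx3] at h3
    rcases h3 with ⟨g', s, e, h3, _⟩ | ⟨e, _⟩
    · cases e
      exact ⟨y2, y3, g, h1, ⟨_, h2⟩, h3⟩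
    · simp at e
  · rintro ⟨y2, y3, g, h1, ⟨σ, h2⟩, h3⟩
    have : σ = [] := run_nil_of_ht h2 hu'
    subst this
    refine ⟨[], (y2, [g]), ?_, run_append.2 ⟨(y3, [g]), ?_, ⟨_, ?_, rfl⟩⟩⟩
    · simp only [VP.step, hx]; exact ⟨g, h1, rfl⟩
    · exact (run_frame_nil hu).2 ⟨[], rfl, h2⟩
    · simp only [VP.step, hx3]; exact Or.inl ⟨g, [], rfl, h3, rfl⟩

/-- Starting `k` levels higher shifts all heights by `k` as long as no return is read at height `0`. -/
theorem ht_shift (w : List ℕ) (k : ℕ) : ∀ {h : ℕ}, nd kd h w →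
    ht kd (h + k) w = ht kd h w + k := by
  induction w with
  | nil => intro h _; rfl
  | cons x w ih =>
    intro h hn
    have : hstep kd (h + k) x = hstep kd h x + k := by
      have := hn.1
      unfold hstep
      split <;> simp_all <;> omega
    simp only [ht, this]
    exact ih hn.2

/-- A call, a well-matched word and the matching return restore the height. -/
theorem ht_matched {x x3 : ℕ} {u : List ℕ} (hx : kd x = .call) (hx3 : kd x3 = .ret)
    (hu : nd kd 0 u) (hu' : ht kd 0 u = 0) (h : ℕ) :
    nd kd h (x :: u ++ [x3]) ∧ ht kd h (x :: u ++ [x3]) = h := by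
  have e1 : ht kd (h + 1) u = h + 1 := by
    have := ht_shift u (h + 1) hu
    simpa [hu'] using this
  have e2 : nd kd (h + 1) u := nd_mono u (Nat.zero_le _) hu
  simp [nd, ht, nd_append, ht_append, hstep, hx, hx3, e1, e2]

end VMC

/-! ### Summaries of segments -/

namespace VMC

/-- The data on which the decision criterion depends. `Gd` is the guard automaton, with states and
stack symbols below `B`; `Sy` is the system; the letters it reads, its stack symbols and the codes
of relations on guard states are below `K`. Letters are annotated: `kd` gives the kind of a letter,
`V` tells which letters are admissible, and `tau X y` is the claim, carried by the letter `X`, that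
the guard automaton started in state `y` with empty stack at this position reaches its accepting
sink `0`. -/
structure Sys where
  B : ℕ
  K : ℕ
  kd : ℕ → SymKind
  Gd : VP
  Sy : VP
  tau : ℕ → ℕ → Prop
  V : ℕ → Prop

/-- The standing assumptions. `scal`, `sret`, `srtb` and `slcl` say that the state of the system *is*
the annotated letter read next. The `sink` fields make the guard state `0` absorbing. The state `1`,
distinct from `0` and always claimed by `tau1`, serves to force live segments to be nonempty. -/
structure Sys.Ok (S : Sys) : Prop where
  hK : 2 ^ (S.B * S.B) ≤ S.K
  hV : ∀ X, S.V X → X < S.K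
  tau0 : ∀ X, S.V X → S.tau X 0
  tau1 : ∀ X, S.V X → S.tau X 1
  two : 1 < S.B
  gcal : ∀ x y y' g, S.Gd.cal x y y' g → y < S.B → y' < S.B ∧ g < S.B
  gret : ∀ x y y' g, S.Gd.ret x g y y' → y < S.B → y' < S.B
  grtb : ∀ x y y', S.Gd.rtb x y y' → y < S.B → y' < S.B
  glcl : ∀ x y y', S.Gd.lcl x y y' → y < S.B → y' < S.B
  scal : ∀ x s s' g, S.Sy.cal x s s' g → s = x ∧ g < S.K
  sret : ∀ x s s' g, S.Sy.ret x g s s' → s = x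
  srtb : ∀ x s s', S.Sy.rtb x s s' → s = x
  slcl : ∀ x s s', S.Sy.lcl x s s' → s = x
  sink_cal : ∀ x, S.Gd.cal x 0 0 0
  sink_ret : ∀ x g, S.Gd.ret x g 0 0
  sink_rtb : ∀ x, S.Gd.rtb x 0 0
  sink_lcl : ∀ x, S.Gd.lcl x 0 0

/-- The relation on guard states coded by the number `R`: the bit of index `y * B + y'`. -/
def Sys.Rel (S : Sys) (R y y' : ℕ) : Prop := R.testBit (y * S.B + y') = true

/-- The effect on guard states of a matched block: the call `X`, an inner well-matched word whose
effect is the relation `Ri`, and the return `X3` that pops the symbol pushed by `X`. -/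
def Sys.blk (S : Sys) (X Ri X3 y y1 : ℕ) : Prop :=
  ∃ y2 < S.B, ∃ y3 < S.B, ∃ g < S.B,
    S.Gd.cal X y y2 g ∧ S.Rel Ri y2 y3 ∧ S.Gd.ret X3 g y3 y1

/-- The one-letter effect `VP.r1` of the guard automaton, with the pushed symbol bounded by `B`. -/
def Sys.r1b (S : Sys) (X y yₑ : ℕ) : Prop :=
  (S.kd X = .call ∧ ∃ g < S.B, S.Gd.cal X y yₑ g) ∨ (S.kd X = .ret ∧ S.Gd.rtb X y yₑ) ∨
    (S.kd X = .loc ∧ S.Gd.lcl X y yₑ)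

/-- The one-letter effect `VP.r1` of the system, with the pushed symbol bounded by `K`. -/
def Sys.s1b (S : Sys) (X Xₑ : ℕ) : Prop :=
  (S.kd X = .call ∧ ∃ g < S.K, S.Sy.cal X X Xₑ g) ∨ (S.kd X = .ret ∧ S.Sy.rtb X X Xₑ) ∨
    (S.kd X = .loc ∧ S.Sy.lcl X X Xₑ)

/-- How the mode of a position changes when `X` is read as an unmatched letter: a return is allowed
in mode `1` only, and a call, being never matched within the summarised segment, leads from mode `1`
or `2` to mode `2`. -/
def Sys.mode (S : Sys) (m X m1 : ℕ) : Prop :=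
  (S.kd X = .call ∧ m ≠ 0 ∧ m1 = 2) ∨ (S.kd X = .ret ∧ m = 1 ∧ m1 = 1) ∨
    (S.kd X = .loc ∧ m1 = m)

/-- `R` codes the identity on guard states. -/
def Sys.IdR (S : Sys) (R : ℕ) : Prop := ∀ y < S.B, ∀ yₑ < S.B, (S.Rel R y yₑ ↔ y = yₑ)

/-- Consistency over one unmatched letter `X` followed by `X1`: the claims of `X` are determined by
those of `X1`, and `R` is the composite of the effect of `X` with `Rₑ`. -/
def Sys.Sim (S : Sys) (X X1 Rₑ R : ℕ) : Prop :=
  (∀ y < S.B, (S.tau X y ↔ ∃ y1 < S.B, S.r1b X y y1 ∧ S.tau X1 y1)) ∧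
  (∀ y < S.B, ∀ yₑ < S.B, (S.Rel R y yₑ ↔ ∃ y1 < S.B, S.r1b X y y1 ∧ S.Rel Rₑ y1 yₑ))

/-- Consistency over a matched block, from the call `X` to the return `X3`, followed by `X1`: the
system can pop at `X3` what it pushed at `X`, the claims at `X3` and at `X` are determined by those of
`X1`, and `R` is the composite of the effect of the block with `Rₑ`. -/
def Sys.Blk (S : Sys) (X X2 Ri X3 X1 Rₑ R : ℕ) : Prop :=
  S.kd X = .call ∧ S.kd X3 = .ret ∧ (∃ g < S.K, S.Sy.cal X X X2 g ∧ S.Sy.ret X3 g X3 X1) ∧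
  (∀ y < S.B, (S.tau X3 y ↔ ∃ y1 < S.B, S.r1b X3 y y1 ∧ S.tau X1 y1)) ∧
  (∀ y < S.B, (S.tau X y ↔ ∃ y1 < S.B, S.blk X Ri X3 y y1 ∧ S.tau X1 y1)) ∧
  (∀ y < S.B, ∀ yₑ < S.B, (S.Rel R y yₑ ↔ ∃ y1 < S.B, S.blk X Ri X3 y y1 ∧ S.Rel Rₑ y1 yₑ))

/-- Summaries: `W m X R mₑ Xₑ` says that some consistent segment leads from `X` to `Xₑ` and has effect
`R` on guard states. The modes `m` and `mₑ` describe the two ends. Mode `0` lies inside a matched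
block, whose level is not left; in mode `1` the stack is empty, so that returns act on `⊥`; in mode
`2` some calls are pending forever and there is no return below the current level. -/
inductive Sys.W (S : Sys) : ℕ → ℕ → ℕ → ℕ → ℕ → Prop
  | nil {m X R} : m < 3 → S.V X → R < S.K → S.IdR R → S.W m X R m X
  | sim {m X m1 X1 Rₑ mₑ Xₑ R} : m < 3 → S.V X → R < S.K → S.mode m X m1 → S.s1b X X1 →
      S.W m1 X1 Rₑ mₑ Xₑ → S.Sim X X1 Rₑ R → S.W m X R mₑ Xₑ
  | blk {m X X2 Ri X3 X1 Rₑ mₑ Xₑ R} : m < 3 → S.V X → R < S.K →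
      S.W 0 X2 Ri 0 X3 → S.W m X1 Rₑ mₑ Xₑ → S.Blk X X2 Ri X3 X1 Rₑ R → S.W m X R mₑ Xₑ

/-- Along a segment with effect `R`, every claim made by its first letter is brought to the sink. -/
def Sys.live (S : Sys) (X R : ℕ) : Prop := ∀ y < S.B, S.tau X y → S.Rel R y 0

variable {S : Sys}

theorem r1b_iff (hS : S.Ok) {X y y' : ℕ} (hy : y < S.B) :
    S.r1b X y y' ↔ S.Gd.r1 S.kd X y y' := by
  unfold Sys.r1b VP.r1
  refine or_congr (and_congr_right fun _ => ?_) Iff.rfl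
  exact ⟨fun ⟨g, _, h⟩ => ⟨g, h⟩, fun ⟨g, h⟩ => ⟨g, (hS.gcal _ _ _ _ h hy).2, h⟩⟩

theorem r1_lt (hS : S.Ok) {X y y' : ℕ} (h : S.Gd.r1 S.kd X y y') (hy : y < S.B) : y' < S.B := by
  rcases h with ⟨_, g, h⟩ | ⟨_, h⟩ | ⟨_, h⟩
  · exact (hS.gcal _ _ _ _ h hy).1
  · exact hS.grtb _ _ _ h hy
  · exact hS.glcl _ _ _ h hy

theorem s1b_iff (hS : S.Ok) {X X' : ℕ} : S.s1b X X' ↔ S.Sy.r1 S.kd X X X' := by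
  unfold Sys.s1b VP.r1
  refine or_congr (and_congr_right fun _ => ?_) Iff.rfl
  exact ⟨fun ⟨g, _, h⟩ => ⟨g, h⟩, fun ⟨g, h⟩ => ⟨g, (hS.scal _ _ _ _ h).2, h⟩⟩

theorem step_lt (hS : S.Ok) {x : ℕ} {c c' : ℕ × List ℕ} (h : S.Gd.step S.kd x c c')
    (hy : c.1 < S.B) : c'.1 < S.B := by
  unfold VP.step at h
  split at h
  · obtain ⟨g, h, _⟩ := h; exact (hS.gcal _ _ _ _ h hy).1
  · rcases h with ⟨g, s, _, h, _⟩ | ⟨_, h, _⟩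
    · exact hS.gret _ _ _ _ h hy
    · exact hS.grtb _ _ _ h hy
  · exact hS.glcl _ _ _ h.1 hy

theorem run_lt (hS : S.Ok) {w : List ℕ} : ∀ {c c' : ℕ × List ℕ}, S.Gd.Run S.kd w c c' →
    c.1 < S.B → c'.1 < S.B := by
  induction w with
  | nil => intro c c' h hy; cases h; exact hy
  | cons x w ih => rintro c c' ⟨c1, h1, h2⟩ hy; exact ih h2 (step_lt hS h1 hy)

theorem E_lt (hS : S.Ok) {w : List ℕ} {y y' : ℕ} (h : S.Gd.E S.kd w y y') (hy : y < S.B) :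
    y' < S.B := by
  obtain ⟨σ, h⟩ := h; exact run_lt hS h hy

theorem sstep_fst (hS : S.Ok) {x : ℕ} {c c' : ℕ × List ℕ} (h : S.Sy.step S.kd x c c') :
    c.1 = x := by
  unfold VP.step at h
  split at h
  · obtain ⟨g, h, _⟩ := h; exact (hS.scal _ _ _ _ h).1
  · rcases h with ⟨g, s, _, h, _⟩ | ⟨_, h, _⟩
    · exact hS.sret _ _ _ _ h
    · exact hS.srtb _ _ _ h
  · exact hS.slcl _ _ _ h.1

/-- Every set of natural numbers below `n` is the bit set of a number below `2 ^ n`. -/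
theorem exists_mask (n : ℕ) (P : ℕ → Prop) : ∃ m < 2 ^ n, ∀ i < n, (m.testBit i = true ↔ P i) := by
  classical
  refine ⟨Nat.ofBits (fun i : Fin n => decide (P i)), Nat.ofBits_lt_two_pow _, fun i hi => ?_⟩
  rw [Nat.testBit_ofBits_lt _ _ hi]; simp

/-- Every relation on guard states has a code below `K`. -/
theorem exists_rel (hS : S.Ok) (P : ℕ → ℕ → Prop) :
    ∃ R < S.K, ∀ y < S.B, ∀ y' < S.B, (S.Rel R y y' ↔ P y y') := by
  obtain ⟨R, h1, h2⟩ := exists_mask (S.B * S.B) (fun i => P (i / S.B) (i % S.B))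
  refine ⟨R, lt_of_lt_of_le h1 hS.hK, fun y hy y' hy' => ?_⟩
  have h3 : y * S.B + y' < S.B * S.B := by nlinarith
  have e1 : (y * S.B + y') / S.B = y := by
    rw [mul_comm, Nat.mul_add_div (by omega), Nat.div_eq_of_lt hy', add_zero]
  have e2 : (y * S.B + y') % S.B = y' := by
    rw [mul_comm, Nat.mul_add_mod, Nat.mod_eq_of_lt hy']
  unfold Sys.Rel
  rw [h2 _ h3, e1, e2]

/-- The claim at `y` as computed through `w`: the guard automaton leads from `y` along `w` to a state
claimed by `Xₑ`. The stack left by `w` is ignored. -/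
def TT (S : Sys) (w : List ℕ) (Xₑ y : ℕ) : Prop := ∃ yₑ, S.Gd.E S.kd w y yₑ ∧ S.tau Xₑ yₑ

/-- At every letter of `w`, the claims agree with those computed through the rest of `w` from `X'`. -/
def GoodTau (S : Sys) (X' : ℕ) : List ℕ → Prop
  | [] => True
  | x :: w => (∀ y < S.B, (S.tau x y ↔ TT S (x :: w) X' y)) ∧ GoodTau S X' w

theorem TT_append {v w : List ℕ} (h : ht S.kd 0 v = 0 ∨ nd S.kd 0 w) {X' y : ℕ} :
    TT S (v ++ w) X' y ↔ ∃ y1, S.Gd.E S.kd v y y1 ∧ TT S w X' y1 := by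
  unfold TT
  constructor
  · rintro ⟨y', h1, h2⟩
    obtain ⟨y1, h3, h4⟩ := (E_append h).1 h1
    exact ⟨y1, h3, y', h4, h2⟩
  · rintro ⟨y1, h3, y', h4, h2⟩
    exact ⟨y', (E_append h).2 ⟨y1, h3, h4⟩, h2⟩

/-- Claims that are good up to `X1` are good up to `X'`, provided those of `X1` are the claims computed
from `X'` and the stack does not interfere. -/
theorem GoodTau_append (hS : S.Ok) {X1 X' : ℕ} {w : List ℕ}
    (hw : GoodTau S X' w) (h1 : ∀ y < S.B, (S.tau X1 y ↔ TT S w X' y)) :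
    ∀ {v : List ℕ}, (∀ u u', v = u ++ u' → ht S.kd 0 u' = 0) → GoodTau S X1 v →
    GoodTau S X' (v ++ w)
  | [], _, _ => hw
  | x :: v, hh, hg => by
    refine ⟨fun y hy => ?_, GoodTau_append hS hw h1 (fun u u' e => hh (x :: u) u' (by simp [e])) hg.2⟩
    change S.tau x y ↔ TT S ((x :: v) ++ w) X' y
    rw [hg.1 y hy, TT_append (Or.inl (hh [] _ rfl))]
    constructor
    · rintro ⟨y', h2, h3⟩; exact ⟨y', h2, (h1 _ (E_lt hS h2 hy)).1 h3⟩
    · rintro ⟨y', h2, h3⟩; exact ⟨y', h2, (h1 _ (E_lt hS h2 hy)).2 h3⟩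

theorem ht_suffix {kd : ℕ → SymKind} {w u u' : List ℕ} (h : ht kd 0 w = 0) (e : w = u ++ u') :
    ht kd 0 u' = 0 := by
  subst e
  rw [ht_append] at h
  have := ht_mono (kd := kd) u' (Nat.zero_le (ht kd 0 u))
  omega

/-- The word `w` realises the summary `(m, X, R, m', X')`: it carries the system from `X` to `X'`, its
letters are admissible and consistent, its effect on guard states is `R`, and its stack heights are as
the modes prescribe. -/
structure Seg (S : Sys) (m X R m' X' : ℕ) (w : List ℕ) : Prop where
  run : ∃ τ, S.Sy.Run S.kd w (X, []) (X', τ)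
  val : ∀ x ∈ w, S.V x
  vX' : S.V X'
  good : GoodTau S X' w
  head : ∀ y < S.B, (S.tau X y ↔ TT S w X' y)
  rel : ∀ y < S.B, ∀ y' < S.B, (S.Rel R y y' ↔ S.Gd.E S.kd w y y')
  nd : m ≠ 1 → nd S.kd 0 w
  ht : m' ≠ 2 → ht S.kd 0 w = 0
  mm : m ≠ 1 → m' = m
  m2 : m' = 2 ∨ m' = m

theorem hstep_zero {kd : ℕ → SymKind} {x : ℕ} (h : kd x ≠ .call) : hstep kd 0 x = 0 := by
  unfold hstep; split <;> simp_all

theorem rel_cons {r : ℕ → ℕ → Prop} {R' y y' : ℕ} {w : List ℕ} (hy' : y' < S.B)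
    (hr : ∀ y1, r y y1 → y1 < S.B)
    (h' : ∀ y < S.B, ∀ y' < S.B, (S.Rel R' y y' ↔ S.Gd.E S.kd w y y')) :
    (∃ y1 < S.B, r y y1 ∧ S.Rel R' y1 y') ↔ ∃ y1, r y y1 ∧ S.Gd.E S.kd w y1 y' :=
  ⟨fun ⟨y1, h1, h2, h3⟩ => ⟨y1, h2, (h' _ h1 _ hy').1 h3⟩,
   fun ⟨y1, h2, h3⟩ => ⟨y1, hr _ h2, h2, (h' _ (hr _ h2) _ hy').2 h3⟩⟩

theorem tau_cons {r : ℕ → ℕ → Prop} {y X1 X' : ℕ} {w : List ℕ}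
    (hr : ∀ y1, r y y1 → y1 < S.B)
    (h' : ∀ y < S.B, (S.tau X1 y ↔ TT S w X' y)) :
    (∃ y1 < S.B, r y y1 ∧ S.tau X1 y1) ↔ ∃ y1, r y y1 ∧ TT S w X' y1 :=
  ⟨fun ⟨y1, h1, h2, h3⟩ => ⟨y1, h2, (h' _ h1).1 h3⟩,
   fun ⟨y1, h2, h3⟩ => ⟨y1, hr _ h2, h2, (h' _ (hr _ h2)).2 h3⟩⟩

/-- The relational effect of a block is the effect of the corresponding word on guard states. -/
theorem blk_iff (hS : S.Ok) {X Ri X3 y y1 : ℕ} {u : List ℕ} (hX : S.kd X = .call)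
    (hX3 : S.kd X3 = .ret) (hu : nd S.kd 0 u) (hu' : ht S.kd 0 u = 0) (hy : y < S.B)
    (h : ∀ y < S.B, ∀ y' < S.B, (S.Rel Ri y y' ↔ S.Gd.E S.kd u y y')) :
    S.blk X Ri X3 y y1 ↔ S.Gd.E S.kd (X :: u ++ [X3]) y y1 := by
  rw [E_matched hX hX3 hu hu']
  constructor
  · rintro ⟨y2, h2, y3, h3, g, hg, a, b, c⟩
    exact ⟨y2, y3, g, a, (h _ h2 _ h3).1 b, c⟩
  · rintro ⟨y2, y3, g, a, b, c⟩
    have h2 := hS.gcal _ _ _ _ a hy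
    have h3 := E_lt hS b h2.1
    exact ⟨y2, h2.1, y3, h3, g, h2.2, a, (h _ h2.1 _ h3).2 b, c⟩

/-- Every summary is realised by a word. -/
theorem sound (hS : S.Ok) {m X R m' X' : ℕ} (h : S.W m X R m' X') : ∃ w, Seg S m X R m' X' w := by
  induction h with
  | @nil m X R hm hV hR hId =>
    refine ⟨[], ⟨⟨[], rfl⟩, by simp, hV, trivial, fun y hy => ?_, fun y hy y' hy' => ?_,
      fun _ => trivial, fun _ => rfl, fun _ => rfl, Or.inr rfl⟩⟩
    · simp [TT, E_nil]
    · rw [hId y hy y' hy', E_nil]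
  | @sim m X m1 X1 R' m' X' R hm hV hR hmode hs hW hSim ih =>
    obtain ⟨w, I⟩ := ih
    have hnd : S.kd X = .call → nd S.kd 0 w := by
      intro hc
      apply I.nd
      rcases hmode with ⟨_, _, h⟩ | ⟨h, _⟩ | ⟨h, _⟩ <;> simp_all
    have hrun : ∃ σ, S.Sy.Run S.kd (X :: w) (X, []) (X', σ) := by
      have : S.Sy.E S.kd (X :: w) X X' := (E_cons hnd).2 ⟨X1, (s1b_iff hS).1 hs, I.run⟩
      exact this
    have hT : ∀ y < S.B, (S.tau X y ↔ TT S (X :: w) X' y) := by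
      intro y hy
      rw [hSim.1 y hy, tau_cons (fun y1 h1 => r1_lt hS ((r1b_iff hS hy).1 h1) hy) I.head]
      unfold TT
      simp only [r1b_iff hS hy, E_cons hnd]
      constructor
      · rintro ⟨a, b, c, d, e⟩; exact ⟨c, ⟨a, b, d⟩, e⟩
      · rintro ⟨c, ⟨a, b, d⟩, e⟩; exact ⟨a, b, c, d, e⟩
    refine ⟨X :: w, ⟨hrun, ?_, I.vX', ⟨hT, I.good⟩, hT, ?_, ?_, ?_, ?_, ?_⟩⟩
    · intro x hx
      rcases List.mem_cons.1 hx with rfl | hx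
      · exact hV
      · exact I.val x hx
    · intro y hy y' hy'
      rw [hSim.2 y hy y' hy', rel_cons hy' (fun y1 h1 => r1_lt hS ((r1b_iff hS hy).1 h1) hy)
        I.rel, E_cons hnd]
      simp only [r1b_iff hS hy]
    · intro h1
      rcases hmode with ⟨hk, h0, h2⟩ | ⟨hk, h0, h2⟩ | ⟨hk, h2⟩
      · exact ⟨by simp [hk], nd_mono w (Nat.zero_le _) (I.nd (by omega))⟩
      · omega
      · exact ⟨by simp [hk], nd_mono w (Nat.zero_le _) (I.nd (by omega))⟩
    · intro h1
      rcases hmode with ⟨hk, h0, h2⟩ | ⟨hk, h0, h2⟩ | ⟨hk, h2⟩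
      · exact absurd (I.mm (by omega)) (by omega)
      · simp only [VMC.ht, hstep_zero (x := X) (kd := S.kd) (by simp [hk])]; exact I.ht h1
      · simp only [VMC.ht, hstep_zero (x := X) (kd := S.kd) (by simp [hk])]; exact I.ht h1
    · intro h1
      rcases hmode with ⟨hk, h0, h2⟩ | ⟨hk, h0, h2⟩ | ⟨hk, h2⟩
      · have := I.mm (by omega); omega
      · omega
      · have := I.mm (by omega); omega
    · have := I.m2
      rcases hmode with ⟨hk, h0, h2⟩ | ⟨hk, h0, h2⟩ | ⟨hk, h2⟩ <;> omega
  | @blk m X X2 Ri X3 X1 R' m' X' R hm hV hR hWi hW hB ihi ih =>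
    obtain ⟨u, J⟩ := ihi
    obtain ⟨w, I⟩ := ih
    obtain ⟨hX, hX3, ⟨g, hg, hc, hr⟩, hT3, hTX, hRR⟩ := hB
    have hu := J.nd (by omega)
    have hu' := J.ht (by omega)
    have hm0 := ht_matched hX hX3 hu hu' 0
    have hrun : ∃ σ, S.Sy.Run S.kd ((X :: u ++ [X3]) ++ w) (X, []) (X', σ) := by
      have : S.Sy.E S.kd ((X :: u ++ [X3]) ++ w) X X' :=
        (E_append (Or.inl hm0.2)).2 ⟨X1, (E_matched hX hX3 hu hu').2 ⟨X2, X3, g, hc, J.run, hr⟩, I.run⟩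
      exact this
    have hlt : ∀ y < S.B, ∀ y1, S.blk X Ri X3 y y1 → y1 < S.B := fun y hy y1 h1 =>
      E_lt hS ((blk_iff hS hX hX3 hu hu' hy J.rel).1 h1) hy
    have hT : ∀ y < S.B, (S.tau X y ↔ TT S ((X :: u ++ [X3]) ++ w) X' y) := by
      intro y hy
      rw [hTX y hy, tau_cons (hlt y hy) I.head, TT_append (Or.inl hm0.2)]
      simp only [blk_iff hS hX hX3 hu hu' hy J.rel]
    have hT3' : ∀ y < S.B, (S.tau X3 y ↔ TT S (X3 :: w) X' y) := by
      intro y hy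
      have h0 : ht S.kd 0 [X3] = 0 := by simp [VMC.ht, hstep, hX3]
      rw [hT3 y hy, tau_cons (fun y1 h1 => r1_lt hS ((r1b_iff hS hy).1 h1) hy) I.head,
        ← List.singleton_append, TT_append (Or.inl h0)]
      simp only [r1b_iff hS hy, E_single]
    have hG : GoodTau S X' (u ++ (X3 :: w)) :=
      GoodTau_append hS (X1 := X3) (w := X3 :: w) ⟨hT3', I.good⟩ hT3'
        (fun a b e => ht_suffix hu' e) J.good
    refine ⟨(X :: u ++ [X3]) ++ w, ⟨hrun, ?_, I.vX', ?_, hT, ?_, ?_, ?_, I.mm, I.m2⟩⟩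
    · intro x hx
      simp only [List.cons_append, List.append_assoc, List.mem_cons, List.mem_append,
        List.nil_append] at hx
      rcases hx with rfl | hx | rfl | hx
      · exact hV
      · exact J.val x hx
      · exact J.vX'
      · exact I.val x hx
    · refine ⟨hT, ?_⟩
      simpa using hG
    · intro y hy y' hy'
      rw [hRR y hy y' hy', rel_cons hy' (hlt y hy) I.rel, E_append (Or.inl hm0.2)]
      simp only [blk_iff hS hX hX3 hu hu' hy J.rel]
    · intro h1
      exact (nd_append _ _ _).2 ⟨hm0.1, by rw [hm0.2]; exact I.nd h1⟩
    · intro h1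
      rw [ht_append, hm0.2]; exact I.ht h1

end VMC

/-! ### From summaries to infinite words -/

namespace VMC

variable {S : Sys}

/-- The factor `x k, …, x (k + n - 1)` of an infinite word. -/
def seg (x : ℕ → ℕ) : ℕ → ℕ → List ℕ
  | _, 0 => []
  | k, n + 1 => x k :: seg x (k + 1) n

/-- From the configuration `c` at position `k`, the guard automaton is in its sink after `n` letters. -/
def RN (S : Sys) (x : ℕ → ℕ) (n k : ℕ) (c : ℕ × List ℕ) : Prop :=
  ∃ τ, S.Gd.Run S.kd (seg x k n) c (0, τ)

/-- From the configuration `c` at position `k`, the guard automaton reaches its sink. -/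
def Reach (S : Sys) (x : ℕ → ℕ) (k : ℕ) (c : ℕ × List ℕ) : Prop := ∃ n, RN S x n k c

/-- A consistent annotated word `x`, with the stacks `σ` of the system along it: the system can read
`x`, and the claims at each position are exactly the guard states from which the sink is reached. -/
structure Lhs (S : Sys) (Init : ℕ → Prop) (x : ℕ → ℕ) (σ : ℕ → List ℕ) : Prop where
  init : Init (x 0)
  s0 : σ 0 = []
  val : ∀ k, S.V (x k)
  step : ∀ k, S.Sy.step S.kd (x k) (x k, σ k) (x (k + 1), σ (k + 1))
  tau : ∀ k, ∀ y < S.B, (S.tau (x k) y ↔ Reach S x k (y, []))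

theorem seg_add (x : ℕ → ℕ) (n' : ℕ) : ∀ n k, seg x k (n + n') = seg x k n ++ seg x (k + n) n'
  | 0, k => by simp [seg]
  | n + 1, k => by
    rw [show n + 1 + n' = (n + n') + 1 by omega, seg, seg, seg_add x n' n (k + 1),
      show k + 1 + n = k + (n + 1) by omega]; rfl

theorem seg_len (x : ℕ → ℕ) : ∀ n k, (seg x k n).length = n
  | 0, k => rfl
  | n + 1, k => by simp [seg, seg_len x n]

/-- The sink can be kept along any word, whatever the stack. -/
theorem sink_run (hS : S.Ok) : ∀ (w : List ℕ) (τ : List ℕ), ∃ τ', S.Gd.Run S.kd w (0, τ) (0, τ')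
  | [], τ => ⟨τ, rfl⟩
  | x :: w, τ => by
    have : ∃ τ1, S.Gd.step S.kd x (0, τ) (0, τ1) := by
      unfold VP.step
      cases S.kd x with
      | call => exact ⟨0 :: τ, 0, hS.sink_cal x, rfl⟩
      | ret =>
        cases τ with
        | nil => exact ⟨[], Or.inr ⟨rfl, hS.sink_rtb x, rfl⟩⟩
        | cons g s => exact ⟨s, Or.inl ⟨g, s, rfl, hS.sink_ret x g, rfl⟩⟩
      | loc => exact ⟨τ, hS.sink_lcl x, rfl⟩
    obtain ⟨τ1, h1⟩ := this
    obtain ⟨τ', h2⟩ := sink_run hS w τ1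
    exact ⟨τ', _, h1, h2⟩

/-- A run that has reached the sink can be prolonged within it. -/
theorem RN_mono (hS : S.Ok) {x : ℕ → ℕ} {n n' k : ℕ} {c : ℕ × List ℕ} (h : n ≤ n')
    (hr : RN S x n k c) : RN S x n' k c := by
  obtain ⟨τ, hr⟩ := hr
  obtain ⟨d, rfl⟩ := Nat.exists_eq_add_of_le h
  obtain ⟨τ', h'⟩ := sink_run hS (seg x (k + n) d) τ
  exact ⟨τ', by rw [seg_add]; exact run_append.2 ⟨_, hr, h'⟩⟩

theorem RN_add {x : ℕ → ℕ} {n n' k : ℕ} {c : ℕ × List ℕ} :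
    RN S x (n + n') k c ↔ ∃ c', S.Gd.Run S.kd (seg x k n) c c' ∧ RN S x n' (k + n) c' := by
  unfold RN
  simp only [seg_add, run_append]
  constructor
  · rintro ⟨τ, c', h1, h2⟩; exact ⟨c', h1, τ, h2⟩
  · rintro ⟨c', h1, τ, h2⟩; exact ⟨τ, c', h1, h2⟩

/-- A state of the gluing construction, in the middle of a segment: the current letter `x`, the letters
`v` that remain in the segment after `x`, the current stack `σ`, and the mode `m` and the letter `X` at
which the segment ends. -/
structure St where
  x : ℕ
  v : List ℕ
  σ : List ℕ
  m : ℕ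
  X : ℕ

/-- The invariant of the gluing construction. By `mem`, the segment ends in a pair that can be
continued; by `hgt`, a segment that ends in mode `1` ends with empty stack. -/
structure St.Inv (S : Sys) (G : ℕ → ℕ → Prop) (s : St) : Prop where
  run : ∃ σ', S.Sy.Run S.kd (s.x :: s.v) (s.x, s.σ) (s.X, σ')
  val : ∀ a ∈ s.x :: s.v, S.V a
  good : GoodTau S s.X (s.x :: s.v)
  mem : G s.m s.X
  hgt : s.m = 1 → ht S.kd s.σ.length (s.x :: s.v) = 0

/-- A segment of start mode `m` begins at this state, and it is live. -/
structure Fresh (S : Sys) (m : ℕ) (s : St) : Prop where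
  nd : m ≠ 1 → nd S.kd 0 (s.x :: s.v)
  emp : m = 1 → s.σ = []
  live : ∀ y < S.B, S.tau s.x y → S.Gd.E S.kd (s.x :: s.v) y 0
  mm : m ≠ 1 → s.m ≠ 1

/-- From a pair in `G`, a new segment can be begun. It is nonempty: the claim at the guard state `1` has
to be brought to the sink `0`. -/
theorem new_seg (hS : S.Ok) {G : ℕ → ℕ → Prop}
    (hG : ∀ m X, G m X → ∃ m' X' R, G m' X' ∧ S.W m X R m' X' ∧ S.live X R)
    {m X : ℕ} {σ : List ℕ} (h : G m X) (hσ : m = 1 → σ = []) :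
    ∃ s : St, s.x = X ∧ s.σ = σ ∧ s.Inv S G ∧ Fresh S m s := by
  obtain ⟨m', X', R, hm', hW, hl⟩ := hG m X h
  obtain ⟨w, I⟩ := sound hS hW
  have hlive : ∀ y < S.B, S.tau X y → S.Gd.E S.kd w y 0 := fun y hy ht =>
    (I.rel y hy 0 (by have := hS.two; omega)).1 (hl y hy ht)
  obtain ⟨τ, hrun⟩ := I.run
  cases w with
  | nil =>
    cases hrun
    have := hlive 1 hS.two (hS.tau1 _ I.vX')
    rw [E_nil] at this; omega
  | cons a v =>
    have : X = a := by obtain ⟨c1, h1, _⟩ := hrun; exact sstep_fst hS h1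
    subst this
    refine ⟨⟨X, v, σ, m', X'⟩, rfl, rfl, ⟨?_, I.val, I.good, hm', fun e => ?_⟩,
      ⟨I.nd, hσ, hlive, fun e => by rw [I.mm e]; exact e⟩⟩
    · by_cases e : m = 1
      · rw [hσ e]; exact ⟨τ, hrun⟩
      · exact ⟨τ ++ σ, (run_frame_nil (I.nd e)).2 ⟨τ, rfl, hrun⟩⟩
    · simp only at e
      have e1 : m = 1 := by
        by_contra hc
        have := I.mm hc; omega
      rw [hσ e1]; exact I.ht (by omega)

/-- One letter of the gluing construction: when the current segment is exhausted a fresh one begins,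
otherwise the construction moves on inside it. -/
theorem next_st (hS : S.Ok) {G : ℕ → ℕ → Prop}
    (hG : ∀ m X, G m X → ∃ m' X' R, G m' X' ∧ S.W m X R m' X' ∧ S.live X R)
    {s : St} (h : s.Inv S G) : ∃ s' : St, s'.Inv S G ∧
      S.Sy.step S.kd s.x (s.x, s.σ) (s'.x, s'.σ) ∧
      ((s.v = [] ∧ s'.x = s.X ∧ Fresh S s.m s') ∨
        (s.v = s'.x :: s'.v ∧ s'.m = s.m ∧ s'.X = s.X)) := by
  obtain ⟨x, v, σ, m, X⟩ := s
  obtain ⟨⟨σ', c1, h1, h2⟩, hval, hgood, hmem, hhgt⟩ := h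
  simp only at *
  cases v with
  | nil =>
    cases h2
    obtain ⟨s', e1, e2, h3, h4⟩ := new_seg (σ := σ') hS hG hmem (fun e => by
      have := hhgt e
      simp only [ht] at this
      have h5 := step_len h1
      simp only at h5
      exact List.eq_nil_of_length_eq_zero (by omega))
    refine ⟨s', h3, ?_, Or.inl ⟨rfl, e1, h4⟩⟩
    rw [e1, e2]; exact h1
  | cons b v' =>
    have hb : c1.1 = b := by obtain ⟨c2, h3, _⟩ := h2; exact sstep_fst hS h3
    obtain ⟨c1, σ1⟩ := c1
    simp only at hb
    subst hb
    refine ⟨⟨c1, v', σ1, m, X⟩, ⟨⟨σ', h2⟩, fun a ha => hval a (List.mem_cons_of_mem _ ha),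
      hgood.2, hmem, fun e => ?_⟩, h1, Or.inr ⟨rfl, rfl, rfl⟩⟩
    have := hhgt e
    rw [ht] at this
    have h5 := step_len h1
    simp only at h5 ⊢
    rw [h5]; exact this

/-- Gluing live segments yields a consistent word. That the claims are not only closed under the moves
of the guard automaton but true rests on liveness: a claim made where a segment begins is brought to
the sink within that segment, and any other claim is propagated to the next beginning of a segment. -/
theorem rhs_lhs (hS : S.Ok) {Init : ℕ → Prop} {G : ℕ → ℕ → Prop} {X0 : ℕ} (hI : Init X0)
    (h0 : G 1 X0)
    (hG : ∀ m X, G m X → ∃ m' X' R, G m' X' ∧ S.W m X R m' X' ∧ S.live X R) :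
    ∃ x σ, Lhs S Init x σ := by
  obtain ⟨s0, e1, e2, hI0, hF0⟩ := new_seg (σ := []) hS hG h0 (fun _ => rfl)
  choose nx hnx using fun s : {s : St // s.Inv S G} => next_st hS hG s.2
  let q : ℕ → {s : St // s.Inv S G} := fun k =>
    Nat.rec ⟨s0, hI0⟩ (fun _ s => ⟨nx s, (hnx s).1⟩) k
  let s : ℕ → St := fun k => (q k).1
  have hInv : ∀ k, (s k).Inv S G := fun k => (q k).2
  have hst : ∀ k, S.Sy.step S.kd (s k).x ((s k).x, (s k).σ) ((s (k + 1)).x, (s (k + 1)).σ) :=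
    fun k => (hnx (q k)).2.1
  have hcase : ∀ k, ((s k).v = [] ∧ (s (k+1)).x = (s k).X ∧ Fresh S (s k).m (s (k+1))) ∨
        ((s k).v = (s (k+1)).x :: (s (k+1)).v ∧ (s (k+1)).m = (s k).m ∧ (s (k+1)).X = (s k).X) :=
    fun k => (hnx (q k)).2.2
  have hs0 : s 0 = s0 := rfl
  clear_value s
  let x : ℕ → ℕ := fun k => (s k).x
  let w : ℕ → List ℕ := fun k => (s k).x :: (s k).v
  have hwl : ∀ k, 0 < (w k).length := fun k => by simp [w]
  -- the end of the segment containing position `k` is a fresh position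
  have hend : ∀ n k, (s k).v.length = n → seg x k (w k).length = w k ∧
      (s (k + (w k).length)).x = (s k).X ∧ Fresh S (s k).m (s (k + (w k).length)) := by
    intro n
    induction n with
    | zero =>
      intro k hk
      have hv := List.eq_nil_of_length_eq_zero hk
      rcases hcase k with ⟨_, h2, h3⟩ | ⟨h1, _⟩
      · simp only [w, hv]
        exact ⟨rfl, h2, h3⟩
      · rw [hv] at h1; simp at h1
    | succ n ih =>
      intro k hk
      rcases hcase k with ⟨h1, _⟩ | ⟨h1, h2, h3⟩
      · rw [h1] at hk; simp at hk
      · have := ih (k + 1) (by rw [h1] at hk; simpa using hk)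
        have e : w k = x k :: w (k + 1) := by simp only [w, x, h1]
        have el : (w k).length = (w (k + 1)).length + 1 := by rw [e]; simp
        rw [h2, h3] at this
        rw [el, seg, this.1, e, show k + ((w (k + 1)).length + 1) = k + 1 + (w (k + 1)).length by omega]
        exact ⟨rfl, this.2⟩
  have hseg := fun k => (hend _ k rfl).1
  have hX := fun k => (hend _ k rfl).2.1
  have hFr := fun k => (hend _ k rfl).2.2
  have htt : ∀ k, ∀ y < S.B, (S.tau (x k) y ↔ TT S (w k) (x (k + (w k).length)) y) := by
    intro k y hy
    have := (hInv k).good.1 y hy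
    change _ ↔ TT S (w k) (s _).x y
    rw [hX k]; exact this
  have hh1 : ∀ k, (s k).m = 1 → ht S.kd 0 (w k) = 0 := fun k e =>
    Nat.le_zero.1 ((ht_mono (w k) (Nat.zero_le (s k).σ.length)).trans ((hInv k).hgt e).le)
  have hVx : ∀ k, S.V (x k) := fun k => (hInv k).val _ (by simp [x])
  -- where a segment begins, liveness turns claims into reachability
  have claim1 : ∀ k m y σ, Fresh S m (s k) → y < S.B → S.tau (x k) y → (m = 1 → σ = []) →
      Reach S x k (y, σ) := by
    intro k m y σ hF hy ht hσ
    obtain ⟨τ, hr⟩ := hF.live y hy ht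
    refine ⟨(w k).length, ?_⟩
    unfold RN
    rw [hseg k]
    by_cases e : m = 1
    · rw [hσ e]; exact ⟨τ, hr⟩
    · exact ⟨τ ++ σ, (run_frame_nil (hF.nd e)).2 ⟨τ, rfl, hr⟩⟩
  -- conversely, a run to the sink is cut where the segment ends and the rest, which is shorter,
  -- is dealt with by induction
  have claim2 : ∀ n k m y σ, Fresh S m (s k) → y < S.B → (m = 1 → σ = []) →
      RN S x n k (y, σ) → S.tau (x k) y := by
    intro n
    induction n using Nat.strong_induction_on with
    | _ n ih =>
      intro k m y σ hF hy hσ hR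
      rcases Nat.eq_zero_or_pos n with rfl | hn
      · obtain ⟨τ, h⟩ := hR
        cases h
        exact hS.tau0 _ (hVx k)
      · have hl := hwl k
        have hR := RN_mono hS (show n ≤ (w k).length + (n - (w k).length) by omega) hR
        obtain ⟨⟨y', τ'⟩, h1, h2⟩ := RN_add.1 hR
        rw [hseg k] at h1
        have hy' := run_lt hS h1 hy
        rw [htt k y hy]
        refine ⟨y', ?_, ih _ (by omega) _ (s k).m y' τ' (hFr k) hy' (fun e => ?_) h2⟩
        · by_cases e : m = 1
          · rw [hσ e] at h1; exact ⟨_, h1⟩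
          · obtain ⟨τ'', _, h3⟩ := (run_frame_nil (hF.nd e)).1 h1
            exact ⟨_, h3⟩
        · have e1 : m = 1 := by by_contra hc; exact hF.mm hc e
          rw [hσ e1] at h1
          exact run_nil_of_ht h1 (hh1 k e)
  refine ⟨x, fun k => (s k).σ, ?_, ?_, hVx, hst, fun k y hy => ⟨fun h => ?_, ?_⟩⟩
  · simp only [x, hs0, e1]; exact hI
  · simp only [hs0, e2]
  · obtain ⟨y', ⟨τ, h1⟩, h2⟩ := (htt k y hy).1 h
    have hy' := run_lt hS h1 hy
    obtain ⟨n, hn⟩ := claim1 _ _ y' τ (hFr k) hy' h2 (fun e => run_nil_of_ht h1 (hh1 k e))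
    exact ⟨(w k).length + n, RN_add.2 ⟨_, by rw [hseg k]; exact h1, hn⟩⟩
  · rintro ⟨n, hR⟩
    have hR := RN_mono hS (show n ≤ (w k).length + n by omega) hR
    obtain ⟨⟨y', τ'⟩, h1, h2⟩ := RN_add.1 hR
    rw [hseg k] at h1
    have hy' := run_lt hS h1 hy
    exact (htt k y hy).2 ⟨y', ⟨_, h1⟩, claim2 n _ _ y' τ' (hFr k) hy'
      (fun e => run_nil_of_ht h1 (hh1 k e)) h2⟩

end VMC

/-! ### From infinite words to summaries -/

namespace VMC

variable {S : Sys}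

theorem RN_iff_E {x : ℕ → ℕ} {n k y : ℕ} : RN S x n k (y, []) ↔ S.Gd.E S.kd (seg x k n) y 0 :=
  Iff.rfl

theorem Reach_add (hS : S.Ok) {x : ℕ → ℕ} (n : ℕ) {k : ℕ} {c : ℕ × List ℕ} :
    Reach S x k c ↔ ∃ c', S.Gd.Run S.kd (seg x k n) c c' ∧ Reach S x (k + n) c' := by
  constructor
  · rintro ⟨n', h⟩
    obtain ⟨c', h1, h2⟩ := RN_add.1 (RN_mono hS (show n' ≤ n + n' by omega) h)
    exact ⟨c', h1, n', h2⟩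
  · rintro ⟨c', h1, n', h2⟩
    exact ⟨n + n', RN_add.2 ⟨c', h1, h2⟩⟩

/-- If no return below the current level follows, the stack is irrelevant to reaching the sink. -/
theorem Reach_frame {x : ℕ → ℕ} {k y : ℕ} {τ : List ℕ}
    (h : ∀ n, nd S.kd 0 (seg x k n)) : Reach S x k (y, τ) ↔ Reach S x k (y, []) := by
  refine exists_congr fun n => ?_
  constructor
  · rintro ⟨τ', hr⟩
    obtain ⟨τ'', _, h'⟩ := (run_frame_nil (h n)).1 hr
    exact ⟨_, h'⟩
  · rintro ⟨τ', hr⟩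
    exact ⟨_, (run_frame_nil (h n)).2 ⟨τ', rfl, hr⟩⟩

/-- Reachability of the sink can be cut at a position whose stack is empty, or below whose level no
return follows. -/
theorem Reach_E (hS : S.Ok) {x : ℕ → ℕ} {n k y : ℕ}
    (h : ht S.kd 0 (seg x k n) = 0 ∨ ∀ n', nd S.kd 0 (seg x (k + n) n')) :
    Reach S x k (y, []) ↔ ∃ y1, S.Gd.E S.kd (seg x k n) y y1 ∧ Reach S x (k + n) (y1, []) := by
  rw [Reach_add hS n]
  constructor
  · rintro ⟨⟨y1, τ⟩, h1, h2⟩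
    refine ⟨y1, ⟨τ, h1⟩, ?_⟩
    rcases h with h | h
    · rw [← show τ = [] from run_nil_of_ht h1 h]; exact h2
    · exact (Reach_frame h).1 h2
  · rintro ⟨y1, ⟨τ, h1⟩, h2⟩
    refine ⟨_, h1, ?_⟩
    rcases h with h | h
    · rw [show τ = [] from run_nil_of_ht h1 h]; exact h2
    · exact (Reach_frame h).2 h2

/-- The claims propagate backwards over a segment at whose end the stack can be forgotten. -/
theorem tau_E (hS : S.Ok) {Init : ℕ → Prop} {x : ℕ → ℕ} {σ : ℕ → List ℕ} (hL : Lhs S Init x σ)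
    {n k : ℕ} (h : ht S.kd 0 (seg x k n) = 0 ∨ ∀ n', nd S.kd 0 (seg x (k + n) n'))
    {y : ℕ} (hy : y < S.B) :
    S.tau (x k) y ↔ ∃ y1, S.Gd.E S.kd (seg x k n) y y1 ∧ S.tau (x (k + n)) y1 := by
  rw [hL.tau k y hy, Reach_E hS h]
  refine exists_congr fun y1 => and_congr_right fun h1 => ?_
  rw [hL.tau _ _ (E_lt hS h1 hy)]

theorem h_step {Init : ℕ → Prop} {x : ℕ → ℕ} {σ : ℕ → List ℕ} (hL : Lhs S Init x σ) (k : ℕ) :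
    (σ (k + 1)).length = hstep S.kd (σ k).length (x k) := step_len (hL.step k)

/-- The stack heights of the system are determined by the letters. -/
theorem h_seg {Init : ℕ → Prop} {x : ℕ → ℕ} {σ : ℕ → List ℕ} (hL : Lhs S Init x σ) :
    ∀ n k : ℕ, ht S.kd (σ k).length (seg x k n) = (σ (k + n)).length
  | 0, k => rfl
  | n + 1, k => by
    rw [seg, ht, ← h_step hL k, h_seg hL n (k + 1), show k + 1 + n = k + (n + 1) by omega]

/-- If the height stays at least `b` along a factor, then the factor, read from the initial height minus
`b`, meets no return at height `0`. The hypothesis also excludes returns on `⊥`. -/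
theorem nd_seg {Init : ℕ → Prop} {x : ℕ → ℕ} {σ : ℕ → List ℕ} (hL : Lhs S Init x σ) {b : ℕ}
    (hb : 1 ≤ b) : ∀ n k : ℕ, (∀ j, k ≤ j → j ≤ k + n → b ≤ (σ j).length) →
      nd S.kd ((σ k).length - b) (seg x k n)
  | 0, k, _ => trivial
  | n + 1, k, h => by
    have h0 := h k le_rfl (by omega)
    have h1 := h (k + 1) (by omega) (by omega)
    have hs := h_step hL k
    refine ⟨fun e => ?_, ?_⟩
    · simp only [hstep, e] at hs; omega
    · have : hstep S.kd ((σ k).length - b) (x k) = (σ (k + 1)).length - b := by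
        rw [hs]; rw [hs] at h1
        cases e : S.kd (x k) <;> simp only [hstep, e] at h1 ⊢ <;> omega
      rw [this]
      exact nd_seg hL hb n (k + 1) (fun j h2 h3 => h j (by omega) (by omega))

theorem nd_seg0 {Init : ℕ → Prop} {x : ℕ → ℕ} {σ : ℕ → List ℕ} (hL : Lhs S Init x σ) {n k : ℕ}
    (hb : 1 ≤ (σ k).length) (h : ∀ j, k ≤ j → j ≤ k + n → (σ k).length ≤ (σ j).length) :
    nd S.kd 0 (seg x k n) := by
  have := nd_seg hL hb n k h
  rwa [Nat.sub_self] at this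

theorem ht_seg0 {Init : ℕ → Prop} {x : ℕ → ℕ} {σ : ℕ → List ℕ} (hL : Lhs S Init x σ) {n k : ℕ}
    (hb : 1 ≤ (σ k).length) (h : ∀ j, k ≤ j → j ≤ k + n → (σ k).length ≤ (σ j).length)
    (h' : (σ (k + n)).length = (σ k).length) : ht S.kd 0 (seg x k n) = 0 := by
  have h1 := ht_shift _ (σ k).length (nd_seg0 hL hb h)
  rw [Nat.zero_add, h_seg hL, h'] at h1
  omega

theorem run_seg {Init : ℕ → Prop} {x : ℕ → ℕ} {σ : ℕ → List ℕ} (hL : Lhs S Init x σ) :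
    ∀ n k : ℕ, S.Sy.Run S.kd (seg x k n) (x k, σ k) (x (k + n), σ (k + n))
  | 0, k => rfl
  | n + 1, k => by
    refine ⟨_, hL.step k, ?_⟩
    have := run_seg hL n (k + 1)
    rwa [show k + 1 + n = k + (n + 1) by omega] at this

/-- The stack never falls below its height at position `l` afterwards. -/
def Top (σ : ℕ → List ℕ) (l : ℕ) : Prop := ∀ j, l ≤ j → (σ l).length ≤ (σ j).length

/-- The heights between positions `k` and `l` are those of a segment with modes `m` and `m'` at its
ends. -/
def Cond (σ : ℕ → List ℕ) (m m' k l : ℕ) : Prop :=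
  (m = 0 ∧ m' = 0 ∧ 1 ≤ (σ k).length ∧ (σ l).length = (σ k).length ∧
    ∀ j, k ≤ j → j ≤ l → (σ k).length ≤ (σ j).length) ∨
  (m = 1 ∧ m' = 1 ∧ (σ k).length = 0 ∧ (σ l).length = 0) ∨
  (m = 2 ∧ m' = 2 ∧ 1 ≤ (σ k).length ∧ Top σ k ∧ Top σ l) ∨
  (m = 1 ∧ m' = 2 ∧ (σ k).length = 0 ∧ Top σ l ∧ 1 ≤ (σ l).length)

/-- Every factor of a consistent word that is of the right shape has a summary, whose relation is the
effect of the factor. The induction is on the length, on the first letter or first matched block. -/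
theorem complete (hS : S.Ok) {Init : ℕ → Prop} {x : ℕ → ℕ} {σ : ℕ → List ℕ}
    (hL : Lhs S Init x σ) : ∀ n k m m', Cond σ m m' k (k + n) →
      ∃ R < S.K, S.W m (x k) R m' (x (k + n)) ∧
        ∀ y < S.B, ∀ y' < S.B, (S.Rel R y y' ↔ S.Gd.E S.kd (seg x k n) y y') := by
  intro n
  induction n using Nat.strong_induction_on with
  | _ n ih =>
  intro k m m' hC
  have hm3 : m < 3 := by rcases hC with h | h | h | h <;> omega
  obtain ⟨R, hRK, hR⟩ := exists_rel hS (fun y y' => S.Gd.E S.kd (seg x k n) y y')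
  rcases Nat.eq_zero_or_pos n with rfl | hn
  · have e : m = m' := by rcases hC with h | h | h | h <;> [omega; omega; omega; skip]
                          exfalso; rw [Nat.add_zero] at h; omega
    subst e
    refine ⟨R, hRK, .nil hm3 (hL.val k) hRK (fun y hy y' hy' => ?_), hR⟩
    rw [hR y hy y' hy']; exact E_nil
  obtain ⟨n, rfl⟩ : ∃ n', n = n' + 1 := ⟨n - 1, by omega⟩
  refine ⟨R, hRK, ?_, hR⟩
  have hs := h_step hL k
  have hst := hL.step k
  -- a step which is not the beginning of a matched block
  have simple : ∀ m1, S.mode m (x k) m1 → S.s1b (x k) (x (k + 1)) →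
      Cond σ m1 m' (k + 1) (k + 1 + n) →
      (S.kd (x k) = .call → 1 ≤ (σ (k + 1)).length ∧ Top σ (k + 1)) →
      S.W m (x k) R m' (x (k + (n + 1))) := by
    intro m1 hmode hsb hC1 hcall
    obtain ⟨R', hRK', hW, hR'⟩ := ih n (by omega) (k + 1) m1 m' hC1
    rw [show k + 1 + n = k + (n + 1) by omega] at hW
    have hnd : S.kd (x k) = .call → ∀ n', nd S.kd 0 (seg x (k + 1) n') := fun e n' =>
      nd_seg0 hL (hcall e).1 (fun j hj _ => (hcall e).2 j hj)
    refine .sim hm3 (hL.val k) hRK hmode hsb hW ⟨fun y hy => ?_, fun y hy y' hy' => ?_⟩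
    · have h1 : ht S.kd 0 (seg x k 1) = 0 ∨ ∀ n', nd S.kd 0 (seg x (k + 1) n') := by
        by_cases e : S.kd (x k) = .call
        · exact Or.inr (hnd e)
        · exact Or.inl (by simp [seg, ht, hstep_zero e])
      rw [tau_E hS hL h1 hy]
      simp only [seg, E_single, r1b_iff hS hy]
      exact ⟨fun ⟨y1, a, b⟩ => ⟨y1, r1_lt hS a hy, a, b⟩, fun ⟨y1, _, a, b⟩ => ⟨y1, a, b⟩⟩
    · rw [hR y hy y' hy', rel_cons hy' (fun y1 h1 => r1_lt hS ((r1b_iff hS hy).1 h1) hy) hR',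
        seg, E_cons (fun e => hnd e n)]
      simp only [r1b_iff hS hy]
  rw [show k + (n + 1) = k + 1 + n by omega] at hC
  cases hk : S.kd (x k) with
  | ret =>
    simp only [hstep, hk] at hs
    have hm : m = 1 := by
      rcases hC with h | h | h | h
      · have := h.2.2.2.2 (k + 1) (by omega) (by omega); omega
      · exact h.1
      · have := h.2.2.2.1 (k + 1) (by omega); omega
      · exact h.1
    subst hm
    have h0 : (σ k).length = 0 := by rcases hC with h | h | h | h <;> omega
    simp only [VP.step, hk, List.eq_nil_of_length_eq_zero h0] at hst
    refine simple 1 (Or.inr (Or.inl ⟨hk, rfl, rfl⟩)) (Or.inr (Or.inl ⟨hk, ?_⟩)) ?_ (by simp [hk])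
    · rcases hst with ⟨g, s, h, _⟩ | h
      · simp at h
      · exact h.2.1
    · rcases hC with h | h | h | h
      · omega
      · exact Or.inr (Or.inl ⟨rfl, h.2.1, by omega, h.2.2.2⟩)
      · omega
      · exact Or.inr (Or.inr (Or.inr ⟨rfl, h.2.1, by omega, h.2.2.2⟩))
  | loc =>
    simp only [hstep, hk] at hs
    simp only [VP.step, hk] at hst
    refine simple m (Or.inr (Or.inr ⟨hk, rfl⟩)) (Or.inr (Or.inr ⟨hk, hst.1⟩)) ?_ (by simp [hk])
    rcases hC with h | h | h | h
    · exact Or.inl ⟨h.1, h.2.1, by omega, by omega, fun j h1 h2 => by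
        rw [hs]; exact h.2.2.2.2 j (by omega) h2⟩
    · exact Or.inr (Or.inl ⟨h.1, h.2.1, by omega, h.2.2.2⟩)
    · exact Or.inr (Or.inr (Or.inl ⟨h.1, h.2.1, by omega, fun j h1 => by
        rw [hs]; exact h.2.2.2.1 j (by omega), h.2.2.2.2⟩))
    · exact Or.inr (Or.inr (Or.inr ⟨h.1, h.2.1, by omega, h.2.2.2⟩))
  | call =>
    simp only [hstep, hk] at hs
    simp only [VP.step, hk] at hst
    obtain ⟨g, hg1, hg2⟩ := hst
    have hgK := (hS.scal _ _ _ _ hg1).2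
    -- `e` is the first later position at which the height is back to that of `k`; if there is
    -- none before the end of the factor, the call is not matched within it
    by_cases he : ∃ e, k + 1 < e ∧ e ≤ k + 1 + n ∧ (σ e).length ≤ (σ k).length
    · classical
      obtain ⟨he1, he2, he3⟩ := Nat.find_spec he
      have hmin : ∀ j, k + 1 ≤ j → j < Nat.find he → (σ k).length + 1 ≤ (σ j).length := by
        intro j h1 h2
        rcases Nat.eq_or_lt_of_le h1 with rfl | h1
        · omega
        · have := Nat.find_min he h2
          by_contra hc
          exact this ⟨h1, by omega, by omega⟩
      generalize Nat.find he = e at *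
      obtain ⟨d, rfl⟩ : ∃ d, e = k + 1 + d + 1 := ⟨e - (k + 2), by omega⟩
      obtain ⟨r, rfl⟩ : ∃ r, n = d + 1 + r := ⟨n - (d + 1), by omega⟩
      set j := k + 1 + d with hj
      have hsj := h_step hL j
      have hjj := hmin j (by omega) (by omega)
      have hret : S.kd (x j) = .ret := by
        by_contra hc
        unfold hstep at hsj
        split at hsj
        · omega
        · contradiction
        · omega
      simp only [hstep, hret] at hsj
      have hlen : (σ (j + 1)).length = (σ k).length := by omega
      have hlenj : (σ j).length = (σ (k + 1)).length := by omega
      have hin : ∀ i, k + 1 ≤ i → i ≤ k + 1 + d → (σ (k + 1)).length ≤ (σ i).length :=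
        fun i h1 h2 => by rw [hs]; exact hmin i h1 (by omega)
      have hu := nd_seg0 hL (n := d) (k := k + 1) (by omega) hin
      have hu' := ht_seg0 hL (n := d) (k := k + 1) (by omega) hin hlenj
      obtain ⟨Ri, _, hWi, hRi⟩ := ih d (by omega) (k + 1) 0 0
        (Or.inl ⟨rfl, rfl, by omega, hlenj, hin⟩)
      rw [← hj] at hWi
      obtain ⟨R', _, hW, hR'⟩ := ih r (by omega) (j + 1) m m' (by
        rw [show j + 1 + r = k + 1 + (d + 1 + r) by omega]
        rcases hC with h | h | h | h
        · exact Or.inl ⟨h.1, h.2.1, by omega, by omega, fun i h1 h2 => by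
            rw [hlen]; exact h.2.2.2.2 i (by omega) h2⟩
        · exact Or.inr (Or.inl ⟨h.1, h.2.1, by omega, h.2.2.2⟩)
        · exact Or.inr (Or.inr (Or.inl ⟨h.1, h.2.1, by omega, fun i h1 => by
            rw [hlen]; exact h.2.2.2.1 i (by omega), h.2.2.2.2⟩))
        · exact Or.inr (Or.inr (Or.inr ⟨h.1, h.2.1, by omega, h.2.2.2⟩)))
      rw [show j + 1 + r = k + (d + 1 + r + 1) by omega] at hW
      have hsegj : seg x k (d + 2) = x k :: seg x (k + 1) d ++ [x j] := by
        rw [show d + 2 = (d + 1) + 1 by omega, seg, seg_add x 1 d (k + 1)]; rfl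
      have hm0 := ht_matched hk hret hu hu' 0
      have hh0 : ht S.kd 0 (seg x k (d + 2)) = 0 := by rw [hsegj]; exact hm0.2
      have hlt : ∀ y < S.B, ∀ y1, S.blk (x k) Ri (x j) y y1 → y1 < S.B := fun y hy y1 h1 =>
        E_lt hS ((blk_iff hS hk hret hu hu' hy hRi).1 h1) hy
      refine .blk hm3 (hL.val k) hRK hWi hW ⟨hk, hret, ⟨g, hgK, hg1, ?_⟩, fun y hy => ?_,
        fun y hy => ?_, fun y hy y' hy' => ?_⟩
      · have h1 := run_seg hL d (k + 1)
        rw [hg2] at h1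
        obtain ⟨τ', h2, h3⟩ := (run_frame_nil hu).1 h1
        change σ j = _ at h2
        have h4 : τ' = [] := List.eq_nil_of_length_eq_zero (by
          have := congrArg List.length h2
          simp only [List.length_append, List.length_cons] at this
          omega)
        subst h4
        have h5 := hL.step j
        simp only [VP.step, hret, h2] at h5
        rcases h5 with ⟨g', s, e1, e2, _⟩ | ⟨e1, _⟩
        · simp only [List.nil_append, List.cons.injEq] at e1
          rw [e1.1]; exact e2
        · simp at e1
      · have h1 : ht S.kd 0 (seg x j 1) = 0 := by
          simp [seg, ht, hstep, hret]
        rw [tau_E hS hL (Or.inl h1) hy]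
        simp only [seg, E_single, r1b_iff hS hy]
        exact ⟨fun ⟨y1, a, b⟩ => ⟨y1, r1_lt hS a hy, a, b⟩, fun ⟨y1, _, a, b⟩ => ⟨y1, a, b⟩⟩
      · rw [tau_E hS hL (Or.inl hh0) hy, show k + (d + 2) = j + 1 by omega, hsegj]
        simp only [blk_iff hS hk hret hu hu' hy hRi]
        exact ⟨fun ⟨y1, a, b⟩ => ⟨y1, E_lt hS a hy, a, b⟩, fun ⟨y1, _, a, b⟩ => ⟨y1, a, b⟩⟩
      · rw [hR y hy y' hy', rel_cons hy' (hlt y hy) hR',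
          show d + 1 + r + 1 = (d + 2) + r by omega, seg_add, hsegj,
          show k + (d + 2) = j + 1 by omega, E_append (Or.inl hm0.2)]
        simp only [blk_iff hS hk hret hu hu' hy hRi]
    · push Not at he
      have hup : ∀ j, k + 1 ≤ j → j ≤ k + 1 + n → (σ (k + 1)).length ≤ (σ j).length := by
        intro j h1 h2
        rcases Nat.eq_or_lt_of_le h1 with rfl | h1
        · exact le_rfl
        · have := he j h1 h2; omega
      have hl := hup (k + 1 + n) (by omega) le_rfl
      have hm : m ≠ 0 ∧ m' = 2 ∧ Top σ (k + 1 + n) := by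
        rcases hC with h | h | h | h
        · omega
        · omega
        · exact ⟨by omega, h.2.1, h.2.2.2.2⟩
        · exact ⟨by omega, h.2.1, h.2.2.2.1⟩
      have hT : Top σ (k + 1) := by
        intro j hj
        rcases le_total j (k + 1 + n) with h1 | h1
        · exact hup j hj h1
        · exact hl.trans (hm.2.2 j h1)
      refine simple 2 (Or.inl ⟨hk, hm.1, rfl⟩) (Or.inl ⟨hk, g, hgK, hg1⟩) ?_
        (fun _ => ⟨by omega, hT⟩)
      exact Or.inr (Or.inr (Or.inl ⟨rfl, hm.2.1, by omega, hT, hm.2.2⟩))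

theorem W_bd {m X R m' X' : ℕ} (h : S.W m X R m' X') : m < 3 ∧ S.V X ∧ R < S.K ∧ m' < 3 ∧ S.V X' := by
  induction h with
  | nil h1 h2 h3 => exact ⟨h1, h2, h3, h1, h2⟩
  | sim h1 h2 h3 _ _ _ _ ih => exact ⟨h1, h2, h3, ih.2.2.2⟩
  | blk h1 h2 h3 _ _ _ _ ih => exact ⟨h1, h2, h3, ih.2.2.2⟩

/-- A consistent word can be cut into live segments: the claims at a position are finitely many, so they
have all been brought to the sink by some later cut. -/
theorem lhs_rhs (hS : S.Ok) {Init : ℕ → Prop} {x : ℕ → ℕ} {σ : ℕ → List ℕ}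
    (hL : Lhs S Init x σ) : ∃ G : ℕ → ℕ → Prop, G 1 (x 0) ∧
      ∀ m X, G m X → ∃ m' X' R, G m' X' ∧ S.W m X R m' X' ∧ S.live X R := by
  -- beyond some length, all the states in `tau` have been led to acceptance
  have hlive : ∀ k, ∃ N, ∀ n, N ≤ n → ∀ y < S.B, S.tau (x k) y → S.Gd.E S.kd (seg x k n) y 0 := by
    intro k
    have : ∀ b ≤ S.B, ∃ N, ∀ n, N ≤ n → ∀ y < b, S.tau (x k) y → S.Gd.E S.kd (seg x k n) y 0 := by
      intro b
      induction b with
      | zero => intro _; exact ⟨0, by simp⟩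
      | succ b ih =>
        intro hb
        obtain ⟨N, hN⟩ := ih (by omega)
        by_cases ht : S.tau (x k) b
        · obtain ⟨N', hN'⟩ := (hL.tau k b (by omega)).1 ht
          refine ⟨max N N', fun n hn y hy hty => ?_⟩
          rcases Nat.lt_succ_iff_lt_or_eq.1 hy with hy | rfl
          · exact hN n (by omega) y hy hty
          · exact RN_mono hS (by omega) hN'
        · refine ⟨N, fun n hn y hy hty => ?_⟩
          rcases Nat.lt_succ_iff_lt_or_eq.1 hy with hy | rfl
          · exact hN n hn y hy hty
          · exact absurd hty ht
    exact this S.B le_rfl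
  have key : ∀ m k (P : ℕ → ℕ → Prop), (∀ N, ∃ l m', N ≤ l ∧ P m' l ∧ Cond σ m m' k l) →
      ∃ m' l R, P m' l ∧ S.W m (x k) R m' (x l) ∧ S.live (x k) R := by
    intro m k P h
    obtain ⟨N, hN⟩ := hlive k
    obtain ⟨l, m', hl, hp, hc⟩ := h (k + N)
    obtain ⟨d, rfl⟩ := Nat.exists_eq_add_of_le (show k ≤ l by omega)
    obtain ⟨R, _, hW, hR⟩ := complete hS hL d k m m' hc
    refine ⟨m', _, R, hp, hW, fun y hy ht => ?_⟩
    exact (hR y hy 0 (by have := hS.two; omega)).2 (hN d (by omega) y hy ht)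
  -- if the stack is empty infinitely often, cut at such positions, otherwise at positions to
  -- which `Top` applies
  by_cases hio : ∀ N, ∃ l, N ≤ l ∧ (σ l).length = 0
  · refine ⟨fun m X => m = 1 ∧ ∃ k, X = x k ∧ (σ k).length = 0,
      ⟨rfl, 0, rfl, by rw [hL.s0]; rfl⟩, ?_⟩
    rintro m X ⟨rfl, k, rfl, hk⟩
    obtain ⟨m', l, R, h1, h2, h3⟩ := key 1 k (fun m' l => m' = 1 ∧ (σ l).length = 0) (fun N => by
      obtain ⟨l, h1, h2⟩ := hio N
      exact ⟨l, 1, h1, ⟨rfl, h2⟩, Or.inr (Or.inl ⟨rfl, rfl, hk, h2⟩)⟩)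
    exact ⟨m', x l, R, ⟨h1.1, l, rfl, h1.2⟩, h2, h3⟩
  · push Not at hio
    obtain ⟨N0, hN0⟩ := hio
    -- a position of minimal height among those beyond `N` and `N0`
    have htop : ∀ N, ∃ l, N ≤ l ∧ 1 ≤ (σ l).length ∧ Top σ l := by
      intro N
      classical
      have hex : ∃ b l, max N N0 ≤ l ∧ (σ l).length = b := ⟨_, _, le_rfl, rfl⟩
      obtain ⟨l, h1, h2⟩ := Nat.find_spec hex
      refine ⟨l, by omega, ?_, fun j hj => ?_⟩
      · have := hN0 l (by omega); omega
      · rw [h2]; exact Nat.find_min' hex ⟨j, by omega, rfl⟩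
    refine ⟨fun m X => (m = 1 ∧ ∃ k, X = x k ∧ (σ k).length = 0) ∨
      (m = 2 ∧ ∃ k, X = x k ∧ 1 ≤ (σ k).length ∧ Top σ k),
      Or.inl ⟨rfl, 0, rfl, by rw [hL.s0]; rfl⟩, ?_⟩
    have fin : ∀ m k, (∀ l, 1 ≤ (σ l).length → Top σ l → Cond σ m 2 k l) →
        ∃ m' X' R, ((m' = 1 ∧ ∃ k, X' = x k ∧ (σ k).length = 0) ∨
          (m' = 2 ∧ ∃ k, X' = x k ∧ 1 ≤ (σ k).length ∧ Top σ k)) ∧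
          S.W m (x k) R m' X' ∧ S.live (x k) R := by
      intro m k hc
      obtain ⟨m', l, R, h1, h2, h3⟩ := key m k
        (fun m' l => m' = 2 ∧ 1 ≤ (σ l).length ∧ Top σ l) (fun N => by
          obtain ⟨l, h1, h2, h3⟩ := htop N
          exact ⟨l, 2, h1, ⟨rfl, h2, h3⟩, hc l h2 h3⟩)
      exact ⟨m', x l, R, Or.inr ⟨h1.1, l, rfl, h1.2⟩, h2, h3⟩
    rintro m X (⟨rfl, k, rfl, hk⟩ | ⟨rfl, k, rfl, hk, hk'⟩)
    · exact fin 1 k (fun l h1 h2 => Or.inr (Or.inr (Or.inr ⟨rfl, rfl, hk, h2, h1⟩)))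
    · exact fin 2 k (fun l h1 h2 => Or.inr (Or.inr (Or.inl ⟨rfl, rfl, hk, hk', h2⟩)))

end VMC

/-! ### The bounded form of the criterion -/

namespace VMC

variable {S : Sys}

/-- The bit of index `i` of `n`, as a proposition; numbers serve as codes of finite sets. -/
def bt (n i : ℕ) : Prop := n.testBit i = true

/-- The code of a summary. -/
def tup (m X R mₑ Xₑ : ℕ) : ℕ :=
  Nat.pair m (Nat.pair X (Nat.pair R (Nat.pair mₑ Xₑ)))

/-- One step in the derivation of the summary `(m, X, R, mₑ, Xₑ)`, with premises in the set `E`. -/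
def Sys.Der (S : Sys) (E m X R mₑ Xₑ : ℕ) : Prop :=
  (S.IdR R ∧ mₑ = m ∧ Xₑ = X) ∨
  (∃ m1 < 3, ∃ X1 < S.K, S.mode m X m1 ∧ S.s1b X X1 ∧
    ∃ Rₑ < S.K, bt E (tup m1 X1 Rₑ mₑ Xₑ) ∧ S.Sim X X1 Rₑ R) ∨
  (∃ X2 < S.K, ∃ Ri < S.K, ∃ X3 < S.K, bt E (tup 0 X2 Ri 0 X3) ∧
    ∃ X1 < S.K, ∃ Rₑ < S.K, bt E (tup m X1 Rₑ mₑ Xₑ) ∧ S.Blk X X2 Ri X3 X1 Rₑ R)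

/-- The set `E` is closed under the rules that generate the summaries. -/
def Sys.Closed (S : Sys) (E : ℕ) : Prop :=
  ∀ m < 3, ∀ X < S.K, ∀ R < S.K, ∀ mₑ < 3, ∀ Xₑ < S.K,
    S.V X ∧ S.Der E m X R mₑ Xₑ → bt E (tup m X R mₑ Xₑ)

/-- The relation `Sys.W` in bounded form: membership in all closed sets. Codes of summaries are below
`K ^ 16`, so that sets below `2 ^ (K ^ 16)` suffice. -/
def Sys.Wd (S : Sys) (m X R mₑ Xₑ : ℕ) : Prop :=
  ∀ E < 2 ^ (S.K ^ 16), S.Closed E → bt E (tup m X R mₑ Xₑ)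

/-- The decision criterion: there is a finite set `G` of pairs (mode, letter), containing an initial
letter in mode `1`, in which every pair is continued by a live summary to a pair in `G`. -/
def Sys.Bad (S : Sys) (Init : ℕ → Prop) : Prop :=
  ∃ G < 2 ^ (S.K ^ 2), (∃ X < S.K, Init X ∧ bt G (Nat.pair 1 X)) ∧
    ∀ m < 3, ∀ X < S.K, bt G (Nat.pair m X) →
      ∃ m' < 3, ∃ X' < S.K, bt G (Nat.pair m' X') ∧
        ∃ R < S.K, S.live X R ∧ S.Wd m X R m' X'

theorem pair_lt {a b c : ℕ} (ha : a < c) (hb : b < c) : Nat.pair a b < c ^ 2 :=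
  (Nat.pair_lt_max_add_one_sq a b).trans_le (Nat.pow_le_pow_left (by omega) 2)

/-- Each pairing at most squares the bound, whence the exponent `16`. -/
theorem tup_lt (h3 : 3 ≤ S.K) {m X R m' X' : ℕ} (hm : m < 3) (hX : X < S.K) (hR : R < S.K)
    (hm' : m' < 3) (hX' : X' < S.K) : tup m X R m' X' < S.K ^ 16 := by
  have hk : ∀ n, S.K ≤ S.K ^ (n + 1) := fun n => Nat.le_self_pow (by omega) _
  have h1 : Nat.pair m' X' < S.K ^ 2 := pair_lt (by omega) hX'
  have h2 : Nat.pair R (Nat.pair m' X') < (S.K ^ 2) ^ 2 := pair_lt (hR.trans_le (hk 1)) h1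
  rw [← pow_mul] at h2
  have h4 := pair_lt (hX.trans_le (hk 3)) h2
  rw [← pow_mul] at h4
  have h5 := pair_lt (show m < S.K ^ 8 from (hm.trans_le h3).trans_le (hk 7)) h4
  rwa [← pow_mul] at h5

/-- Closed sets contain all summaries. -/
theorem closed_W {E m X R m' X' : ℕ} (hE : S.Closed E) (h : S.W m X R m' X') (hK : ∀ X, S.V X → X < S.K) :
    bt E (tup m X R m' X') := by
  induction h with
  | nil h1 h2 h3 h4 =>
    exact hE _ h1 _ (hK _ h2) _ h3 _ h1 _ (hK _ h2) ⟨h2, Or.inl ⟨h4, rfl, rfl⟩⟩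
  | sim h1 h2 h3 h4 h5 h6 h7 ih =>
    have b := W_bd h6
    exact hE _ h1 _ (hK _ h2) _ h3 _ b.2.2.2.1 _ (hK _ b.2.2.2.2)
      ⟨h2, Or.inr (Or.inl ⟨_, b.1, _, hK _ b.2.1, h4, h5, _, b.2.2.1, ih, h7⟩)⟩
  | blk h1 h2 h3 h4 h5 h6 ih1 ih2 =>
    have b := W_bd h5
    have c := W_bd h4
    exact hE _ h1 _ (hK _ h2) _ h3 _ b.2.2.2.1 _ (hK _ b.2.2.2.2)
      ⟨h2, Or.inr (Or.inr ⟨_, hK _ c.2.1, _, c.2.2.1, _, hK _ c.2.2.2.2, ih1, _, hK _ b.2.1, _,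
        b.2.2.1, ih2, h6⟩)⟩

/-- The set of all summaries is itself closed and has a code, so `Sys.Wd` and `Sys.W` agree. -/
theorem Wd_iff (hS : S.Ok) (h3 : 3 ≤ S.K) {m X R m' X' : ℕ} (hm : m < 3) (hX : X < S.K)
    (hR : R < S.K) (hm' : m' < 3) (hX' : X' < S.K) : S.Wd m X R m' X' ↔ S.W m X R m' X' := by
  refine ⟨fun h => ?_, fun h E _ hc => closed_W hc h hS.hV⟩
  obtain ⟨E, hE, hEb⟩ := exists_mask (S.K ^ 16) (fun i => ∃ m X R m' X', i = tup m X R m' X' ∧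
    S.W m X R m' X')
  have key : ∀ {m X R m' X'}, m < 3 → X < S.K → R < S.K → m' < 3 → X' < S.K →
      (bt E (tup m X R m' X') ↔ S.W m X R m' X') := by
    intro m X R m' X' h1 h2 h4 h5 h6
    unfold bt
    rw [hEb _ (tup_lt h3 h1 h2 h4 h5 h6)]
    constructor
    · rintro ⟨m1, X1, R1, m1', X1', e, hW⟩
      simp only [tup, Nat.pair_eq_pair] at e
      obtain ⟨rfl, rfl, rfl, rfl, rfl⟩ := e
      exact hW
    · intro hW; exact ⟨_, _, _, _, _, rfl, hW⟩
  refine (key hm hX hR hm' hX').1 (h E hE ?_)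
  rintro m hm X hX R hR m' hm' X' hX' ⟨hV, hD⟩
  rw [key hm hX hR hm' hX']
  rcases hD with ⟨h1, rfl, rfl⟩ | ⟨m1, h1, X1, h2, h4, h5, R', h6, h7, h8⟩ |
    ⟨X2, h1, Ri, h2, X3, h4, h5, X1, h6, R', h7, h8, h9⟩
  · exact .nil hm hV hR h1
  · exact .sim hm hV hR h4 h5 ((key h1 h2 h6 hm' hX').1 h7) h8
  · exact .blk hm hV hR ((key (by omega) h1 h2 (by omega) h4).1 h5)
      ((key hm h6 h7 hm' hX').1 h8) h9

/-- The criterion holds if and only if there is a consistent annotated word. -/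
theorem Bad_iff (hS : S.Ok) (h3 : 3 ≤ S.K) {Init : ℕ → Prop} :
    S.Bad Init ↔ ∃ x σ, Lhs S Init x σ := by
  have hp : ∀ {m X}, m < 3 → X < S.K → Nat.pair m X < S.K ^ 2 := fun h1 h2 =>
    pair_lt (by omega) h2
  constructor
  · rintro ⟨G, _, ⟨X0, h0, hI, hG0⟩, h⟩
    refine rhs_lhs hS (G := fun m X => m < 3 ∧ X < S.K ∧ bt G (Nat.pair m X)) hI
      ⟨by omega, h0, hG0⟩ ?_
    rintro m X ⟨hm, hX, hG⟩
    obtain ⟨m', hm', X', hX', hG', R, hR, hl, hW⟩ := h m hm X hX hG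
    exact ⟨m', X', R, ⟨hm', hX', hG'⟩, (Wd_iff hS h3 hm hX hR hm' hX').1 hW, hl⟩
  · rintro ⟨x, σ, hL⟩
    obtain ⟨G, hG0, hG⟩ := lhs_rhs hS hL
    obtain ⟨E, hE, hEb⟩ := exists_mask (S.K ^ 2) (fun i => ∃ m X, i = Nat.pair m X ∧ G m X)
    have key : ∀ {m X}, m < 3 → X < S.K → (bt E (Nat.pair m X) ↔ G m X) := by
      intro m X h1 h2
      unfold bt
      rw [hEb _ (hp h1 h2)]
      constructor
      · rintro ⟨m1, X1, e, h⟩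
        simp only [Nat.pair_eq_pair] at e
        obtain ⟨rfl, rfl⟩ := e
        exact h
      · intro h; exact ⟨_, _, rfl, h⟩
    have hx0 := hS.hV _ (hL.val 0)
    refine ⟨E, hE, ⟨x 0, hx0, hL.init, (key (by omega) hx0).2 hG0⟩, fun m hm X hX h => ?_⟩
    obtain ⟨m', X', R, h1, h2, h4⟩ := hG m X ((key hm hX).1 h)
    have b := W_bd h2
    have hX' := hS.hV _ b.2.2.2.2
    exact ⟨m', b.2.2.2.1, X', hX', (key b.2.2.2.1 hX').2 h1, R, b.2.2.1, h4,
      (Wd_iff hS h3 hm hX b.2.2.1 b.2.2.2.1 hX').2 h2⟩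

end VMC

/-! ### The instance attached to an encoded model checking problem -/

namespace VMC

/-- First component of a pair of natural numbers. -/
def u1 (n : ℕ) : ℕ := n.unpair.1
/-- Second component of a pair of natural numbers. -/
def u2 (n : ℕ) : ℕ := n.unpair.2

/-- The entry of index `i` of the list of numbers coded by `c`, and `0` beyond its end. -/
def lk (c i : ℕ) : ℕ := (Denumerable.ofNat (List ℕ) c).getD i 0

/-- The kind of the letter `a` according to the coded list `kc` of kinds. -/
def kdf (kc a : ℕ) : SymKind :=
  if lk kc a = 0 then .call else if lk kc a = 1 then .ret else .loc

/-- The code of an automaton or system without its two size components. -/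
def tl2 (c : ℕ) : ℕ := u2 (u2 c)
/-- The table of call transitions in the code of an automaton or system. Both kinds of codes hold the
tables for calls, returns and returns on `⊥` at the same places. -/
def tCal (c q a qₑ g : ℕ) : Prop := lk (lk (lk (lk (u1 (tl2 c)) q) a) qₑ) g = 1
/-- The table of return transitions. -/
def tRet (c q a g qₑ : ℕ) : Prop := lk (lk (lk (lk (u1 (u2 (tl2 c))) q) a) g) qₑ = 1
/-- The table of return transitions on `⊥`. -/
def tRtb (c q a qₑ : ℕ) : Prop := lk (lk (lk (u1 (u2 (u2 (tl2 c)))) q) a) qₑ = 1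
/-- The table of local transitions in the code of an automaton. -/
def tLcl (c q a qₑ : ℕ) : Prop := lk (lk (lk (u1 (u2 (u2 (u2 (tl2 c))))) q) a) qₑ = 1
/-- The table of local transitions in the code of a system, where it is the last component. -/
def tLclS (c q a qₑ : ℕ) : Prop := lk (lk (lk (u2 (u2 (u2 (tl2 c)))) q) a) qₑ = 1
/-- The table of initial states of an automaton. -/
def tStart (c q : ℕ) : Prop := lk (u1 (u2 (u2 (u2 (u2 (tl2 c)))))) q = 1
/-- The table of final states of an automaton. -/
def tFinal (c q : ℕ) : Prop := lk (u2 (u2 (u2 (u2 (u2 (tl2 c)))))) q = 1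

/-- The code of the guard in the code `x` of a guarded formula. -/
def gA (x : ℕ) : ℕ := u1 (u2 x)
/-- The coded list of the tests of the guard in the code `x` of a guarded formula. -/
def gT (x : ℕ) : ℕ := u1 (u2 (u2 x))
/-- The code of the body in the code `x` of a guarded formula. -/
def gBody (x : ℕ) : ℕ := u2 (u2 (u2 x))

/-- The test at the guard state `y` holds. Here `y` is a pair `(x, q)` of the code of a guarded formula
and a state of its guard, and `F` is the set of codes of formulas true at the current position. The
tags `0` to `3` are those of atoms and Boolean connectives, hence the bound `4`. -/
def okG (F : ℕ → Prop) (y : ℕ) : Prop :=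
  4 ≤ u1 (u1 y) ∧ lk (gT (u1 y)) (u2 y) < u1 y ∧ F (lk (gT (u1 y)) (u2 y))

/-- The guard may stop in `y`: its test holds, the state is final, and the body is true for a diamond
(tag `4`), false for a box. A box is thus handled through the negated diamond. -/
def doneG (F : ℕ → Prop) (y : ℕ) : Prop :=
  okG F y ∧ tFinal (gA (u1 y)) (u2 y) ∧ gBody (u1 y) < u1 y ∧
    (u1 (u1 y) = 4 ↔ F (gBody (u1 y)))

/-- From `y` the universal guard automaton may move to the sink `0`. The state `1` always may. -/
def finG (F : ℕ → Prop) (y : ℕ) : Prop := y = 0 ∨ y = 1 ∨ doneG F y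

/-- `y'` belongs to the same guard as `y`; the bound on its state component keeps guard states finite. -/
def stay (y y' : ℕ) : Prop := u1 y' = u1 y ∧ u2 y' ≤ u1 y

/-- The universal guard automaton: it simulates all guards at once, on states `(x, q)` with `x` the code
of a guarded formula, and moves to the sink `0` from the states in which the guard may stop. The
functions `a` and `F` extract from a letter the underlying letter and the set of true formula codes. -/
def gv (a : ℕ → ℕ) (F : ℕ → ℕ → Prop) : VP where
  cal x y yₑ g := (finG (F x) y ∧ yₑ = 0 ∧ g = 0) ∨
    (okG (F x) y ∧ stay y yₑ ∧ g ≤ u1 y ∧ tCal (gA (u1 y)) (u2 y) (a x) (u2 yₑ) g)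
  ret x g y yₑ := (finG (F x) y ∧ yₑ = 0) ∨
    (okG (F x) y ∧ stay y yₑ ∧ tRet (gA (u1 y)) (u2 y) (a x) g (u2 yₑ))
  rtb x y yₑ := (finG (F x) y ∧ yₑ = 0) ∨
    (okG (F x) y ∧ stay y yₑ ∧ tRtb (gA (u1 y)) (u2 y) (a x) (u2 yₑ))
  lcl x y yₑ := (finG (F x) y ∧ yₑ = 0) ∨
    (okG (F x) y ∧ stay y yₑ ∧ tLcl (gA (u1 y)) (u2 y) (a x) (u2 yₑ))

/-- The truth of the formula code `x`, computed from the letter `a`, the truth values `F` of smaller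
codes, and the guard states `τ` from which the sink is reached. -/
def lab (a : ℕ) (F τ : ℕ → Prop) (x : ℕ) : Prop :=
  (u1 x = 0 ∧ bt a (u2 x)) ∨
  (u1 x = 1 ∧ u2 x < x ∧ ¬ F (u2 x)) ∨
  (u1 x = 2 ∧ (u1 (u2 x) < x ∧ F (u1 (u2 x))) ∧ u2 (u2 x) < x ∧ F (u2 (u2 x))) ∨
  (u1 x = 3 ∧ ((u1 (u2 x) < x ∧ F (u1 (u2 x))) ∨ (u2 (u2 x) < x ∧ F (u2 (u2 x))))) ∨
  (4 ≤ u1 x ∧ (u1 x = 4 ↔ ∃ q < x + 1, tStart (gA x) q ∧ τ (Nat.pair x q)))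

/-- The number of propositions of an instance. -/
def zp (z : ℕ) : ℕ := u1 z
/-- The coded list of kinds of an instance. -/
def zk (z : ℕ) : ℕ := u1 (u2 z)
/-- The code of the system of an instance. -/
def zs (z : ℕ) : ℕ := u1 (u2 (u2 z))
/-- The initial state of an instance. -/
def zq (z : ℕ) : ℕ := u1 (u2 (u2 (u2 z)))
/-- The code of the formula of an instance. -/
def zf (z : ℕ) : ℕ := u2 (u2 (u2 (u2 z)))

/-- A strict bound for the states and stack symbols of the universal guard automaton. -/
def zB (z : ℕ) : ℕ := (zf z + 2) ^ 2
/-- A strict bound for the components of annotated letters. -/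
def zD (z : ℕ) : ℕ := zs z + 2 ^ zp z + 2 ^ zB z + 3
/-- A strict bound for annotated letters, and for codes of relations on guard states. -/
def zK (z : ℕ) : ℕ := zD z ^ 4 + 2 ^ (zB z * zB z)

/-- The state of the system held by an annotated letter. -/
def sX (X : ℕ) : ℕ := u1 (u1 X)
/-- The letter underlying an annotated letter. -/
def aX (X : ℕ) : ℕ := u2 (u1 X)
/-- The set of true formula codes held by an annotated letter. -/
def fX (X : ℕ) : ℕ := u1 (u2 X)
/-- The set of claimed guard states held by an annotated letter. -/
def tX (X : ℕ) : ℕ := u2 (u2 X)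

/-- The system of an instance, with annotated letters as states: the annotated letter to be read holds
the current state, and the target state is the one held by the next annotated letter. -/
def sv (z : ℕ) : VP where
  cal x s sₑ g := s = x ∧ g < zK z ∧ tCal (zs z) (sX s) (aX x) (sX sₑ) g
  ret x g s sₑ := s = x ∧ tRet (zs z) (sX s) (aX x) g (sX sₑ)
  rtb x s sₑ := s = x ∧ tRtb (zs z) (sX s) (aX x) (sX sₑ)
  lcl x s sₑ := s = x ∧ tLclS (zs z) (sX s) (aX x) (sX sₑ)

/-- The annotated letter `X` is admissible: its truth values are those computed by `lab`, and it claims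
the guard states `0` and `1`. -/
def zV (z X : ℕ) : Prop :=
  X < zK z ∧ aX X < 2 ^ zp z ∧
    (∀ x < zf z + 1, (bt (fX X) x ↔ lab (aX X) (bt (fX X)) (bt (tX X)) x)) ∧
    bt (tX X) 0 ∧ bt (tX X) 1

/-- The annotated letter `X` may come first: it holds the initial state, and the formula is false. -/
def zI (z X : ℕ) : Prop := sX X = zq z ∧ ¬ bt (fX X) (zf z)

/-- The data attached to an instance `z`. -/
def sysOf (z : ℕ) : Sys where
  B := zB z
  K := zK z
  kd X := kdf (zk z) (aX X)
  Gd := gv aX (fun X => bt (fX X))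
  Sy := sv z
  tau X y := bt (tX X) y
  V := zV z

theorem u_pair (n : ℕ) : Nat.pair (u1 n) (u2 n) = n := Nat.pair_unpair n
@[simp] theorem u1_pair (a b : ℕ) : u1 (Nat.pair a b) = a := by simp [u1]
@[simp] theorem u2_pair (a b : ℕ) : u2 (Nat.pair a b) = b := by simp [u2]

theorem lt_zB {z y : ℕ} : y < zB z ↔ u1 y < zf z + 2 ∧ u2 y < zf z + 2 := by
  unfold zB
  constructor
  · intro h
    have h1 := Nat.max_sq_add_min_le_pair (u1 y) (u2 y)
    rw [u_pair] at h1
    have h2 : max (u1 y) (u2 y) ^ 2 < (zf z + 2) ^ 2 := by omega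
    have := lt_of_pow_lt_pow_left₀ 2 (by omega) h2
    omega
  · rintro ⟨h1, h2⟩
    rw [← u_pair y]
    exact pair_lt h1 h2

theorem stay_lt {z y y' : ℕ} (h : stay y y') (hy : y < zB z) : y' < zB z := by
  rw [lt_zB] at *
  obtain ⟨h1, h2⟩ := h
  omega

theorem zB_pos (z : ℕ) : 1 < zB z := by
  unfold zB; nlinarith [Nat.zero_le (zf z)]

theorem sysOf_ok (z : ℕ) : (sysOf z).Ok where
  hK := by simp [sysOf, zK]
  hV X h := h.1
  tau0 X h := h.2.2.2.1
  tau1 X h := h.2.2.2.2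
  two := zB_pos z
  gcal x y y' g h hy := by
    change y < zB z at hy
    change y' < zB z ∧ g < zB z
    have := zB_pos z
    rcases h with ⟨_, rfl, rfl⟩ | ⟨_, h, hg, _⟩
    · omega
    · exact ⟨stay_lt h hy, (hg.trans (Nat.unpair_left_le y)).trans_lt hy⟩
  gret x y y' g h hy := by
    have := zB_pos z
    rcases h with ⟨_, rfl⟩ | ⟨_, h, _⟩
    · change 0 < zB z; omega
    · exact stay_lt h hy
  grtb x y y' h hy := by
    have := zB_pos z
    rcases h with ⟨_, rfl⟩ | ⟨_, h, _⟩
    · change 0 < zB z; omega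
    · exact stay_lt h hy
  glcl x y y' h hy := by
    have := zB_pos z
    rcases h with ⟨_, rfl⟩ | ⟨_, h, _⟩
    · change 0 < zB z; omega
    · exact stay_lt h hy
  scal x s s' g h := ⟨h.1, h.2.1⟩
  sret x s s' g h := h.1
  srtb x s s' h := h.1
  slcl x s s' h := h.1
  sink_cal x := Or.inl ⟨Or.inl rfl, rfl, rfl⟩
  sink_ret x g := Or.inl ⟨Or.inl rfl, rfl⟩
  sink_rtb x := Or.inl ⟨Or.inl rfl, rfl⟩
  sink_lcl x := Or.inl ⟨Or.inl rfl, rfl⟩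

theorem zK3 (z : ℕ) : 3 ≤ zK z := by
  have h1 : 3 ≤ zD z := Nat.le_add_left 3 _
  have h2 : zD z ≤ zD z ^ 4 := Nat.le_self_pow (by omega) _
  exact (h1.trans h2).trans (Nat.le_add_right _ _)

/-- The decision criterion for the existence of a trace of the system that violates the formula. -/
def Bad (z : ℕ) : Prop := (sysOf z).Bad (zI z)

/-- The criterion for an instance holds if and only if a consistent annotated word exists. -/
theorem Bad_iff_lhs (z : ℕ) : Bad z ↔ ∃ x σ, Lhs (sysOf z) (zI z) x σ :=
  Bad_iff (sysOf_ok z) (zK3 z)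

end VMC

/-! ### Primitive recursive functions and predicates -/

namespace VMC

/-- `Primrec`, under a name for which the closure lemmas can be used by `fun_prop`. -/
@[fun_prop] def PF {α β : Type} [Primcodable α] [Primcodable β] (f : α → β) : Prop := Primrec f
/-- `PrimrecPred`, under a name for which the closure lemmas can be used by `fun_prop`. Implications and
bounded universal quantifiers, being function types themselves, are outside the reach of `fun_prop`;
`PD.imp` and `PD.all` are applied explicitly. -/
@[fun_prop] def PD {α : Type} [Primcodable α] (p : α → Prop) : Prop := PrimrecPred p

section basic
variable {α β γ : Type} [Primcodable α] [Primcodable β] [Primcodable γ]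

@[fun_prop] theorem PF.id : PF (fun v : α => v) := Primrec.id
@[fun_prop] theorem PF.const (n : β) : PF (fun _ : α => n) := Primrec.const n
@[fun_prop] theorem PF.comp {f : β → γ} {g : α → β} (hf : PF f) (hg : PF g) :
    PF (fun v => f (g v)) := Primrec.comp hf hg
@[fun_prop] theorem PF.fst {g : α → β × γ} (hg : PF g) : PF (fun v => (g v).1) :=
  Primrec.comp .fst hg
@[fun_prop] theorem PF.snd {g : α → β × γ} (hg : PF g) : PF (fun v => (g v).2) :=
  Primrec.comp .snd hg
@[fun_prop] theorem PF.add {f g : α → ℕ} (hf : PF f) (hg : PF g) : PF (fun v => f v + g v) :=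
  Primrec.nat_add.comp hf hg
@[fun_prop] theorem PF.mul {f g : α → ℕ} (hf : PF f) (hg : PF g) : PF (fun v => f v * g v) :=
  Primrec.nat_mul.comp hf hg
@[fun_prop] theorem PF.div {f g : α → ℕ} (hf : PF f) (hg : PF g) : PF (fun v => f v / g v) :=
  Primrec.nat_div.comp hf hg
@[fun_prop] theorem PF.mod {f g : α → ℕ} (hf : PF f) (hg : PF g) : PF (fun v => f v % g v) :=
  Primrec.nat_mod.comp hf hg
@[fun_prop] theorem PF.pair {f g : α → ℕ} (hf : PF f) (hg : PF g) :
    PF (fun v => Nat.pair (f v) (g v)) := Primrec₂.natPair.comp hf hg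
@[fun_prop] theorem PF.pow {f g : α → ℕ} (hf : PF f) (hg : PF g) : PF (fun v => f v ^ g v) := by
  have h : Primrec (fun n : ℕ => n.unpair.1 ^ n.unpair.2) := Primrec.nat_iff.2 Nat.Primrec.pow
  have := h.comp (Primrec₂.natPair.comp hf hg)
  simpa [PF] using this
@[fun_prop] theorem u1_pr {f : α → ℕ} (hf : PF f) : PF (fun v => u1 (f v)) :=
  (Primrec.fst.comp Primrec.unpair).comp hf
@[fun_prop] theorem u2_pr {f : α → ℕ} (hf : PF f) : PF (fun v => u2 (f v)) :=
  (Primrec.snd.comp Primrec.unpair).comp hf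
@[fun_prop] theorem lk_pr {f g : α → ℕ} (hf : PF f) (hg : PF g) : PF (fun v => lk (f v) (g v)) :=
  (Primrec.list_getD 0).comp ((Primrec.ofNat (List ℕ)).comp hf) hg

@[fun_prop] theorem PD.const (n : Prop) : PD (fun _ : α => n) := by
  classical
  exact ⟨_, Primrec.const (decide n)⟩
@[fun_prop] theorem PD.comp {f : β → Prop} {g : α → β} (hf : PD f) (hg : PF g) :
    PD (fun v => f (g v)) := PrimrecPred.comp hf hg
@[fun_prop] theorem PD.and {f g : α → Prop} (hf : PD f) (hg : PD g) : PD (fun v => f v ∧ g v) :=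
  PrimrecPred.and hf hg
@[fun_prop] theorem PD.or {f g : α → Prop} (hf : PD f) (hg : PD g) : PD (fun v => f v ∨ g v) :=
  PrimrecPred.or hf hg
@[fun_prop] theorem PD.not {f : α → Prop} (hf : PD f) : PD (fun v => ¬ f v) :=
  PrimrecPred.not hf
theorem PD.imp {f g : α → Prop} (hf : PD f) (hg : PD g) : PD (fun v => f v → g v) :=
  (hf.not.or hg).of_eq fun _ => (imp_iff_not_or).symm
@[fun_prop] theorem PD.iff {f g : α → Prop} (hf : PD f) (hg : PD g) : PD (fun v => f v ↔ g v) :=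
  ((hf.imp hg).and (hg.imp hf)).of_eq fun _ => iff_def.symm
@[fun_prop] theorem PD.lt {f g : α → ℕ} (hf : PF f) (hg : PF g) : PD (fun v => f v < g v) :=
  Primrec.nat_lt.comp hf hg
@[fun_prop] theorem PD.le {f g : α → ℕ} (hf : PF f) (hg : PF g) : PD (fun v => f v ≤ g v) :=
  Primrec.nat_le.comp hf hg
@[fun_prop] theorem PD.eq {f g : α → ℕ} (hf : PF f) (hg : PF g) : PD (fun v => f v = g v) :=
  Primrec.eq.comp hf hg
/-- Bounded existential quantification, with a primitive recursive bound. -/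
@[fun_prop] theorem PD.ex {f : α → ℕ} {p : α → ℕ → Prop} (hf : PF f)
    (hp : PD fun w : α × ℕ => p w.1 w.2) : PD fun v => ∃ x, x < f v ∧ p v x := by
  have h : PrimrecRel (fun (x : ℕ) (v : α) => p v x) :=
    PrimrecPred.comp hp (Primrec.pair .snd .fst)
  exact (PrimrecRel.comp h.exists_mem_list (Primrec.list_range.comp hf)
    (show Primrec (fun v : α => v) from Primrec.id)).of_eq (by simp)
/-- Bounded universal quantification, with a primitive recursive bound. -/
theorem PD.all {f : α → ℕ} {p : α → ℕ → Prop} (hf : PF f)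
    (hp : PD fun w : α × ℕ => p w.1 w.2) : PD fun v => ∀ x, x < f v → p v x := by
  have h : PrimrecRel (fun (x : ℕ) (v : α) => p v x) :=
    PrimrecPred.comp hp (Primrec.pair .snd .fst)
  exact (PrimrecRel.comp h.forall_mem_list (Primrec.list_range.comp hf)
    (show Primrec (fun v : α => v) from Primrec.id)).of_eq (by simp)

@[fun_prop] theorem bt_pr {f g : α → ℕ} (hf : PF f) (hg : PF g) : PD (fun v => bt (f v) (g v)) := by
  have : PD (fun v => f v / 2 ^ g v % 2 = 1) := by fun_prop
  refine this.of_eq fun v => ?_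
  simp [bt, Nat.testBit_eq_decide_div_mod_eq]

end basic
end VMC

/-! ### Primitive recursiveness of the criterion -/

namespace VMC

section preds
variable {α : Type} [Primcodable α]

@[fun_prop] theorem gA_pr {f : α → ℕ} (hf : PF f) : PF (fun v => gA (f v)) := by unfold gA; fun_prop
@[fun_prop] theorem gT_pr {f : α → ℕ} (hf : PF f) : PF (fun v => gT (f v)) := by unfold gT; fun_prop
@[fun_prop] theorem gBody_pr {f : α → ℕ} (hf : PF f) : PF (fun v => gBody (f v)) := by
  unfold gBody; fun_prop
@[fun_prop] theorem tl2_pr {f : α → ℕ} (hf : PF f) : PF (fun v => tl2 (f v)) := by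
  unfold tl2; fun_prop
@[fun_prop] theorem sX_pr {f : α → ℕ} (hf : PF f) : PF (fun v => sX (f v)) := by unfold sX; fun_prop
@[fun_prop] theorem aX_pr {f : α → ℕ} (hf : PF f) : PF (fun v => aX (f v)) := by unfold aX; fun_prop
@[fun_prop] theorem fX_pr {f : α → ℕ} (hf : PF f) : PF (fun v => fX (f v)) := by unfold fX; fun_prop
@[fun_prop] theorem tX_pr {f : α → ℕ} (hf : PF f) : PF (fun v => tX (f v)) := by unfold tX; fun_prop
@[fun_prop] theorem zp_pr {f : α → ℕ} (hf : PF f) : PF (fun v => zp (f v)) := by unfold zp; fun_prop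
@[fun_prop] theorem zk_pr {f : α → ℕ} (hf : PF f) : PF (fun v => zk (f v)) := by unfold zk; fun_prop
@[fun_prop] theorem zs_pr {f : α → ℕ} (hf : PF f) : PF (fun v => zs (f v)) := by unfold zs; fun_prop
@[fun_prop] theorem zq_pr {f : α → ℕ} (hf : PF f) : PF (fun v => zq (f v)) := by unfold zq; fun_prop
@[fun_prop] theorem zf_pr {f : α → ℕ} (hf : PF f) : PF (fun v => zf (f v)) := by unfold zf; fun_prop
@[fun_prop] theorem zB_pr {f : α → ℕ} (hf : PF f) : PF (fun v => zB (f v)) := by unfold zB; fun_prop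
@[fun_prop] theorem zD_pr {f : α → ℕ} (hf : PF f) : PF (fun v => zD (f v)) := by unfold zD; fun_prop
@[fun_prop] theorem zK_pr {f : α → ℕ} (hf : PF f) : PF (fun v => zK (f v)) := by unfold zK; fun_prop

@[fun_prop] theorem tCal_pr {f g h i j : α → ℕ} (hf : PF f) (hg : PF g) (hh : PF h) (hi : PF i)
    (hj : PF j) : PD (fun v => tCal (f v) (g v) (h v) (i v) (j v)) := by unfold tCal; fun_prop
@[fun_prop] theorem tRet_pr {f g h i j : α → ℕ} (hf : PF f) (hg : PF g) (hh : PF h) (hi : PF i)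
    (hj : PF j) : PD (fun v => tRet (f v) (g v) (h v) (i v) (j v)) := by unfold tRet; fun_prop
@[fun_prop] theorem tRtb_pr {f g h i : α → ℕ} (hf : PF f) (hg : PF g) (hh : PF h) (hi : PF i) :
    PD (fun v => tRtb (f v) (g v) (h v) (i v)) := by unfold tRtb; fun_prop
@[fun_prop] theorem tLcl_pr {f g h i : α → ℕ} (hf : PF f) (hg : PF g) (hh : PF h) (hi : PF i) :
    PD (fun v => tLcl (f v) (g v) (h v) (i v)) := by unfold tLcl; fun_prop
@[fun_prop] theorem tLclS_pr {f g h i : α → ℕ} (hf : PF f) (hg : PF g) (hh : PF h) (hi : PF i) :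
    PD (fun v => tLclS (f v) (g v) (h v) (i v)) := by unfold tLclS; fun_prop
@[fun_prop] theorem tStart_pr {f g : α → ℕ} (hf : PF f) (hg : PF g) :
    PD (fun v => tStart (f v) (g v)) := by unfold tStart; fun_prop
@[fun_prop] theorem tFinal_pr {f g : α → ℕ} (hf : PF f) (hg : PF g) :
    PD (fun v => tFinal (f v) (g v)) := by unfold tFinal; fun_prop
@[fun_prop] theorem stay_pr {f g : α → ℕ} (hf : PF f) (hg : PF g) :
    PD (fun v => stay (f v) (g v)) := by unfold stay; fun_prop

@[fun_prop] theorem okG_pr {f g : α → ℕ} (hf : PF f) (hg : PF g) :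
    PD (fun v => okG (bt (f v)) (g v)) := by unfold okG; fun_prop
@[fun_prop] theorem finG_pr {f g : α → ℕ} (hf : PF f) (hg : PF g) :
    PD (fun v => finG (bt (f v)) (g v)) := by unfold finG doneG; fun_prop
@[fun_prop] theorem lab_pr {f g h i : α → ℕ} (hf : PF f) (hg : PF g) (hh : PF h) (hi : PF i) :
    PD (fun v => lab (f v) (bt (g v)) (bt (h v)) (i v)) := by unfold lab; fun_prop

theorem kdf_call (c a : ℕ) : kdf c a = .call ↔ lk c a = 0 := by unfold kdf; split_ifs <;> simp_all
theorem kdf_ret (c a : ℕ) : kdf c a = .ret ↔ lk c a = 1 := by unfold kdf; split_ifs <;> simp_all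
theorem kdf_loc (c a : ℕ) : kdf c a = .loc ↔ ¬ lk c a = 0 ∧ ¬ lk c a = 1 := by
  unfold kdf; split_ifs <;> simp_all

variable {z f g h i j k l : α → ℕ}

theorem B_eq (z : ℕ) : (sysOf z).B = zB z := rfl
theorem K_eq (z : ℕ) : (sysOf z).K = zK z := rfl
theorem tau_eq (z X y : ℕ) : (sysOf z).tau X y = bt (tX X) y := rfl
theorem V_eq (z X : ℕ) : (sysOf z).V X = zV z X := rfl

/-- The call transitions of the guard automaton of `sysOf`. This and the next seven predicates restate
structure projections as constants, to which closure lemmas for `fun_prop` can be attached. -/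
def gcal (X y yₑ g : ℕ) : Prop := (gv aX (fun X => bt (fX X))).cal X y yₑ g
/-- The return transitions of the guard automaton. -/
def gret (X g y yₑ : ℕ) : Prop := (gv aX (fun X => bt (fX X))).ret X g y yₑ
/-- The transitions of the guard automaton for returns on `⊥`. -/
def grtb (X y yₑ : ℕ) : Prop := (gv aX (fun X => bt (fX X))).rtb X y yₑ
/-- The local transitions of the guard automaton. -/
def glcl (X y yₑ : ℕ) : Prop := (gv aX (fun X => bt (fX X))).lcl X y yₑ
/-- The call transitions of the system. -/
def scal (z X y yₑ g : ℕ) : Prop := (sv z).cal X y yₑ g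
/-- The return transitions of the system. -/
def sret (z X g y yₑ : ℕ) : Prop := (sv z).ret X g y yₑ
/-- The transitions of the system for returns on `⊥`. -/
def srtb (z X y yₑ : ℕ) : Prop := (sv z).rtb X y yₑ
/-- The local transitions of the system. -/
def slcl (z X y y' : ℕ) : Prop := (sv z).lcl X y y'

theorem gcal_eq (z X y y' g : ℕ) : (sysOf z).Gd.cal X y y' g = gcal X y y' g := rfl
theorem gret_eq (z X y y' g : ℕ) : (sysOf z).Gd.ret X y y' g = gret X y y' g := rfl
theorem grtb_eq (z X y y' : ℕ) : (sysOf z).Gd.rtb X y y' = grtb X y y' := rfl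
theorem glcl_eq (z X y y' : ℕ) : (sysOf z).Gd.lcl X y y' = glcl X y y' := rfl
theorem scal_eq (z X y y' g : ℕ) : (sysOf z).Sy.cal X y y' g = scal z X y y' g := rfl
theorem sret_eq (z X y y' g : ℕ) : (sysOf z).Sy.ret X y y' g = sret z X y y' g := rfl
theorem srtb_eq (z X y y' : ℕ) : (sysOf z).Sy.rtb X y y' = srtb z X y y' := rfl
theorem slcl_eq (z X y y' : ℕ) : (sysOf z).Sy.lcl X y y' = slcl z X y y' := rfl

theorem kcall_iff (z X : ℕ) : (sysOf z).kd X = .call ↔ lk (zk z) (aX X) = 0 := kdf_call _ _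
theorem kret_iff (z X : ℕ) : (sysOf z).kd X = .ret ↔ lk (zk z) (aX X) = 1 := kdf_ret _ _
theorem kloc_iff (z X : ℕ) : (sysOf z).kd X = .loc ↔
    ¬ lk (zk z) (aX X) = 0 ∧ ¬ lk (zk z) (aX X) = 1 := kdf_loc _ _
@[fun_prop] theorem gcal_pr (hf : PF f) (hg : PF g) (hh : PF h) (hi : PF i) :
    PD (fun v => gcal (f v) (g v) (h v) (i v)) := by
  simp only [gcal, gv]; fun_prop
@[fun_prop] theorem gret_pr (hf : PF f) (hg : PF g) (hh : PF h) (hi : PF i) :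
    PD (fun v => gret (f v) (g v) (h v) (i v)) := by
  simp only [gret, gv]; fun_prop
@[fun_prop] theorem grtb_pr (hf : PF f) (hg : PF g) (hh : PF h) :
    PD (fun v => grtb (f v) (g v) (h v)) := by
  simp only [grtb, gv]; fun_prop
@[fun_prop] theorem glcl_pr (hf : PF f) (hg : PF g) (hh : PF h) :
    PD (fun v => glcl (f v) (g v) (h v)) := by
  simp only [glcl, gv]; fun_prop
@[fun_prop] theorem scal_pr (hz : PF z) (hf : PF f) (hg : PF g) (hh : PF h) (hi : PF i) :
    PD (fun v => scal (z v) (f v) (g v) (h v) (i v)) := by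
  simp only [scal, sv]; fun_prop
@[fun_prop] theorem sret_pr (hz : PF z) (hf : PF f) (hg : PF g) (hh : PF h) (hi : PF i) :
    PD (fun v => sret (z v) (f v) (g v) (h v) (i v)) := by
  simp only [sret, sv]; fun_prop
@[fun_prop] theorem srtb_pr (hz : PF z) (hf : PF f) (hg : PF g) (hh : PF h) :
    PD (fun v => srtb (z v) (f v) (g v) (h v)) := by
  simp only [srtb, sv]; fun_prop
@[fun_prop] theorem slcl_pr (hz : PF z) (hf : PF f) (hg : PF g) (hh : PF h) :
    PD (fun v => slcl (z v) (f v) (g v) (h v)) := by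
  simp only [slcl, sv]; fun_prop
@[fun_prop] theorem zV_pr (hz : PF z) (hf : PF f) : PD (fun v => zV (z v) (f v)) := by
  simp only [zV]
  have : PD fun v => ∀ x < zf (z v) + 1, (bt (fX (f v)) x ↔
      lab (aX (f v)) (bt (fX (f v))) (bt (tX (f v))) x) :=
    PD.all (by fun_prop) (by fun_prop)
  fun_prop
@[fun_prop] theorem zI_pr (hz : PF z) (hf : PF f) : PD (fun v => zI (z v) (f v)) := by
  unfold zI; fun_prop

@[fun_prop] theorem Rel_pr (hz : PF z) (hf : PF f) (hg : PF g) (hh : PF h) :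
    PD (fun v => (sysOf (z v)).Rel (f v) (g v) (h v)) := by
  have : PD (fun v => bt (f v) (g v * zB (z v) + h v)) := by fun_prop
  exact this
@[fun_prop] theorem blk_pr (hz : PF z) (hf : PF f) (hg : PF g) (hh : PF h) (hi : PF i) (hj : PF j) :
    PD (fun v => (sysOf (z v)).blk (f v) (g v) (h v) (i v) (j v)) := by
  simp only [Sys.blk, B_eq, gcal_eq, gret_eq]; fun_prop
@[fun_prop] theorem r1b_pr (hz : PF z) (hf : PF f) (hg : PF g) (hh : PF h) :
    PD (fun v => (sysOf (z v)).r1b (f v) (g v) (h v)) := by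
  simp only [Sys.r1b, B_eq, kcall_iff, kret_iff, kloc_iff, gcal_eq, grtb_eq, glcl_eq]; fun_prop
@[fun_prop] theorem s1b_pr (hz : PF z) (hf : PF f) (hg : PF g) :
    PD (fun v => (sysOf (z v)).s1b (f v) (g v)) := by
  simp only [Sys.s1b, K_eq, kcall_iff, kret_iff, kloc_iff, scal_eq, srtb_eq, slcl_eq]; fun_prop
@[fun_prop] theorem mode_pr (hz : PF z) (hf : PF f) (hg : PF g) (hh : PF h) :
    PD (fun v => (sysOf (z v)).mode (f v) (g v) (h v)) := by
  simp only [Sys.mode, ne_eq, kcall_iff, kret_iff, kloc_iff]; fun_prop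
@[fun_prop] theorem IdR_pr (hz : PF z) (hf : PF f) :
    PD (fun v => (sysOf (z v)).IdR (f v)) := by
  simp only [Sys.IdR, B_eq]
  exact PD.all (by fun_prop) (PD.all (by fun_prop) (by fun_prop))
@[fun_prop] theorem Sim_pr (hz : PF z) (hf : PF f) (hg : PF g) (hh : PF h) (hi : PF i) :
    PD (fun v => (sysOf (z v)).Sim (f v) (g v) (h v) (i v)) := by
  simp only [Sys.Sim, B_eq, tau_eq]
  exact PD.and (PD.all (by fun_prop) (by fun_prop))
    (PD.all (by fun_prop) (PD.all (by fun_prop) (by fun_prop)))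
@[fun_prop] theorem Blk_pr (hz : PF z) (hf : PF f) (hg : PF g) (hh : PF h) (hi : PF i) (hj : PF j)
    (hk : PF k) (hl : PF l) :
    PD (fun v => (sysOf (z v)).Blk (f v) (g v) (h v) (i v) (j v) (k v) (l v)) := by
  simp only [Sys.Blk, B_eq, K_eq, tau_eq, scal_eq, sret_eq, kcall_iff, kret_iff]
  exact PD.and (by fun_prop) (PD.and (by fun_prop) (PD.and (by fun_prop)
    (PD.and (PD.all (by fun_prop) (by fun_prop)) (PD.and (PD.all (by fun_prop) (by fun_prop))
    (PD.all (by fun_prop) (PD.all (by fun_prop) (by fun_prop)))))))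
@[fun_prop] theorem live_pr (hz : PF z) (hf : PF f) (hg : PF g) :
    PD (fun v => (sysOf (z v)).live (f v) (g v)) := by
  simp only [Sys.live, B_eq, tau_eq]
  exact PD.all (by fun_prop) (PD.imp (by fun_prop) (by fun_prop))
@[fun_prop] theorem tup_pr (hf : PF f) (hg : PF g) (hh : PF h) (hi : PF i) (hj : PF j) :
    PF (fun v => tup (f v) (g v) (h v) (i v) (j v)) := by
  unfold tup; fun_prop
@[fun_prop] theorem Der_pr (hz : PF z) (hf : PF f) (hg : PF g) (hh : PF h) (hi : PF i) (hj : PF j)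
    (hk : PF k) :
    PD (fun v => (sysOf (z v)).Der (f v) (g v) (h v) (i v) (j v) (k v)) := by
  simp only [Sys.Der, K_eq]; fun_prop
@[fun_prop] theorem Closed_pr (hz : PF z) (hf : PF f) :
    PD (fun v => (sysOf (z v)).Closed (f v)) := by
  simp only [Sys.Closed, K_eq, V_eq]
  exact PD.all (by fun_prop) (PD.all (by fun_prop) (PD.all (by fun_prop) (PD.all (by fun_prop)
    (PD.all (by fun_prop) (PD.imp (by fun_prop) (by fun_prop))))))
@[fun_prop] theorem Wd_pr (hz : PF z) (hf : PF f) (hg : PF g) (hh : PF h) (hi : PF i) (hj : PF j) :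
    PD (fun v => (sysOf (z v)).Wd (f v) (g v) (h v) (i v) (j v)) := by
  simp only [Sys.Wd, K_eq]
  exact PD.all (by fun_prop) (PD.imp (by fun_prop) (by fun_prop))

end preds

/-- All quantifiers in the criterion have primitive recursive bounds. -/
theorem Bad_pr : PD Bad := by
  unfold Bad
  simp only [Sys.Bad, K_eq]
  refine PD.ex (by fun_prop) (PD.and (by fun_prop) ?_)
  refine PD.all (by fun_prop) (PD.all (by fun_prop) (PD.imp (by fun_prop) (by fun_prop)))

theorem computable_notBad : ∃ f : ℕ → Bool, Computable f ∧ ∀ z, f z = true ↔ ¬ Bad z := by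
  obtain ⟨_, h⟩ := PrimrecPred.not Bad_pr
  exact ⟨_, h.to_comp, fun z => by simp⟩

end VMC

/-! ### Reading the encodings -/

namespace VMC

/-- The code of a list over an encodable type is the code of the list of the codes of its entries. -/
theorem enc_list {β : Type} [Encodable β] (l : List β) :
    Encodable.encode l = Encodable.encode (l.map Encodable.encode) := by
  induction l with
  | nil => rfl
  | cons a l ih => simp only [List.map_cons, Encodable.encode_list_cons, ih, Encodable.encode_nat]

theorem lk_nat (l : List ℕ) (i : ℕ) : lk (Encodable.encode l) i = l.getD i 0 := by
  unfold lk; rw [Denumerable.ofNat_encode]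

theorem lk_ofFn {β : Type} [Encodable β] {n : ℕ} (f : Fin n → β) (i : ℕ) :
    lk (Encodable.encode (List.ofFn f)) i = if h : i < n then Encodable.encode (f ⟨i, h⟩) else 0 := by
  rw [enc_list, lk_nat]
  split_ifs with h
  · simp [List.getD, h]
  · simp [List.getD, h]

theorem lk_ofFn_lt {β : Type} [Encodable β] {n : ℕ} (f : Fin n → β) (i : Fin n) :
    lk (Encodable.encode (List.ofFn f)) i.val = Encodable.encode (f i) := by
  rw [lk_ofFn, dif_pos i.2]

theorem lk_ofFn_dom {β : Type} [Encodable β] {n : ℕ} (f : Fin n → β) {i : ℕ}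
    (h : lk (Encodable.encode (List.ofFn f)) i ≠ 0) : i < n := by
  by_contra hn; exact h (by rw [lk_ofFn, dif_neg hn])

/-- The entries of a list, the indices of its nonzero entries, and its length are bounded by its code. -/
theorem getD_lt (l : List ℕ) : ∀ i, l.getD i 0 ≤ Encodable.encode l ∧
    (l.getD i 0 ≠ 0 → i < Encodable.encode l) ∧ l.length ≤ Encodable.encode l := by
  induction l with
  | nil => intro i; simp
  | cons a l ih =>
    intro i
    have h1 := Nat.left_le_pair a (Encodable.encode l)
    have h2 := Nat.right_le_pair a (Encodable.encode l)
    simp only [Encodable.encode_list_cons, Encodable.encode_nat]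
    have h3 := (ih 0).2.2
    refine ⟨?_, ?_, by simp; omega⟩
    · cases i with
      | zero => simp; omega
      | succ i => have := (ih i).1; simp at this ⊢; omega
    · cases i with
      | zero => intro _; omega
      | succ i => have := (ih i).2.1; simp at this ⊢; intro h; have := this h; omega

theorem lk_le (c i : ℕ) : lk c i ≤ c := by
  have := (getD_lt (Denumerable.ofNat (List ℕ) c) i).1
  rwa [Denumerable.encode_ofNat] at this

theorem lk_idx {c i : ℕ} (h : lk c i ≠ 0) : i < c := by
  have := (getD_lt (Denumerable.ofNat (List ℕ) c) i).2.1 h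
  rwa [Denumerable.encode_ofNat] at this

theorem u1_le (n : ℕ) : u1 n ≤ n := Nat.unpair_left_le n
theorem u2_le (n : ℕ) : u2 n ≤ n := Nat.unpair_right_le n

theorem lk0 (i : ℕ) : lk 0 i = 0 := by have := lk_le 0 i; omega

theorem lk_ofFn_iff {β : Type} [Encodable β] {n : ℕ} (f : Fin n → β) (i : ℕ) (P : ℕ → Prop)
    (h0 : ¬ P 0) : P (lk (Encodable.encode (List.ofFn f)) i) ↔
      ∃ h : i < n, P (Encodable.encode (f ⟨i, h⟩)) := by
  rw [lk_ofFn]; split_ifs with h <;> simp [h, h0]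

/-- Looking up a coded table of Booleans. The default value `0` is the code of `false`, so indices out
of range read as `false`. The next three lemmas treat tables of two, three and four indices. -/
theorem lt1 {n : ℕ} (f : Fin n → Bool) (i : ℕ) :
    lk (Encodable.encode (List.ofFn f)) i = 1 ↔ ∃ h : i < n, f ⟨i, h⟩ = true := by
  rw [lk_ofFn_iff f i (· = 1) (by simp)]
  exact exists_congr fun h => by cases f ⟨i, h⟩ <;> simp

theorem lt2 {n m : ℕ} (f : Fin n → Fin m → Bool) (i j : ℕ) :
    lk (lk (Encodable.encode (List.ofFn fun i => List.ofFn (f i))) i) j = 1 ↔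
      ∃ (h : i < n) (h' : j < m), f ⟨i, h⟩ ⟨j, h'⟩ = true := by
  rw [lk_ofFn_iff _ i (fun c => lk c j = 1) (by simp [lk0])]
  exact exists_congr fun h => lt1 _ _

theorem lt3 {n m l : ℕ} (f : Fin n → Fin m → Fin l → Bool) (i j k : ℕ) :
    lk (lk (lk (Encodable.encode (List.ofFn fun i => List.ofFn fun j => List.ofFn (f i j))) i) j) k
      = 1 ↔ ∃ (h : i < n) (h' : j < m) (h'' : k < l), f ⟨i, h⟩ ⟨j, h'⟩ ⟨k, h''⟩ = true := by
  rw [lk_ofFn_iff _ i (fun c => lk (lk c j) k = 1) (by simp [lk0])]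
  exact exists_congr fun h => lt2 _ _ _

theorem lt4 {n m l r : ℕ} (f : Fin n → Fin m → Fin l → Fin r → Bool) (i j k t : ℕ) :
    lk (lk (lk (lk (Encodable.encode (List.ofFn fun i => List.ofFn fun j => List.ofFn fun k =>
      List.ofFn (f i j k))) i) j) k) t
      = 1 ↔ ∃ (h : i < n) (h' : j < m) (h'' : k < l) (h3 : t < r),
        f ⟨i, h⟩ ⟨j, h'⟩ ⟨k, h''⟩ ⟨t, h3⟩ = true := by
  rw [lk_ofFn_iff _ i (fun c => lk (lk (lk c j) k) t = 1) (by simp [lk0])]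
  exact exists_congr fun h => lt3 _ _ _ _

section tables
variable {p n m : ℕ} (M : VPAData (Fin p → Bool) n m)

theorem tCal_iff (q a q' g : ℕ) : tCal M.codeP q a q' g ↔ ∃ (h1 : q < n) (_ : a < 2 ^ p)
    (h3 : q' < n) (h4 : g < m), M.callΔ ⟨q, h1⟩ (letterOf p a) ⟨q', h3⟩ ⟨g, h4⟩ = true := by
  simp only [tCal, tl2, VPAData.codeP, Encodable.encode_prod_val, u1_pair, u2_pair]
  exact lt4 (fun q (i : Fin (2 ^ p)) => M.callΔ q (letterOf p i.val)) _ _ _ _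

theorem tRet_iff (q a g q' : ℕ) : tRet M.codeP q a g q' ↔ ∃ (h1 : q < n) (_ : a < 2 ^ p)
    (h4 : g < m) (h3 : q' < n), M.retΔ ⟨q, h1⟩ (letterOf p a) (some ⟨g, h4⟩) ⟨q', h3⟩ = true := by
  simp only [tRet, tl2, VPAData.codeP, Encodable.encode_prod_val, u1_pair, u2_pair]
  exact lt4 (fun q (i : Fin (2 ^ p)) g => M.retΔ q (letterOf p i.val) (some g)) _ _ _ _

theorem tRtb_iff (q a q' : ℕ) : tRtb M.codeP q a q' ↔ ∃ (h1 : q < n) (_ : a < 2 ^ p)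
    (h3 : q' < n), M.retΔ ⟨q, h1⟩ (letterOf p a) none ⟨q', h3⟩ = true := by
  simp only [tRtb, tl2, VPAData.codeP, Encodable.encode_prod_val, u1_pair, u2_pair]
  exact lt3 (fun q (i : Fin (2 ^ p)) => M.retΔ q (letterOf p i.val) none) _ _ _

theorem tLcl_iff (q a q' : ℕ) : tLcl M.codeP q a q' ↔ ∃ (h1 : q < n) (_ : a < 2 ^ p)
    (h3 : q' < n), M.locΔ ⟨q, h1⟩ (letterOf p a) ⟨q', h3⟩ = true := by
  simp only [tLcl, tl2, VPAData.codeP, Encodable.encode_prod_val, u1_pair, u2_pair]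
  exact lt3 (fun q (i : Fin (2 ^ p)) => M.locΔ q (letterOf p i.val)) _ _ _

theorem tStart_iff (q : ℕ) : tStart M.codeP q ↔ ∃ h : q < n, M.start ⟨q, h⟩ = true := by
  simp only [tStart, tl2, VPAData.codeP, Encodable.encode_prod_val, u1_pair, u2_pair]
  exact lt1 M.start _

theorem tFinal_iff (q : ℕ) : tFinal M.codeP q ↔ ∃ h : q < n, M.final ⟨q, h⟩ = true := by
  simp only [tFinal, tl2, VPAData.codeP, Encodable.encode_prod_val, u2_pair]
  exact lt1 M.final _

variable {N : ℕ} (S : VPSData p N m)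

theorem sCal_iff (q a q' g : ℕ) : tCal S.code q a q' g ↔ ∃ (h1 : q < N) (_ : a < 2 ^ p)
    (h3 : q' < N) (h4 : g < m), S.callΔ ⟨q, h1⟩ (letterOf p a) ⟨q', h3⟩ ⟨g, h4⟩ = true := by
  simp only [tCal, tl2, VPSData.code, Encodable.encode_prod_val, u1_pair, u2_pair]
  exact lt4 (fun q (i : Fin (2 ^ p)) => S.callΔ q (letterOf p i.val)) _ _ _ _

theorem sRet_iff (q a g q' : ℕ) : tRet S.code q a g q' ↔ ∃ (h1 : q < N) (_ : a < 2 ^ p)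
    (h4 : g < m) (h3 : q' < N), S.retΔ ⟨q, h1⟩ (letterOf p a) (some ⟨g, h4⟩) ⟨q', h3⟩ = true := by
  simp only [tRet, tl2, VPSData.code, Encodable.encode_prod_val, u1_pair, u2_pair]
  exact lt4 (fun q (i : Fin (2 ^ p)) g => S.retΔ q (letterOf p i.val) (some g)) _ _ _ _

theorem sRtb_iff (q a q' : ℕ) : tRtb S.code q a q' ↔ ∃ (h1 : q < N) (_ : a < 2 ^ p)
    (h3 : q' < N), S.retΔ ⟨q, h1⟩ (letterOf p a) none ⟨q', h3⟩ = true := by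
  simp only [tRtb, tl2, VPSData.code, Encodable.encode_prod_val, u1_pair, u2_pair]
  exact lt3 (fun q (i : Fin (2 ^ p)) => S.retΔ q (letterOf p i.val) none) _ _ _

theorem sLcl_iff (q a q' : ℕ) : tLclS S.code q a q' ↔ ∃ (h1 : q < N) (_ : a < 2 ^ p)
    (h3 : q' < N), S.locΔ ⟨q, h1⟩ (letterOf p a) ⟨q', h3⟩ = true := by
  simp only [tLclS, tl2, VPSData.code, Encodable.encode_prod_val, u2_pair]
  exact lt3 (fun q (i : Fin (2 ^ p)) => S.locΔ q (letterOf p i.val)) _ _ _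

theorem code_n : n ≤ M.codeP := by
  unfold VPAData.codeP
  rw [Encodable.encode_prod_val, Encodable.encode_nat]; exact Nat.left_le_pair _ _
theorem code_m : m ≤ M.codeP := by
  unfold VPAData.codeP
  rw [Encodable.encode_prod_val, Encodable.encode_prod_val, Encodable.encode_nat,
    Encodable.encode_nat]
  exact (Nat.left_le_pair _ _).trans (Nat.right_le_pair _ _)
theorem code_N : N ≤ S.code := by
  unfold VPSData.code
  rw [Encodable.encode_prod_val, Encodable.encode_nat]; exact Nat.left_le_pair _ _
theorem code_M : m ≤ S.code := by
  unfold VPSData.code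
  rw [Encodable.encode_prod_val, Encodable.encode_prod_val, Encodable.encode_nat,
    Encodable.encode_nat]
  exact (Nat.left_le_pair _ _).trans (Nat.right_le_pair _ _)

theorem kdf_code (kind : (Fin p → Bool) → SymKind) {a : ℕ} (h : a < 2 ^ p) :
    kdf (kindCode p kind) a = kind (letterOf p a) := by
  have : lk (kindCode p kind) a = symCode (kind (letterOf p a)) := by
    unfold kindCode
    rw [lk_ofFn, dif_pos h]; rfl
  unfold kdf
  rw [this]
  cases kind (letterOf p a) <;> simp [symCode]

end tables
end VMC

/-! ### Local semantics of formula codes -/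

namespace VMC

/-- `Reach` for a bare system: from `c` at position `k`, the state `0` is reached. -/
def ReachV (A : VP) (kd : ℕ → SymKind) (x : ℕ → ℕ) (k : ℕ) (c : ℕ × List ℕ) : Prop :=
  ∃ n τ, A.Run kd (seg x k n) c (0, τ)

theorem okG_congr {F F' : ℕ → Prop} {y : ℕ} (h : ∀ u < u1 y, (F u ↔ F' u)) :
    okG F y ↔ okG F' y :=
  and_congr_right fun _ => and_congr_right fun h1 => h _ h1

theorem finG_congr {F F' : ℕ → Prop} {y : ℕ} (h : ∀ u < u1 y, (F u ↔ F' u)) :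
    finG F y ↔ finG F' y := by
  unfold finG doneG
  rw [okG_congr h]
  refine or_congr Iff.rfl (or_congr Iff.rfl (and_congr_right fun _ => and_congr_right fun _ =>
    and_congr_right fun h1 => ?_))
  rw [h _ h1]

/-- A step of the universal guard automaton from a state with formula code at most `b` depends only on
the truth of codes below `b`, and leads to such a state again. -/
theorem gv_step_congr {a a' : ℕ → ℕ} {F F' : ℕ → ℕ → Prop} {kd kd' : ℕ → SymKind} {X X' b : ℕ}
    (hk : kd X = kd' X') (ha : a X = a' X') (hF : ∀ u < b, (F X u ↔ F' X' u))
    {c c' : ℕ × List ℕ} (hc : u1 c.1 ≤ b) (h : (gv a F).step kd X c c') :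
    (gv a' F').step kd' X' c c' ∧ u1 c'.1 ≤ b := by
  have h1 : okG (F X) c.1 ↔ okG (F' X') c.1 := okG_congr fun u hu => hF u (hu.trans_le hc)
  have h2 : finG (F X) c.1 ↔ finG (F' X') c.1 := finG_congr fun u hu => hF u (hu.trans_le hc)
  have hz : u1 0 ≤ b := (u1_le 0).trans (Nat.zero_le _)
  have hs : ∀ {y}, stay c.1 y → u1 y ≤ b := fun h => h.1.trans_le hc
  have hst : (gv a' F').step kd' X' c c' := by
    simpa only [VP.step, gv, h1, h2, ha, hk] using h
  refine ⟨hst, ?_⟩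
  unfold VP.step at hst
  split at hst
  · obtain ⟨g, h, _⟩ := hst
    rcases h with ⟨_, e, _⟩ | ⟨_, h, _⟩
    · rw [e]; exact hz
    · exact hs h
  · rcases hst with ⟨g, s, _, h, _⟩ | ⟨_, h, _⟩
    · rcases h with ⟨_, e⟩ | ⟨_, h, _⟩
      · rw [e]; exact hz
      · exact hs h
    · rcases h with ⟨_, e⟩ | ⟨_, h, _⟩
      · rw [e]; exact hz
      · exact hs h
  · rcases hst.1 with ⟨_, e⟩ | ⟨_, h, _⟩
    · rw [e]; exact hz
    · exact hs h

theorem gv_run_congr {a a' : ℕ → ℕ} {F F' : ℕ → ℕ → Prop} {kd kd' : ℕ → SymKind} {x x' : ℕ → ℕ}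
    {b : ℕ} (hk : ∀ j, kd (x j) = kd' (x' j)) (ha : ∀ j, a (x j) = a' (x' j))
    (hF : ∀ j, ∀ u < b, (F (x j) u ↔ F' (x' j) u)) :
    ∀ (n k : ℕ) {c c' : ℕ × List ℕ}, u1 c.1 ≤ b → (gv a F).Run kd (seg x k n) c c' →
      (gv a' F').Run kd' (seg x' k n) c c'
  | 0, _, _, _, _, h => h
  | n + 1, k, c, c', hc, ⟨c1, h1, h2⟩ => by
    obtain ⟨h3, h4⟩ := gv_step_congr (hk k) (ha k) (hF k) hc h1
    exact ⟨c1, h3, gv_run_congr hk ha hF n (k + 1) h4 h2⟩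

/-- Reachability from a state with formula code at most `b` depends only on truth below `b`. -/
theorem reach_congr {a a' : ℕ → ℕ} {F F' : ℕ → ℕ → Prop} {kd kd' : ℕ → SymKind} {x x' : ℕ → ℕ}
    {b : ℕ} (hk : ∀ j, kd (x j) = kd' (x' j)) (ha : ∀ j, a (x j) = a' (x' j))
    (hF : ∀ j, ∀ u < b, (F (x j) u ↔ F' (x' j) u)) (k : ℕ) {c : ℕ × List ℕ} (hc : u1 c.1 ≤ b) :
    ReachV (gv a F) kd x k c ↔ ReachV (gv a' F') kd' x' k c :=
  exists_congr fun n => exists_congr fun _ =>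
    ⟨gv_run_congr hk ha hF n k hc,
     gv_run_congr (fun j => (hk j).symm) (fun j => (ha j).symm) (fun j u hu => (hF j u hu).symm)
      n k hc⟩

/-- The label of a code depends only on the labels of smaller codes and on the states of its guard. -/
theorem lab_congr {a x : ℕ} {F F' τ τ' : ℕ → Prop} (hF : ∀ u < x, (F u ↔ F' u))
    (hτ : ∀ q ≤ x, (τ (Nat.pair x q) ↔ τ' (Nat.pair x q))) : lab a F τ x ↔ lab a F' τ' x := by
  have hg : ∀ u, (u < x ∧ F u) ↔ (u < x ∧ F' u) := fun u => and_congr_right fun h => hF u h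
  unfold lab
  refine or_congr Iff.rfl (or_congr (and_congr_right fun _ => and_congr_right fun h =>
    not_congr (hF _ h)) (or_congr ?_ (or_congr ?_ (and_congr_right fun _ => iff_congr Iff.rfl
    (exists_congr fun q => and_congr_right fun hq => and_congr_right fun _ =>
      hτ q (by omega))))))
  · rw [hg (u2 (u2 x)), ← and_assoc, ← and_assoc, ← and_assoc, and_assoc (a := u1 x = 2), hg,
      and_assoc, and_assoc, and_assoc]
  · rw [hg, hg]

/-- `U` satisfies the local conditions `lab` at every position and for all codes up to `b`. The position
itself serves as the letter read by the guard automaton. -/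
def Sem (a : ℕ → ℕ) (kd : ℕ → SymKind) (U : ℕ → ℕ → Prop) (b : ℕ) : Prop :=
  ∀ k, ∀ u ≤ b, (U k u ↔ lab (a k) (U k) (fun y => ReachV (gv a U) kd id k (y, [])) u)

/-- The labelling, by recursion on formula codes: truth of the code `x` at position `k` is `lab` applied
to the truth values of smaller codes, with the guard automaton evaluated for these. -/
def usat (a : ℕ → ℕ) (kd : ℕ → SymKind) (x k : ℕ) : Prop :=
  lab (a k) (fun u => ∃ _ : u < x, usat a kd u k)
    (fun y => ReachV (gv a (fun j u => ∃ _ : u < x, usat a kd u j)) kd id k (y, [])) x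
termination_by x

/-- The recursively defined labelling satisfies the local conditions at every code. -/
theorem usat_sem (a : ℕ → ℕ) (kd : ℕ → SymKind) (b : ℕ) : Sem a kd (fun k x => usat a kd x k) b := by
  intro k u _
  change usat a kd u k ↔ _
  rw [usat]
  refine lab_congr (fun v hv => by simp [hv]) (fun q _ => ?_)
  exact reach_congr (b := u) (fun _ => rfl) (fun _ => rfl) (fun j v hv => by simp [hv]) k (by simp)

section acc
variable {p n m : ℕ} (M : VPAData (Fin p → Bool) n m) (kind : (Fin p → Bool) → SymKind)
  (α : ℕ → Fin p → Bool) (Tst : ℕ → Fin n → Prop) (Bd : ℕ → Prop)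

/-- The guard `M`, in configuration `c` at position `k`, can make `d` further steps to a final state,
with all tests `Tst` satisfied on the way and with `Bd` true at the position reached. -/
def Acc : ℕ → ℕ → Fin n × List (Fin m) → Prop
  | 0, k, c => Tst k c.1 ∧ M.final c.1 = true ∧ Bd k
  | d + 1, k, c => Tst k c.1 ∧ ∃ cₑ, M.step kind c (α k) cₑ ∧ Acc d (k + 1) cₑ

/-- `ρ` is an accepting run of `M` between positions `k` and `l` that satisfies the tests. -/
def ERun (k l : ℕ) (ρ : ℕ → Fin n × List (Fin m)) : Prop :=
  (∀ i, k ≤ i → i < l → M.step kind (ρ i) (α i) (ρ (i+1))) ∧ M.final (ρ l).1 = true ∧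
    (∀ i, k ≤ i → i ≤ l → Tst i (ρ i).1)

/-- Acceptance in some number of steps is the existence of an accepting run to some later position. -/
theorem acc_iff (k : ℕ) (c : Fin n × List (Fin m)) :
    (∃ d, Acc M kind α Tst Bd d k c) ↔
      ∃ l, k ≤ l ∧ (∃ ρ, ρ k = c ∧ ERun M kind α Tst k l ρ) ∧ Bd l := by
  constructor
  · rintro ⟨d, h⟩
    induction d generalizing k c with
    | zero =>
      refine ⟨k, le_rfl, ⟨fun _ => c, rfl, fun i h1 h2 => by omega, h.2.1, fun i h1 h2 => ?_⟩, h.2.2⟩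
      obtain rfl : i = k := by omega
      exact h.1
    | succ d ih =>
      obtain ⟨ht, c', hs, h⟩ := h
      obtain ⟨l, hl, ⟨ρ, hρ, h1, h2, h3⟩, hb⟩ := ih _ _ h
      refine ⟨l, by omega, ⟨fun i => if i = k then c else ρ i, by simp, fun i hi hi' => ?_, ?_,
        fun i hi hi' => ?_⟩, hb⟩
      · by_cases e : i = k
        · subst e; simpa [hρ] using hs
        · simpa [e, show i + 1 ≠ k by omega] using h1 i (by omega) hi'
      · simpa [show l ≠ k by omega] using h2
      · by_cases e : i = k
        · subst e; simpa using ht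
        · simpa [e] using h3 i (by omega) hi'
  · rintro ⟨l, hl, ⟨ρ, hρ, h1, h2, h3⟩, hb⟩
    obtain ⟨d, rfl⟩ := Nat.exists_eq_add_of_le hl
    refine ⟨d, ?_⟩
    subst hρ
    induction d generalizing k with
    | zero => exact ⟨h3 k le_rfl le_rfl, h2, hb⟩
    | succ d ih =>
      refine ⟨h3 k le_rfl (by omega), _, h1 k le_rfl (by omega), ih (k + 1) (by omega) ?_ ?_ ?_ ?_⟩
      · rwa [show k + 1 + d = k + (d + 1) by omega]
      · intro i hi hi'; exact h1 i (by omega) (by omega)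
      · rwa [show k + 1 + d = k + (d + 1) by omega]
      · intro i hi hi'; exact h3 i (by omega) (by omega)
end acc
end VMC

/-! ### Correctness of the labelling -/

namespace VMC

section
variable {p n m : ℕ} {M : VPAData (Fin p → Bool) n m} {kind : (Fin p → Bool) → SymKind}
  {α : ℕ → Fin p → Bool} {a : ℕ → ℕ} {kd : ℕ → SymKind} {U : ℕ → ℕ → Prop} {x : ℕ}
  {Tst : ℕ → Fin n → Prop}

/-- `x` is the code of a guarded formula with guard `M`, and `Tst` is the truth of the tests of `M` along
the word `α`. The functions `a`, `kd` and `U` give, by position, the number of the letter, its kind and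
the true formula codes. -/
structure Enc (M : VPAData (Fin p → Bool) n m) (kind : (Fin p → Bool) → SymKind)
    (α : ℕ → Fin p → Bool) (a : ℕ → ℕ) (kd : ℕ → SymKind) (U : ℕ → ℕ → Prop) (x : ℕ)
    (Tst : ℕ → Fin n → Prop) : Prop where
  ha : ∀ k, a k < 2 ^ p
  hα : ∀ k, α k = letterOf p (a k)
  hkd : ∀ k, kd k = kind (α k)
  hA : gA x = M.codeP
  hx : M.codeP ≤ x
  h4 : 4 ≤ u1 x
  hB : gBody x < x
  hT : ∀ k (q : Fin n), okG (U k) (Nat.pair x q.val) ↔ Tst k q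

/-- The configuration of the universal guard automaton that simulates the configuration `c`. -/
def mp (x : ℕ) (c : Fin n × List (Fin m)) : ℕ × List ℕ := (Nat.pair x c.1.val, c.2.map Fin.val)

/-- The universal guard automaton simulates the steps of a guard whose test holds. -/
theorem Enc.step_mk (H : Enc M kind α a kd U x Tst) {k : ℕ} {c c' : Fin n × List (Fin m)}
    (ht : Tst k c.1) (h : M.step kind c (α k) c') :
    (gv a U).step kd k (mp x c) (mp x c') := by
  have hok := (H.hT k c.1).2 ht
  have hs : ∀ q' : Fin n, stay (Nat.pair x c.1.val) (Nat.pair x q'.val) := fun q' => by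
    have := q'.isLt; have := code_n M; have := H.hx
    constructor <;> simp; omega
  unfold VPAData.step vstep at h
  unfold VP.step
  rw [H.hkd]
  have e := H.hα k
  revert h
  cases kind (α k) <;> intro h
  · obtain ⟨g, h1, h2⟩ := h
    refine ⟨g.val, Or.inr ⟨hok, hs _, ?_, ?_⟩, by simp [mp, h2]⟩
    · have := g.isLt; have := code_m M; have := H.hx
      simp [mp]; omega
    · simp only [mp, u1_pair, u2_pair, H.hA, tCal_iff]
      exact ⟨c.1.2, H.ha k, c'.1.2, g.2, by rw [← e]; exact h1⟩
  · rcases h with ⟨g, s, h1, h2, h3⟩ | ⟨h1, h2, h3⟩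
    · refine Or.inl ⟨g.val, s.map Fin.val, by simp [mp, h1], Or.inr ⟨hok, hs _, ?_⟩, by simp [mp, h3]⟩
      simp only [mp, u1_pair, u2_pair, H.hA, tRet_iff]
      exact ⟨c.1.2, H.ha k, g.2, c'.1.2, by rw [← e]; exact h2⟩
    · refine Or.inr ⟨by simp [mp, h1], Or.inr ⟨hok, hs _, ?_⟩, by simp [mp, h3]⟩
      simp only [mp, u1_pair, u2_pair, H.hA, tRtb_iff]
      exact ⟨c.1.2, H.ha k, c'.1.2, by rw [← e]; exact h2⟩
  · refine ⟨Or.inr ⟨hok, hs _, ?_⟩, by simp [mp, h.2]⟩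
    simp only [mp, u1_pair, u2_pair, H.hA, tLcl_iff]
    exact ⟨c.1.2, H.ha k, c'.1.2, by rw [← e]; exact h.1⟩

theorem pair_of_stay {q y' : ℕ} (h : stay (Nat.pair x q) y') : y' = Nat.pair x (u2 y') := by
  have := h.1
  rw [u1_pair] at this
  rw [← this, u_pair]

/-- A step of the universal guard automaton from a simulating configuration either goes to the sink,
where the guard may stop, or simulates a step of the guard. -/
theorem Enc.step_inv (H : Enc M kind α a kd U x Tst) {k : ℕ} {c : Fin n × List (Fin m)}
    {d : ℕ × List ℕ} (h : (gv a U).step kd k (mp x c) d) :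
    finG (U k) (mp x c).1 ∨ (Tst k c.1 ∧ ∃ c', d = mp x c' ∧ M.step kind c (α k) c') := by
  obtain ⟨y', s'⟩ := d
  have hok : okG (U k) (mp x c).1 → Tst k c.1 := (H.hT k c.1).1
  unfold VP.step at h
  unfold VPAData.step vstep
  rw [H.hkd] at h
  have e := H.hα k
  revert h
  cases kind (α k) <;> intro h
  · obtain ⟨g, h1, h2⟩ := h
    rcases h1 with h1 | ⟨h1, hs, _, h3⟩
    · exact Or.inl h1.1
    · simp only [mp, u1_pair, u2_pair, H.hA, tCal_iff] at h3
      obtain ⟨_, _, h5, h6, h7⟩ := h3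
      rw [← e] at h7
      exact Or.inr ⟨hok h1, (⟨_, h5⟩, ⟨g, h6⟩ :: c.2),
        Prod.ext (pair_of_stay hs) (by simpa [mp] using h2), _, h7, rfl⟩
  · rcases h with ⟨g, s, h0, h1, h2⟩ | ⟨h0, h1, h2⟩
    · rcases h1 with h1 | ⟨h1, hs, h3⟩
      · exact Or.inl h1.1
      · simp only [mp, u1_pair, u2_pair, H.hA, tRet_iff] at h3
        obtain ⟨_, _, h6, h5, h7⟩ := h3
        rw [← e] at h7
        obtain ⟨g', s₁, e1, e2, e3⟩ := List.map_eq_cons_iff.1 h0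
        refine Or.inr ⟨hok h1, (⟨_, h5⟩, s₁), Prod.ext (pair_of_stay hs) ?_, Or.inl ⟨_, _, e1, ?_, rfl⟩⟩
        · simpa [mp, e3] using h2
        · subst e2; exact h7
    · rcases h1 with h1 | ⟨h1, hs, h3⟩
      · exact Or.inl h1.1
      · simp only [mp, u1_pair, u2_pair, H.hA, tRtb_iff] at h3
        obtain ⟨_, _, h5, h7⟩ := h3
        rw [← e] at h7
        exact Or.inr ⟨hok h1, (⟨_, h5⟩, []), Prod.ext (pair_of_stay hs) (by simpa [mp] using h2),
          Or.inr ⟨by simpa [mp] using h0, h7, rfl⟩⟩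
  · rcases h with ⟨h1 | ⟨h1, hs, h3⟩, h2⟩
    · exact Or.inl h1.1
    · simp only [mp, u1_pair, u2_pair, H.hA, tLcl_iff] at h3
      obtain ⟨_, _, h5, h7⟩ := h3
      rw [← e] at h7
      exact Or.inr ⟨hok h1, (⟨_, h5⟩, c.2), Prod.ext (pair_of_stay hs) (by simpa [mp] using h2),
          h7, rfl⟩

theorem fin_step {k y : ℕ} (s : List ℕ) (h : finG (U k) y) :
    ∃ s', (gv a U).step kd k (y, s) (0, s') := by
  unfold VP.step
  cases kd k with
  | call => exact ⟨0 :: s, 0, Or.inl ⟨h, rfl, rfl⟩, rfl⟩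
  | ret =>
    cases s with
    | nil => exact ⟨[], Or.inr ⟨rfl, Or.inl ⟨h, rfl⟩, rfl⟩⟩
    | cons g s => exact ⟨s, Or.inl ⟨g, s, rfl, Or.inl ⟨h, rfl⟩, rfl⟩⟩
  | loc => exact ⟨s, Or.inl ⟨h, rfl⟩, rfl⟩

theorem Enc.pair_ge (H : Enc M kind α a kd U x Tst) (q : ℕ) : 4 ≤ Nat.pair x q :=
  (H.h4.trans (u1_le x)).trans (Nat.left_le_pair x q)

theorem Enc.fin_iff (H : Enc M kind α a kd U x Tst) {k : ℕ} (c : Fin n × List (Fin m)) :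
    finG (U k) (mp x c).1 ↔
      Tst k c.1 ∧ M.final c.1 = true ∧ (u1 x = 4 ↔ U k (gBody x)) := by
  have h := H.pair_ge c.1.val
  unfold finG doneG
  simp only [mp, H.hT, u1_pair, u2_pair, H.hA, tFinal_iff, H.hB, true_and, Fin.is_lt, exists_true_left]
  constructor
  · rintro (h | h | h)
    · omega
    · omega
    · exact h
  · exact fun h => Or.inr (Or.inr h)

/-- The sink is reached from a simulating configuration if and only if the guard can stop later on. -/
theorem Enc.reach (H : Enc M kind α a kd U x Tst) (k : ℕ) (c : Fin n × List (Fin m)) :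
    ReachV (gv a U) kd id k (mp x c) ↔
      ∃ d, Acc M kind α Tst (fun k => (u1 x = 4 ↔ U k (gBody x))) d k c := by
  constructor
  · rintro ⟨r, τ, h⟩
    induction r generalizing k c with
    | zero =>
      have h1 : Nat.pair x c.1.val = 0 := congrArg Prod.fst h
      have := H.pair_ge c.1.val
      omega
    | succ r ih =>
      obtain ⟨d, h1, h2⟩ := h
      rcases H.step_inv h1 with h3 | ⟨ht, c', rfl, h3⟩
      · exact ⟨0, (H.fin_iff c).1 h3⟩
      · obtain ⟨d, hd⟩ := ih _ _ h2
        exact ⟨d + 1, ht, c', h3, hd⟩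
  · rintro ⟨d, h⟩
    induction d generalizing k c with
    | zero =>
      obtain ⟨s', h'⟩ := fin_step (a := a) (kd := kd) (c.2.map Fin.val) ((H.fin_iff c).2 h)
      exact ⟨1, s', _, h', rfl⟩
    | succ d ih =>
      obtain ⟨ht, c', hs, h⟩ := h
      obtain ⟨r, τ, hr⟩ := ih _ _ h
      exact ⟨r + 1, τ, _, H.step_mk ht hs, hr⟩

end

section
variable {p : ℕ} {kind : (Fin p → Bool) → SymKind} {α : ℕ → Fin p → Bool} {a : ℕ → ℕ}
  {kd : ℕ → SymKind} {U : ℕ → ℕ → Prop} {b : ℕ}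

/-- A diamond (`r = 4`) holds if and only if the guard leads to a position where the body is true; a box
(any other `r`) is the negation of the guard leading to a position where the body is false. -/
theorem guard_iff (ha : ∀ k, a k < 2 ^ p) (hα : ∀ k, α k = letterOf p (a k))
    (hkd : ∀ k, kd k = kind (α k)) (hU : Sem a kd U b) {n m : ℕ}
    (M : VPAData (Fin p → Bool) n m) (t : Fin n → VLDL (Fin p) (Fin p → Bool)) (r body : ℕ)
    (hr : 4 ≤ r) (hb : Nat.pair r (Nat.pair M.codeP
      (Nat.pair (Encodable.encode (List.ofFn (fun q => (t q).code))) body)) ≤ b)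
    (ht : ∀ q k, (t q).code ≤ b → (VLDL.sat (fun v a => a v = true) kind (t q) α k ↔ U k (t q).code))
    (k : ℕ) :
    U k (Nat.pair r (Nat.pair M.codeP
      (Nat.pair (Encodable.encode (List.ofFn (fun q => (t q).code))) body))) ↔
    (r = 4 ↔ ∃ l, k ≤ l ∧
      (∃ ρ : ℕ → Fin n × List (Fin m),
        M.start (ρ k).1 = true ∧ (ρ k).2 = [] ∧
        (∀ i, k ≤ i → i < l → M.step kind (ρ i) (α i) (ρ (i+1))) ∧
        M.final (ρ l).1 = true ∧
        (∀ i, k ≤ i → i ≤ l → VLDL.sat (fun v a => a v = true) kind (t (ρ i).1) α i)) ∧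
      (r = 4 ↔ U l body)) := by
  set T := Encodable.encode (List.ofFn (fun q => (t q).code)) with hT
  set x := Nat.pair r (Nat.pair M.codeP (Nat.pair T body)) with hx
  have e1 : u1 x = r := by simp [hx]
  have eA : gA x = M.codeP := by simp [hx, gA]
  have eT : gT x = T := by simp [hx, gT]
  have eB : gBody x = body := by simp [hx, gBody]
  have i1 := Nat.add_le_pair r (Nat.pair M.codeP (Nat.pair T body))
  have i2 := Nat.add_le_pair M.codeP (Nat.pair T body)
  have i3 := Nat.add_le_pair T body
  rw [← hx] at i1
  have lkT : ∀ q : Fin n, lk T q.val = (t q).code := fun q => by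
    rw [hT, lk_ofFn_lt]; rfl
  have htc : ∀ q : Fin n, (t q).code < x := fun q => by
    have := lk_le T q.val; rw [lkT] at this; omega
  have H : Enc M kind α a kd U x
      (fun k q => VLDL.sat (fun v a => a v = true) kind (t q) α k) := by
    refine ⟨ha, hα, hkd, eA, by omega, by omega, by omega, fun k q => ?_⟩
    unfold okG
    simp only [u1_pair, u2_pair, eT, lkT, htc, e1, hr, true_and]
    exact (ht q k ((htc q).le.trans hb)).symm
  rw [hU k x hb]
  have : lab (a k) (U k) (fun y => ReachV (gv a U) kd id k (y, [])) x ↔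
      (r = 4 ↔ ∃ q < x + 1, tStart M.codeP q ∧
        ReachV (gv a U) kd id k (Nat.pair x q, [])) := by
    unfold lab
    rw [e1, eA]
    constructor
    · rintro (h | h | h | h | h)
      · omega
      · omega
      · omega
      · omega
      · exact h.2
    · exact fun h => Or.inr (Or.inr (Or.inr (Or.inr ⟨hr, h⟩)))
  rw [this]
  refine iff_congr Iff.rfl ?_
  have hn := code_n M
  constructor
  · rintro ⟨q, _, hq, hR⟩
    obtain ⟨hqn, hq⟩ := (tStart_iff M q).1 hq
    obtain ⟨l, hl, ⟨ρ, hρ, h1, h2, h3⟩, h4⟩ := (acc_iff M kind α _ _ k _).1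
      ((H.reach k (⟨q, hqn⟩, [])).1 hR)
    exact ⟨l, hl, ⟨ρ, by rw [hρ]; exact hq, by rw [hρ], h1, h2, h3⟩, by rwa [e1, eB] at h4⟩
  · rintro ⟨l, hl, ⟨ρ, hs, h0, h1, h2, h3⟩, h4⟩
    have := (H.reach k (ρ k)).2 ((acc_iff M kind α _ _ k _).2
      ⟨l, hl, ⟨ρ, rfl, h1, h2, h3⟩, by rwa [e1, eB]⟩)
    refine ⟨(ρ k).1.val, ?_, (tStart_iff M _).2 ⟨(ρ k).1.2, hs⟩, ?_⟩
    · have := (ρ k).1.2; omega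
    · simpa only [mp, h0, List.map_nil] using this

/-- A labelling that satisfies the local conditions is the semantics of formulas. -/
theorem sat_iff (ha : ∀ k, a k < 2 ^ p) (hα : ∀ k, α k = letterOf p (a k))
    (hkd : ∀ k, kd k = kind (α k)) (hU : Sem a kd U b)
    (φ : VLDL (Fin p) (Fin p → Bool)) : φ.code ≤ b → ∀ k,
      (VLDL.sat (fun v a => a v = true) kind φ α k ↔ U k φ.code) := by
  induction φ with
  | atom v =>
    intro hb k
    rw [hU k _ hb, VLDL.sat, VLDL.code, hα]
    simp [lab, bt, letterOf]
  | neg φ ih =>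
    intro hb k
    rw [hU k _ hb, VLDL.sat, VLDL.code]
    rw [VLDL.code] at hb
    have i1 := Nat.add_le_pair 1 φ.code
    rw [ih (by omega) k]
    simp [lab, show φ.code < Nat.pair 1 φ.code by omega]
  | and φ ψ ih1 ih2 =>
    intro hb k
    rw [hU k _ hb, VLDL.sat, VLDL.code]
    rw [VLDL.code] at hb
    have i1 := Nat.add_le_pair 2 (Nat.pair φ.code ψ.code)
    have i2 := Nat.add_le_pair φ.code ψ.code
    rw [ih1 (by omega) k, ih2 (by omega) k]
    simp [lab, show φ.code < Nat.pair 2 (Nat.pair φ.code ψ.code) by omega,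
      show ψ.code < Nat.pair 2 (Nat.pair φ.code ψ.code) by omega]
  | or φ ψ ih1 ih2 =>
    intro hb k
    rw [hU k _ hb, VLDL.sat, VLDL.code]
    rw [VLDL.code] at hb
    have i1 := Nat.add_le_pair 3 (Nat.pair φ.code ψ.code)
    have i2 := Nat.add_le_pair φ.code ψ.code
    rw [ih1 (by omega) k, ih2 (by omega) k]
    simp [lab, show φ.code < Nat.pair 3 (Nat.pair φ.code ψ.code) by omega,
      show ψ.code < Nat.pair 3 (Nat.pair φ.code ψ.code) by omega]
  | dia n m M t φ iht ihφ =>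
    intro hb k
    rw [VLDL.code] at hb ⊢
    rw [guard_iff ha hα hkd hU M t 4 φ.code (by omega) hb (fun q k h => iht q h k) k, VLDL.sat]
    have hφ : φ.code ≤ b :=
      (((Nat.right_le_pair _ _).trans (Nat.right_le_pair _ _)).trans (Nat.right_le_pair _ _)).trans hb
    simp only [true_iff, ihφ hφ]
  | box n m M t φ iht ihφ =>
    intro hb k
    rw [VLDL.code] at hb ⊢
    rw [guard_iff ha hα hkd hU M t 5 φ.code (by omega) hb (fun q k h => iht q h k) k, VLDL.sat]
    have hφ : φ.code ≤ b :=
      (((Nat.right_le_pair _ _).trans (Nat.right_le_pair _ _)).trans (Nat.right_le_pair _ _)).trans hb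
    simp only [ihφ hφ, show ¬ (5 = 4) by omega, false_iff, not_exists, not_and, not_not]
end
end VMC

/-! ### Traces and annotated words -/

namespace VMC

section
variable {p N M : ℕ} {S : VPSData p N M} {kind : (Fin p → Bool) → SymKind} {z : ℕ}

theorem zD_bounds (z : ℕ) : zs z < zD z ∧ 2 ^ zp z < zD z ∧ 2 ^ zB z < zD z := by
  have h1 : 0 < 2 ^ zp z := by positivity
  have h2 : 0 < 2 ^ zB z := by positivity
  unfold zD
  omega

theorem zD_le (z : ℕ) : zD z ≤ zK z :=
  (Nat.le_self_pow (by omega) _).trans (Nat.le_add_right _ _)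

/-- A step of the annotated system gives a step of the system. -/
theorem sv_step {x x' : ℕ} {σ σ' : List ℕ} {t : List (Fin M)}
    (hs : zs z = S.code) (hk : zk z = kindCode p kind) (ha : aX x < 2 ^ p)
    (ht : t.map Fin.val = σ)
    (h : (sv z).step (sysOf z).kd x (x, σ) (x', σ')) :
    ∃ (h1 : sX x < N) (h2 : sX x' < N) (t' : List (Fin M)), t'.map Fin.val = σ' ∧
      vstep kind S.callΔ S.retΔ S.locΔ (⟨sX x, h1⟩, t) (letterOf p (aX x)) (⟨sX x', h2⟩, t') := by
  have e : (sysOf z).kd x = kind (letterOf p (aX x)) := by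
    rw [← kdf_code kind ha, ← hk]; rfl
  unfold VP.step at h
  unfold vstep
  rw [e] at h
  revert h
  cases kind (letterOf p (aX x)) <;> intro h
  · obtain ⟨g, ⟨_, _, h⟩, h0⟩ := h
    rw [hs, sCal_iff] at h
    obtain ⟨h1, _, h2, h3, h⟩ := h
    exact ⟨h1, h2, ⟨g, h3⟩ :: t, by simp [ht, show σ' = g :: σ from h0], _, h, rfl⟩
  · rcases h with ⟨g, s, h0, ⟨_, h⟩, h3⟩ | ⟨h0, ⟨_, h⟩, h3⟩
    · rw [hs, sRet_iff] at h
      obtain ⟨h1, _, h4, h2, h⟩ := h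
      obtain ⟨g', s₁, e1, e2, e3⟩ := List.map_eq_cons_iff.1 (ht.trans h0)
      subst e2
      exact ⟨h1, h2, s₁, e3.trans h3.symm, Or.inl ⟨_, _, e1, h, rfl⟩⟩
    · rw [hs, sRtb_iff] at h
      obtain ⟨h1, _, h2, h⟩ := h
      exact ⟨h1, h2, [], h3.symm, Or.inr ⟨by rw [← ht] at h0; simpa using h0, h, rfl⟩⟩
  · obtain ⟨⟨_, h⟩, h0⟩ := h
    rw [hs, sLcl_iff] at h
    obtain ⟨h1, _, h2, h⟩ := h
    exact ⟨h1, h2, t, ht.trans h0.symm, h, rfl⟩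

/-- A step of the system lifts to annotated letters that hold its states. -/
theorem sv_step_mk {x x' : ℕ} {s s' : Fin N} {t t' : List (Fin M)}
    (hs : zs z = S.code) (hk : zk z = kindCode p kind) (ha : aX x < 2 ^ p)
    (h1 : sX x = s.val) (h2 : sX x' = s'.val)
    (h : vstep kind S.callΔ S.retΔ S.locΔ (s, t) (letterOf p (aX x)) (s', t')) :
    (sv z).step (sysOf z).kd x (x, t.map Fin.val) (x', t'.map Fin.val) := by
  have e : (sysOf z).kd x = kind (letterOf p (aX x)) := by
    rw [← kdf_code kind ha, ← hk]; rfl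
  have hM := code_M S
  unfold vstep at h
  unfold VP.step
  rw [e]
  revert h
  cases kind (letterOf p (aX x)) <;> intro h
  · obtain ⟨g, h, h0⟩ := h
    refine ⟨g.val, ⟨rfl, ?_, ?_⟩, by simp [show t' = g :: t from h0]⟩
    · have h3 := (zD_bounds z).1
      have h4 := zD_le z
      have := g.2
      omega
    · rw [hs, sCal_iff]
      exact ⟨h1 ▸ s.2, ha, h2 ▸ s'.2, g.2, by simpa only [h1, h2] using h⟩
  · rcases h with ⟨g, u, h0, h, h3⟩ | ⟨h0, h, h3⟩
    · refine Or.inl ⟨g.val, u.map Fin.val, by simp [show t = g :: u from h0], ⟨rfl, ?_⟩,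
        by simp [show t' = u from h3]⟩
      rw [hs, sRet_iff]
      exact ⟨h1 ▸ s.2, ha, g.2, h2 ▸ s'.2, by simpa only [h1, h2] using h⟩
    · refine Or.inr ⟨by simp [show t = [] from h0], ⟨rfl, ?_⟩, by simp [show t' = [] from h3]⟩
      rw [hs, sRtb_iff]
      exact ⟨h1 ▸ s.2, ha, h2 ▸ s'.2, by simpa only [h1, h2] using h⟩
  · obtain ⟨h, h0⟩ := h
    refine ⟨⟨rfl, ?_⟩, by simp [show t' = t from h0]⟩
    rw [hs, sLcl_iff]
    exact ⟨h1 ▸ s.2, ha, h2 ▸ s'.2, by simpa only [h1, h2] using h⟩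

/-- A consistent annotated word yields a trace of the system that violates the formula. -/
theorem bad_of_lhs {qI : Fin N} {φ : VLDL (Fin p) (Fin p → Bool)}
    (hp : zp z = p) (hk : zk z = kindCode p kind) (hs : zs z = S.code) (hq : zq z = qI.val)
    (hf : zf z = φ.code) {x : ℕ → ℕ} {σ : ℕ → List ℕ} (H : Lhs (sysOf z) (zI z) x σ) :
    ∃ α, S.HasTrace kind qI α ∧ ¬ VLDL.sat (fun v a => a v = true) kind φ α 0 := by
  have ha : ∀ k, aX (x k) < 2 ^ p := fun k => hp ▸ (H.val k).2.1
  refine ⟨fun k => letterOf p (aX (x k)), ?_, ?_⟩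
  · have inv : ∀ k, ∃ t : List (Fin M), t.map Fin.val = σ k := by
      intro k
      induction k with
      | zero => exact ⟨[], by simp [H.s0]⟩
      | succ k ih =>
        obtain ⟨t, ht⟩ := ih
        obtain ⟨_, _, t', ht', _⟩ := sv_step hs hk (ha k) ht (H.step k)
        exact ⟨t', ht'⟩
    choose t ht using inv
    have hN : ∀ k, sX (x k) < N := fun k => (sv_step hs hk (ha k) (ht k) (H.step k)).1
    refine ⟨fun k => (⟨sX (x k), hN k⟩, t k), ?_, fun k => ?_⟩
    · refine Prod.ext (Fin.ext (H.init.1.trans hq)) ?_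
      have := ht 0
      rw [H.s0] at this
      simpa using this
    · obtain ⟨_, _, t', ht', h⟩ := sv_step hs hk (ha k) (ht k) (H.step k)
      have : t' = t (k + 1) :=
        List.map_injective_iff.2 Fin.val_injective (ht'.trans (ht (k + 1)).symm)
      subst this
      exact h
  · have hU : Sem (fun k => aX (x k)) (fun k => kdf (zk z) (aX (x k)))
        (fun k => bt (fX (x k))) (zf z) := by
      intro k u hu
      refine ((H.val k).2.2.1 u (by omega)).trans (lab_congr (fun _ _ => Iff.rfl) fun q hq => ?_)
      refine (H.tau k _ (lt_zB.2 (by simp; omega))).trans ?_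
      change ReachV (gv aX (fun X => bt (fX X))) (fun X => kdf (zk z) (aX X)) x k _ ↔ _
      refine reach_congr (b := zf z) (fun j => ?_) (fun j => ?_) (fun j v _ => ?_) k ?_
      · rfl
      · rfl
      · rfl
      · rw [u1_pair]; exact hu
    rw [sat_iff ha (fun _ => rfl) (fun k => by rw [hk, kdf_code kind (ha k)]) hU φ hf.ge 0, ← hf]
    exact H.init.2

/-- Every letter has a number. -/
theorem exists_letter (p : ℕ) (a : Fin p → Bool) : ∃ n < 2 ^ p, letterOf p n = a := by
  classical
  obtain ⟨m, hm, h⟩ := exists_mask p (fun i => ∃ h : i < p, a ⟨i, h⟩ = true)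
  refine ⟨m, hm, funext fun j => ?_⟩
  rw [Bool.eq_iff_iff, letterOf, h j.val j.2]
  simp

/-- A trace that violates the formula yields a consistent annotated word: each position is annotated
with the set of formula codes true there and the set of guard states from which the sink is reached. -/
theorem lhs_of_bad {qI : Fin N} {φ : VLDL (Fin p) (Fin p → Bool)}
    (hp : zp z = p) (hk : zk z = kindCode p kind) (hs : zs z = S.code) (hq : zq z = qI.val)
    (hf : zf z = φ.code) {α : ℕ → Fin p → Bool} (hα : S.HasTrace kind qI α)
    (hn : ¬ VLDL.sat (fun v a => a v = true) kind φ α 0) :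
    ∃ x σ, Lhs (sysOf z) (zI z) x σ := by
  obtain ⟨ρ, hρ0, hρ⟩ := hα
  choose a ha hal using fun k => exists_letter p (α k)
  set kd : ℕ → SymKind := fun k => kdf (zk z) (a k) with hkd
  set U : ℕ → ℕ → Prop := fun k x => usat a kd x k with hUd
  have hU : ∀ b, Sem a kd U b := usat_sem a kd
  choose F hF1 hF2 using fun k => exists_mask (zf z + 1) (U k)
  choose T hT1 hT2 using fun k => exists_mask (zB z) (fun y => ReachV (gv a U) kd id k (y, []))
  set x : ℕ → ℕ := fun k => Nat.pair (Nat.pair (ρ k).1.val (a k)) (Nat.pair (F k) (T k)) with hx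
  have es : ∀ k, sX (x k) = (ρ k).1.val := fun k => by simp [hx, sX]
  have ea : ∀ k, aX (x k) = a k := fun k => by simp [hx, aX]
  have ef : ∀ k, fX (x k) = F k := fun k => by simp [hx, fX]
  have et : ∀ k, tX (x k) = T k := fun k => by simp [hx, tX]
  have hfin : ∀ k y, finG (U k) y → ReachV (gv a U) kd id k (y, []) := fun k y h => by
    obtain ⟨s', h'⟩ := fin_step (a := a) (kd := kd) [] h
    exact ⟨1, s', _, h', rfl⟩
  obtain ⟨b1, b2, b3⟩ := zD_bounds z
  have hK : ∀ k, x k < zK z := fun k => by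
    have h1 : (ρ k).1.val < zD z := by
      have := (ρ k).1.2; have := code_N S; omega
    have h2 : a k < zD z := by
      have := ha k; rw [hp] at b2; omega
    have h3 : F k < zD z := by
      have h4 : 2 ^ (zf z + 1) ≤ 2 ^ zB z := Nat.pow_le_pow_right (by omega) (by unfold zB; nlinarith)
      have := hF1 k; omega
    have h4 : T k < zD z := by
      have := hT1 k; omega
    have h5 : x k < (zD z ^ 2) ^ 2 := pair_lt (pair_lt h1 h2) (pair_lt h3 h4)
    rw [← pow_mul] at h5
    exact h5.trans_le (Nat.le_add_right _ _)
  refine ⟨x, fun k => (ρ k).2.map Fin.val, ⟨⟨?_, ?_⟩, ?_, ?_, ?_, ?_⟩⟩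
  · rw [es, hρ0, hq]
  · rw [ef]
    refine fun h => hn ?_
    rw [sat_iff ha (fun k => (hal k).symm) (fun k => by
        change kdf (zk z) (a k) = _
        rw [hk, ← hal, kdf_code kind (ha k)])
      (hU (zf z)) φ hf.ge 0, ← hf]
    exact (hF2 0 _ (by omega)).1 h
  · simp [hρ0]
  · intro k
    refine ⟨hK k, by rw [ea, hp]; exact ha k, fun u hu => ?_, ?_, ?_⟩
    · rw [ea, ef, et]
      refine (hF2 k u hu).trans ((hU (zf z) k u (by omega)).trans (lab_congr ?_ ?_))
      · exact fun v hv => (hF2 k v (by omega)).symm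
      · exact fun q hq => (hT2 k _ (lt_zB.2 (by simp; omega))).symm
    · rw [et]
      exact (hT2 k 0 (by have := zB_pos z; omega)).2 (hfin k 0 (Or.inl rfl))
    · rw [et]
      exact (hT2 k 1 (zB_pos z)).2 (hfin k 1 (Or.inr (Or.inl rfl)))
  · intro k
    refine sv_step_mk (S := S) (kind := kind) hs hk (by rw [ea]; exact ha k) (es k) (es (k + 1)) ?_
    rw [ea, hal]
    exact hρ k
  · intro k y hy
    change bt (tX (x k)) y ↔ ReachV (gv aX (fun X => bt (fX X))) (sysOf z).kd x k (y, [])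
    rw [et]
    refine (hT2 k y hy).trans ?_
    refine reach_congr (b := zf z + 1) (x := id) (x' := x) (fun j => ?_) (fun j => (ea j).symm)
      (fun j u hu => ?_) k ?_
    · change kdf (zk z) (a j) = kdf (zk z) (aX (x j)); rw [ea]
    · rw [ef]; exact (hF2 j u hu).symm
    · have := (lt_zB.1 hy).1
      change u1 y ≤ _
      omega

end

/-- The criterion, at the instance coding a model checking problem, characterises the existence of a
trace that violates the formula. -/
theorem bad_iff (p : ℕ) (kind : (Fin p → Bool) → SymKind) (N M : ℕ) (S : VPSData p N M)
    (qI : Fin N) (φ : VLDL (Fin p) (Fin p → Bool)) :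
    Bad (Nat.pair p (Nat.pair (kindCode p kind)
      (Nat.pair S.code (Nat.pair qI.val φ.code)))) ↔
      ∃ α, S.HasTrace kind qI α ∧ ¬ VLDL.sat (fun v a => a v = true) kind φ α 0 := by
  rw [Bad_iff_lhs]
  constructor
  · rintro ⟨x, σ, H⟩
    exact bad_of_lhs (by simp [zp]) (by simp [zk]) (by simp [zs]) (by simp [zq]) (by simp [zf]) H
  · rintro ⟨α, h1, h2⟩
    exact lhs_of_bad (by simp [zp]) (by simp [zk]) (by simp [zs]) (by simp [zq]) (by simp [zf]) h1 h2

end VMC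

/-- Model checking visibly pushdown systems against VLDL
specifications is decidable: there is a computable function that, given the encodings
of the pushdown alphabet, of a visibly pushdown system `S` with an initial state `qI`,
and of a VLDL formula `φ`, decides whether every trace of `S` from `qI` is a model
of `φ`. -/
theorem vldl_model_checking_decidable :
    ∃ f : ℕ → Bool, Computable f ∧
      ∀ (p : ℕ) (kind : (Fin p → Bool) → SymKind) (N M : ℕ) (S : VPSData p N M)
        (qI : Fin N) (φ : VLDL (Fin p) (Fin p → Bool)),
        (f (Nat.pair p (Nat.pair (kindCode p kind)
            (Nat.pair S.code (Nat.pair qI.val φ.code)))) = true ↔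
          ∀ α : ℕ → (Fin p → Bool),
            S.HasTrace kind qI α → VLDL.sat (fun v a => a v = true) kind φ α 0) := by
  obtain ⟨f, hf, h⟩ := VMC.computable_notBad
  refine ⟨f, hf, fun p kind N M S qI φ => ?_⟩
  rw [h, VMC.bad_iff]
  push Not
  rfl
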